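/- arXiv:2103.03605 — 3 statements merged into one kernel-verified Lean document; each statement's English description precedes it below -/
import Mathlib

section
/- Fix ε > 0, let α₁, α₂, … be a sequence of elements of 𝒦, and let γ₁, γ₂, … be a sequence of real numbers. Then there exists a set ℰ ⊆ ℬ ⊆ ℝ² of Hausdorff dimension dim_H(ℰ) = 2 such that for every i ∈ ℕ and every (β, δ) ∈ ℰ, the inequality n·‖nα_i − γ_i‖·‖nβ − δ‖ < (log log log n)^{ε + 1/2} / (log n)^{1/2} has infinitely many solutions n ∈ ℕ. -/
open Filter MeasureTheory Real

/-- Distance from `x` to the nearest integer, `‖x‖ = min {|x - k| : k ∈ ℤ}`. -/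
noncomputable def dni (x : ℝ) : ℝ := |x - round x|

/-- The set of badly approximable numbers. -/
noncomputable def Bad : Set ℝ :=
  {α : ℝ | 0 < Filter.atTop.liminf (fun n : ℕ => (n : ℝ) * dni (n * α))}

/-- The `t`-th continued fraction convergent denominator `q_t(α)` of `α`. -/
noncomputable def qden (α : ℝ) (t : ℕ) : ℝ := (GenContFract.of α).dens t

/-- The set `𝒦` of irrationals whose convergent denominators grow at most exponentially. -/
noncomputable def KSet : Set ℝ :=
  {α : ℝ | Irrational α ∧ ∃ C : ℝ, ∀ t : ℕ, 1 ≤ t → Real.log (qden α t) / t ≤ C}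

/-- `Bad(δ)`: the set of `β` that are badly approximable with inhomogeneous shift `δ`. -/
noncomputable def BadShift (δ : ℝ) : Set ℝ :=
  {β : ℝ | 0 < Filter.atTop.liminf (fun n : ℕ => (n : ℝ) * dni (n * β - δ))}

/-- The set `ℬ = {(β, δ) : β ∈ Bad ∩ Bad(δ)}`. -/
noncomputable def BSet : Set (ℝ × ℝ) :=
  {p : ℝ × ℝ | p.1 ∈ Bad ∧ p.1 ∈ BadShift p.2}

section
open Filter MeasureTheory Real

/-- Integer Mobius map with natural entries. -/
@[ext] structure Mob where
  a : ℕ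
  b : ℕ
  c : ℕ
  d : ℕ

noncomputable instance : DecidableEq Mob := Classical.decEq _

namespace Mob

def mul (g h : Mob) : Mob :=
  ⟨g.a*h.a+g.b*h.c, g.a*h.b+g.b*h.d, g.c*h.a+g.d*h.c, g.c*h.b+g.d*h.d⟩

def one : Mob := ⟨1, 0, 0, 1⟩

noncomputable def den (g : Mob) (x : ℝ) : ℝ := g.c * x + g.d
noncomputable def app (g : Mob) (x : ℝ) : ℝ := (g.a * x + g.b) / (g.c * x + g.d)

theorem mul_assoc' (g h k : Mob) : (g.mul h).mul k = g.mul (h.mul k) := by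
  simp only [mul, Mob.mk.injEq]; refine ⟨?_, ?_, ?_, ?_⟩ <;> ring

theorem mul_one' (g : Mob) : g.mul one = g := by
  ext <;> simp [mul, one]

theorem one_mul' (g : Mob) : one.mul g = g := by
  ext <;> simp [mul, one]

/-- Basic invariants. -/
structure Ok (g : Mob) : Prop where
  det : g.a * g.d = g.b * g.c + 1
  cd : g.c ≤ g.d
  bd : g.b < g.d
  abcd : g.a + g.b ≤ g.c + g.d

/-- Digits. -/
structure Dig (Y : ℕ) (g : Mob) : Prop where
  det : g.a * g.d = g.b * g.c + 1
  c1 : Y < g.c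
  c2 : g.c ≤ 2 * Y
  d1 : 2 * Y < g.d
  d2 : g.d ≤ 3 * Y
  bd : g.b < g.d

theorem Dig.Ypos {Y g} (h : Dig Y g) : 1 ≤ Y := by
  have := h.d1; have := h.d2; omega

theorem Dig.a_le_c {Y g} (h : Dig Y g) : g.a ≤ g.c := by
  have h1 := h.det; have h2 := h.bd; have := h.c1
  by_contra hc
  push Not at hc
  nlinarith

theorem Dig.b_pos {Y g} (h : Dig Y g) : 1 ≤ g.b := by
  have h1 := h.det; have h2 := h.d1; have := h.Ypos
  by_contra hc
  have : g.b = 0 := by omega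
  rw [this] at h1
  simp at h1
  omega

theorem Dig.a_le_b {Y g} (h : Dig Y g) : g.a ≤ g.b := by
  have h1 := h.det; have h2 := h.b_pos; have := h.c2; have := h.d1
  have h3 : g.c + 1 ≤ g.d := by omega
  by_contra hc
  push Not at hc
  nlinarith

theorem Dig.ok {Y g} (h : Dig Y g) : Ok g := 
  ⟨h.det, by have := h.c2; have := h.d1; omega, h.bd, by have := h.a_le_c; have := h.bd; omega⟩

theorem ok_one : Ok one := ⟨by simp [one], by simp [one], by simp [one], by simp [one]⟩

theorem Ok.mul_dig {Y G g} (hG : Ok G) (h : Dig Y g) : Ok (G.mul g) := by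
  have h1 := hG.det; have h2 := hG.cd; have h3 := hG.bd; have h4 := hG.abcd
  have h5 := h.a_le_b; have h6 := h.ok.cd; have h7 := h.bd; have h8 := h.det
  have h9 := h.ok.abcd
  refine ⟨?_, ?_, ?_, ?_⟩ <;> simp only [mul]
  · zify at *
    have e : (G.a * g.a + G.b * g.c : ℤ) * (G.c * g.b + G.d * g.d) - (G.a * g.b + G.b * g.d) * (G.c * g.a + G.d * g.c) = (G.a*G.d - G.b*G.c)*(g.a*g.d-g.b*g.c) := by ring
    rw [h1, h8] at e
    linarith
  · gcongr
  · obtain ⟨k, hk⟩ := Nat.exists_eq_add_of_lt h7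
    rw [hk]
    have : G.a * g.b + G.b * (g.b + k + 1) = (G.a + G.b) * g.b + G.b * (k+1) := by ring
    have : G.c * g.b + G.d * (g.b + k + 1) = (G.c + G.d) * g.b + G.d * (k+1) := by ring
    have : (G.a + G.b) * g.b ≤ (G.c + G.d) * g.b := by gcongr
    have : G.b * (k+1) < G.d * (k+1) := by gcongr
    omega
  · obtain ⟨k, hk⟩ := Nat.exists_eq_add_of_le h9
    have e1 : G.a * g.a + G.b * g.c + (G.a * g.b + G.b * g.d) = G.a * (g.a + g.b) + G.b * (g.c + g.d) := by ring
    have e2 : G.c * g.a + G.d * g.c + (G.c * g.b + G.d * g.d) = G.c * (g.a + g.b) + G.d * (g.c + g.d) := by ring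
    rw [e1, e2, hk]
    nlinarith [mul_le_mul_of_nonneg_right h4 (Nat.zero_le (g.a+g.b)), mul_le_mul_of_nonneg_right h3.le (Nat.zero_le k)]

theorem Ok.d_pos {g} (h : Ok g) : 0 < g.d := by have := h.bd; omega

theorem Ok.det' {g} (h : Ok g) : (g.a:ℝ) * g.d - g.b * g.c = 1 := by
  have := h.det
  have h2 : (g.a:ℝ) * g.d = g.b * g.c + 1 := by exact_mod_cast this
  linarith

theorem Ok.den_ge {g} (h : Ok g) {x : ℝ} (hx : 0 ≤ x) : (g.d:ℝ) ≤ g.den x := by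
  unfold den; have : (0:ℝ) ≤ g.c * x := by positivity
  linarith

theorem Ok.den_pos {g} (h : Ok g) {x : ℝ} (hx : 0 ≤ x) : 0 < g.den x :=
  lt_of_lt_of_le (by exact_mod_cast h.d_pos) (h.den_ge hx)

theorem Ok.den_le {g} (h : Ok g) {x : ℝ} (hx : x ≤ 1) : g.den x ≤ 2 * g.d := by
  unfold den
  have h1 : (g.c:ℝ) ≤ g.d := by exact_mod_cast h.cd
  have : (g.c:ℝ) * x ≤ g.c * 1 := by gcongr
  linarith

theorem Ok.app_mem {g} (h : Ok g) {x : ℝ} (hx : x ∈ Set.Icc (0:ℝ) 1) : g.app x ∈ Set.Icc (0:ℝ) 1 := by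
  have hp := h.den_pos hx.1
  have hx0 := hx.1; have hx1 := hx.2
  unfold den at hp; unfold app
  constructor
  · positivity
  · rw [div_le_one hp]
    have h1 : (g.a:ℝ) + g.b ≤ g.c + g.d := by exact_mod_cast h.abcd
    have h2 : (g.b:ℝ) ≤ g.d := by exact_mod_cast h.bd.le
    nlinarith

theorem den_mul {g h : Mob} (hh : Ok h) {x : ℝ} (hx : 0 ≤ x) :
    (g.mul h).den x = g.den (h.app x) * h.den x := by
  have hp := hh.den_pos hx
  unfold den at *; unfold app; simp only [mul]; push_cast
  field_simp
  ring

theorem app_mul {g h : Mob} (hg : Ok g) (hh : Ok h) {x : ℝ} (hx : x ∈ Set.Icc (0:ℝ) 1) :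
    (g.mul h).app x = g.app (h.app x) := by
  have hp := hh.den_pos hx.1
  have hq := hg.den_pos (hh.app_mem hx).1
  have e := den_mul (g := g) hh hx.1
  have : (g.mul h).app x = ((g.mul h).a * x + (g.mul h).b) / (g.mul h).den x := rfl
  rw [this, e]
  have : g.app (h.app x) = (g.a * h.app x + g.b) / g.den (h.app x) := rfl
  rw [this, div_eq_div_iff (by positivity) (by positivity)]
  have : h.app x = (h.a * x + h.b)/ h.den x := rfl
  have e2 : h.app x * h.den x = h.a * x + h.b := by rw [this]; field_simp
  simp only [mul]; push_cast
  have hden : (h.den x) = h.c * x + h.d := rfl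
  have : g.a * h.app x * h.den x = g.a * (h.a * x + h.b) := by rw [mul_assoc, e2]
  calc _ = (g.a * (h.a * x + h.b) + g.b * (h.c * x + h.d)) * g.den (h.app x) := by ring
    _ = _ := by rw [← this, ← hden]; ring

theorem Ok.app_sub {g} (h : Ok g) {x y : ℝ} (hx : 0 ≤ x) (hy : 0 ≤ y) :
    g.app x - g.app y = (x - y) / (g.den x * g.den y) := by
  have h1 := h.den_pos hx; have h2 := h.den_pos hy
  have := h.det'
  unfold app
  unfold den at *
  rw [div_sub_div _ _ h1.ne' h2.ne']
  congr 1
  linear_combination (x - y) * this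

theorem Ok.app_inj {g} (h : Ok g) {x y : ℝ} (hx : 0 ≤ x) (hy : 0 ≤ y) (e : g.app x = g.app y) : x = y := by
  have h1 := h.den_pos hx; have h2 := h.den_pos hy
  have := h.app_sub hx hy
  rw [e, sub_self, eq_comm, div_eq_zero_iff] at this
  rcases this with h | h
  · linarith
  · exact absurd h (by positivity)

theorem Ok.app_mono {g} (h : Ok g) {x y : ℝ} (hx : 0 ≤ x) (hxy : x ≤ y) : g.app x ≤ g.app y := by
  have h1 := h.den_pos hx; have h2 := h.den_pos (hx.trans hxy)
  have := h.app_sub (hx.trans hxy) hx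
  have : 0 ≤ (y - x)/(g.den y * g.den x) := by
    apply div_nonneg (by linarith); positivity
  linarith

theorem Ok.measurable (g : Mob) : Measurable g.app := by
  unfold app; fun_prop

theorem app_zero (g : Mob) : g.app 0 = g.b / g.d := by simp [app]
theorem app_one (g : Mob) : g.app 1 = (g.a + g.b) / (g.c + g.d) := by simp [app]

/-- Two digit intervals ordered by left end points are disjoint. -/
theorem Dig.aux {Y g h} (hg : Dig Y g) (hh : Dig Y h) (hlt : g.app 0 < h.app 0) : g.app 1 < h.app 0 := by
  have hd1 : (0:ℝ) < g.d := by exact_mod_cast hg.ok.d_pos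
  have hd2 : (0:ℝ) < h.d := by exact_mod_cast hh.ok.d_pos
  rw [app_zero, app_zero, div_lt_div_iff₀ hd1 hd2] at hlt
  have hlt' : g.b * h.d < h.b * g.d := by exact_mod_cast hlt
  rw [app_one, app_zero, div_lt_div_iff₀ (by positivity) hd2]
  suffices (g.a + g.b) * h.d < h.b * (g.c + g.d) by exact_mod_cast this
  by_contra hc
  push Not at hc
  have d1 := hg.det; have := hg.c1; have := hg.d1; have := hh.d2
  zify at *
  -- u = h.b*g.d - g.b*h.d ≥ 1, v = g.a h.d - h.b g.c ≥ u ; h.d = u*g.c + v*g.d 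
  have e : (h.d:ℤ) = (h.b*g.d - g.b*h.d) * g.c + (g.a * h.d - h.b * g.c) * g.d := by
    linear_combination (-(h.d:ℤ)) * d1 
  have hu : (1:ℤ) ≤ h.b*g.d - g.b*h.d := by linarith
  have hv : (1:ℤ) ≤ g.a * h.d - h.b * g.c := by linarith
  nlinarith

theorem Dig.eq_of_zero {Y g h} (hg : Dig Y g) (hh : Dig Y h) (he : g.app 0 = h.app 0) : g = h := by
  have hd1 : (0:ℝ) < g.d := by exact_mod_cast hg.ok.d_pos
  have hd2 : (0:ℝ) < h.d := by exact_mod_cast hh.ok.d_pos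
  rw [app_zero, app_zero, div_eq_div_iff hd1.ne' hd2.ne'] at he
  have he' : g.b * h.d = h.b * g.d := by exact_mod_cast he
  have cg : Nat.Coprime g.b g.d := by
    have := hg.det
    rw [Nat.Coprime, ← Nat.dvd_one]
    have h1 : Nat.gcd g.b g.d ∣ g.a * g.d := (Nat.gcd_dvd_right _ _).mul_left _
    have h2 : Nat.gcd g.b g.d ∣ g.b * g.c := (Nat.gcd_dvd_left _ _).mul_right _
    rw [this] at h1
    exact (Nat.dvd_add_right h2).1 h1
  have ch : Nat.Coprime h.b h.d := by
    have := hh.det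
    rw [Nat.Coprime, ← Nat.dvd_one]
    have h1 : Nat.gcd h.b h.d ∣ h.a * h.d := (Nat.gcd_dvd_right _ _).mul_left _
    have h2 : Nat.gcd h.b h.d ∣ h.b * h.c := (Nat.gcd_dvd_left _ _).mul_right _
    rw [this] at h1
    exact (Nat.dvd_add_right h2).1 h1
  have hdd : g.d = h.d := by
    apply Nat.dvd_antisymm
    · exact (cg.symm).dvd_of_dvd_mul_left (he' ▸ Dvd.intro_left _ rfl)
    · exact (ch.symm).dvd_of_dvd_mul_left (he'.symm ▸ Dvd.intro_left _ rfl)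
  have hbb : g.b = h.b := by
    rw [hdd] at he'
    exact Nat.eq_of_mul_eq_mul_right hh.ok.d_pos he'
  -- c
  have d1 := hg.det; have d2 := hh.det
  rw [hdd, hbb] at d1
  have hdvd : (h.d : ℤ) ∣ h.b * ((g.c:ℤ) - h.c) := by
    refine ⟨(g.a:ℤ) - h.a, ?_⟩
    zify at d1 d2
    linear_combination d2 - d1
  have hdvd2 : (h.d : ℤ) ∣ (g.c:ℤ) - h.c := by
    apply IsCoprime.dvd_of_dvd_mul_left _ hdvd
    exact (Nat.isCoprime_iff_coprime.2 ch).symm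
  have hcc : (g.c:ℤ) - h.c = 0 := by
    apply Int.eq_zero_of_abs_lt_dvd hdvd2
    have := hg.c1; have := hg.c2; have := hh.c1; have := hh.c2; have := hh.d1
    rw [abs_lt]; omega
  have hcc' : g.c = h.c := by omega
  have haa : g.a = h.a := by
    rw [hcc', ← d2] at d1
    exact Nat.eq_of_mul_eq_mul_right hh.ok.d_pos d1
  exact Mob.ext haa hbb hcc' hdd

theorem Dig.disj {Y g h} (hg : Dig Y g) (hh : Dig Y h) {x y : ℝ} (hx : x ∈ Set.Icc (0:ℝ) 1)
    (hy : y ∈ Set.Icc (0:ℝ) 1) (he : g.app x = h.app y) : g = h := by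
  rcases lt_trichotomy (g.app 0) (h.app 0) with h1 | h1 | h1
  · have := hg.aux hh h1
    have := hg.ok.app_mono hx.1 hx.2
    have := hh.ok.app_mono le_rfl hy.1
    linarith
  · exact hg.eq_of_zero hh h1
  · have := hh.aux hg h1
    have := hh.ok.app_mono hy.1 hy.2
    have := hg.ok.app_mono le_rfl hx.1
    linarith

/-- Words of length k over B. -/
noncomputable def W (B : Finset Mob) : ℕ → Finset Mob
  | 0 => {one}
  | k+1 => (W B k ×ˢ B).image (fun z => z.1.mul z.2)

theorem mem_W_succ {B : Finset Mob} {k : ℕ} {G : Mob} : 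
    G ∈ W B (k+1) ↔ ∃ H ∈ W B k, ∃ g ∈ B, H.mul g = G := by
  simp only [W, Finset.mem_image, Finset.mem_product, Prod.exists]
  constructor
  · rintro ⟨H, g, ⟨h1, h2⟩, h3⟩; exact ⟨H, h1, g, h2, h3⟩
  · rintro ⟨H, h1, g, h2, h3⟩; exact ⟨H, g, ⟨h1, h2⟩, h3⟩

variable {B : Finset Mob} {Y : ℕ} 

theorem W_ok (hB : ∀ g ∈ B, Dig Y g) : ∀ k, ∀ G ∈ W B k, Ok G
  | 0, G, h => by
    simp only [W, Finset.mem_singleton] at h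
    rw [h]; exact ok_one
  | k+1, G, h => by
    obtain ⟨H, hH, g, hg, rfl⟩ := mem_W_succ.1 h
    exact (W_ok hB k H hH).mul_dig (hB g hg)

theorem W_d_ge (hB : ∀ g ∈ B, Dig Y g) : ∀ k, ∀ G ∈ W B k, (2*Y)^k ≤ G.d
  | 0, G, h => by
    simp only [W, Finset.mem_singleton] at h
    rw [h]; simp [one]
  | k+1, G, h => by
    obtain ⟨H, hH, g, hg, rfl⟩ := mem_W_succ.1 h
    have := W_d_ge hB k H hH
    have h2 := (hB g hg).d1
    simp only [mul]
    calc (2*Y)^(k+1) = (2*Y)^k * (2*Y) := pow_succ _ _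
      _ ≤ H.d * g.d := by gcongr
      _ ≤ _ := Nat.le_add_left _ _

theorem W_d_le (hB : ∀ g ∈ B, Dig Y g) : ∀ k, ∀ G ∈ W B k, G.d ≤ (6*Y)^k
  | 0, G, h => by
    simp only [W, Finset.mem_singleton] at h
    rw [h]; simp [one]
  | k+1, G, h => by
    obtain ⟨H, hH, g, hg, rfl⟩ := mem_W_succ.1 h
    have := W_d_le hB k H hH
    have h2 := (hB g hg).d2
    have h3 := (hB g hg).bd
    have h4 := (W_ok hB k H hH).cd
    simp only [mul]
    calc H.c * g.b + H.d * g.d ≤ H.d * g.d + H.d * g.d := by gcongr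
      _ = 2 * (H.d * g.d) := by ring
      _ ≤ 2 * ((6*Y)^k * (3 * Y)) := by gcongr
      _ = (6*Y)^(k+1) := by ring

theorem W_disj (hB : ∀ g ∈ B, Dig Y g) : ∀ k, ∀ G ∈ W B k, ∀ H ∈ W B k, ∀ x ∈ Set.Icc (0:ℝ) 1,
    ∀ y ∈ Set.Icc (0:ℝ) 1, G.app x = H.app y → G = H
  | 0, G, hG, H, hH, _, _, _, _, _ => by
    simp only [W, Finset.mem_singleton] at hG hH
    rw [hG, hH]
  | k+1, G, hG, H, hH, x, hx, y, hy, he => by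
    obtain ⟨G0, hG0, g, hg, rfl⟩ := mem_W_succ.1 hG
    obtain ⟨H0, hH0, h, hh, rfl⟩ := mem_W_succ.1 hH
    rw [app_mul (W_ok hB k _ hG0) (hB g hg).ok hx, app_mul (W_ok hB k _ hH0) (hB h hh).ok hy] at he
    have e := W_disj hB k G0 hG0 H0 hH0 _ ((hB g hg).ok.app_mem hx) _ ((hB h hh).ok.app_mem hy) he
    subst e
    have e2 := (W_ok hB k _ hG0).app_inj ((hB g hg).ok.app_mem hx).1 ((hB h hh).ok.app_mem hy).1 he
    rw [(hB g hg).disj (hB h hh) hx hy e2]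

theorem W_injOn (hB : ∀ g ∈ B, Dig Y g) (k : ℕ) : 
    Set.InjOn (fun z : Mob × Mob => z.1.mul z.2) (W B k ×ˢ B : Finset (Mob × Mob)) := by
  rintro ⟨G, g⟩ h1 ⟨H, h⟩ h2 he
  simp only [Finset.coe_product, Set.mem_prod, Finset.mem_coe] at h1 h2
  have z : (0:ℝ) ∈ Set.Icc (0:ℝ) 1 := by simp
  have e : (G.mul g).app 0 = (H.mul h).app 0 := by simp only at he; rw [he]
  rw [app_mul (W_ok hB k _ h1.1) (hB g h1.2).ok z, app_mul (W_ok hB k _ h2.1) (hB h h2.2).ok z] at e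
  have e1 := W_disj hB k G h1.1 H h2.1 _ ((hB g h1.2).ok.app_mem z) _ ((hB h h2.2).ok.app_mem z) e
  subst e1
  have e2 := (W_ok hB k _ h1.1).app_inj ((hB g h1.2).ok.app_mem z).1 ((hB h h2.2).ok.app_mem z).1 e
  rw [(hB g h1.2).disj (hB h h2.2) z z e2]

theorem W_card (hB : ∀ g ∈ B, Dig Y g) : ∀ k, (W B k).card = B.card ^ k
  | 0 => by simp [W]
  | k+1 => by
    rw [W, Finset.card_image_of_injOn (W_injOn hB k), Finset.card_product, W_card hB k, pow_succ]

theorem W_sum_succ (hB : ∀ g ∈ B, Dig Y g) {M : Type*} [AddCommMonoid M] (k : ℕ) (φ : Mob → M) :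
    ∑ G ∈ W B (k+1), φ G = ∑ G ∈ W B k, ∑ g ∈ B, φ (G.mul g) := by
  rw [W, Finset.sum_image (W_injOn hB k), Finset.sum_product]

/-- bottom row determines the word -/
theorem W_eq_of_cd (hB : ∀ g ∈ B, Dig Y g) {k} {G H} (hG : G ∈ W B k) (hH : H ∈ W B k)
    (hc : G.c = H.c) (hd : G.d = H.d) : G = H := by
  have o1 := W_ok hB k G hG; have o2 := W_ok hB k H hH
  have d1 := o1.det; have d2 := o2.det
  rw [hc, hd] at d1
  have cop : Nat.Coprime H.d H.c := by
    rw [Nat.Coprime, ← Nat.dvd_one]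
    have h1 : Nat.gcd H.d H.c ∣ H.a * H.d := (Nat.gcd_dvd_left _ _).mul_left _
    have h2 : Nat.gcd H.d H.c ∣ H.b * H.c := (Nat.gcd_dvd_right _ _).mul_left _
    rw [d2] at h1
    exact (Nat.dvd_add_right h2).1 h1
  have hdvd : (H.d : ℤ) ∣ ((G.b:ℤ) - H.b) * H.c := by
    refine ⟨(G.a:ℤ) - H.a, ?_⟩
    zify at d1 d2
    linear_combination d2 - d1
  have hdvd2 : (H.d : ℤ) ∣ (G.b:ℤ) - H.b := 
    IsCoprime.dvd_of_dvd_mul_right (Nat.isCoprime_iff_coprime.2 cop) hdvd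
  have hbb : (G.b:ℤ) - H.b = 0 := by
    apply Int.eq_zero_of_abs_lt_dvd hdvd2
    have := o1.bd; have := o2.bd
    rw [abs_lt]; omega
  have hbb' : G.b = H.b := by omega
  have haa : G.a = H.a := by
    rw [hbb', ← d2] at d1
    exact Nat.eq_of_mul_eq_mul_right o2.d_pos d1
  exact Mob.ext haa hbb' hc hd

end Mob
end

section
open Filter MeasureTheory Real

namespace Mob

theorem exists_dig {Y c d : ℕ} (hc : c ∈ Finset.Ioc Y (2*Y)) (hd : d ∈ Finset.Ioc (2*Y) (3*Y))
    (h : Nat.Coprime c d) : ∃ g : Mob, Dig Y g ∧ g.c = c ∧ g.d = d := by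
  rw [Finset.mem_Ioc] at hc hd
  obtain ⟨m, hm⟩ := Nat.exists_mul_mod_eq_one_of_coprime h.symm (by omega)
  have e : d * (m % c) % c = 1 := by rw [Nat.mul_mod_mod]; exact hm.2
  have e2 := Nat.div_add_mod (d * (m%c)) c
  rw [e] at e2
  have lt : m % c < c := Nat.mod_lt _ (by omega)
  refine ⟨⟨m % c, d * (m%c)/c, c, d⟩, ⟨?_, hc.1, hc.2, hd.1, hd.2, ?_⟩, rfl, rfl⟩
  · simp only; rw [mul_comm _ d, mul_comm _ c]; omega
  · simp only
    rw [Nat.div_lt_iff_lt_mul (by omega)]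
    exact Nat.mul_lt_mul_of_pos_left lt (by omega)

theorem card_mult (Y s r : ℕ) (hr : 0 < r) : 
    (((Finset.Ioc s (s+Y)).filter (r ∣ ·)).card : ℝ) ≤ Y / r + 1 := by
  have h := Nat.Ioc_filter_modEq_card s (s+Y) hr 0
  have e : (Finset.Ioc s (s+Y)).filter (r ∣ ·) = (Finset.Ioc s (s+Y)).filter (fun x => x ≡ 0 [MOD r]) := by
    ext x; simp [Nat.modEq_zero_iff_dvd]
  rw [e]
  have h2 : (((Finset.Ioc s (s+Y)).filter (fun x => x ≡ 0 [MOD r])).card : ℤ) ≤ ⌊(Y:ℚ)/r⌋ + 1 := by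
    rw [h, max_le_iff]
    constructor
    · push_cast
      rw [sub_zero, sub_zero, add_div]
      have := Int.le_floor_add_floor ((s:ℚ)/r) ((Y:ℚ)/r)
      linarith
    · positivity
  have h3 : (((((Finset.Ioc s (s+Y)).filter (fun x => x ≡ 0 [MOD r])).card : ℤ)) : ℚ) ≤ (Y:ℚ)/r + 1 := by
    have := Int.floor_le ((Y:ℚ)/r)
    have h2' : (((((Finset.Ioc s (s+Y)).filter (fun x => x ≡ 0 [MOD r])).card : ℤ)) : ℚ) ≤ ((⌊(Y:ℚ)/r⌋ + 1 : ℤ) : ℚ) := by exact_mod_cast h2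
    push_cast at h2' ⊢
    linarith
  have h4 := (Rat.cast_le (K := ℝ)).2 h3
  push_cast at h4
  exact h4

theorem sum_inv_sq (n : ℕ) : ∑ d ∈ Finset.Icc 2 (n+2), (1:ℝ)/(d:ℝ)^2 ≤ 3/4 - 1/(n+2) := by
  induction n with
  | zero => simp; norm_num
  | succ n ih =>
    rw [show n + 1 + 2 = (n+2)+1 by ring, Finset.sum_Icc_succ_top (by omega)]
    push_cast
    have : (1:ℝ)/((n:ℝ)+2+1)^2 ≤ 1/(n+2) - 1/(n+1+2) := by
      rw [div_sub_div _ _ (by positivity) (by positivity), div_le_div_iff₀ (by positivity) (by positivity)]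
      nlinarith [(Nat.cast_nonneg n : (0:ℝ) ≤ n)]
    linarith

theorem coprime_count {Y : ℕ} (hY : 416 ≤ Y) :
    (Y:ℝ)^2/8 ≤ (((Finset.Ioc Y (2*Y)) ×ˢ (Finset.Ioc (2*Y) (3*Y))).filter (fun p : ℕ × ℕ => Nat.Coprime p.1 p.2)).card := by
  set P := (Finset.Ioc Y (2*Y)) ×ˢ (Finset.Ioc (2*Y) (3*Y)) with hP
  have hc : P.card = Y^2 := by
    rw [hP, Finset.card_product]; simp only [Nat.card_Ioc]
    rw [show 2*Y - Y = Y by omega, show 3*Y-2*Y = Y by omega]; ring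
  have h1 := Finset.card_filter_add_card_filter_not (s := P) (fun p : ℕ × ℕ => Nat.Coprime p.1 p.2)
  have hsub : P.filter (fun p : ℕ × ℕ => ¬ Nat.Coprime p.1 p.2) ⊆ 
      (Finset.Icc 2 (2*Y-2+2)).biUnion (fun r => (Finset.Ioc Y (Y+Y)).filter (r ∣ ·) ×ˢ (Finset.Ioc (2*Y) (2*Y+Y)).filter (r ∣ ·)) := by
    rintro ⟨x, y⟩ hp
    simp only [hP, Finset.mem_filter, Finset.mem_product, Finset.mem_Ioc, Finset.mem_biUnion, Finset.mem_Icc] at hp ⊢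
    obtain ⟨⟨hx, hy⟩, hn⟩ := hp
    have g1 := Nat.gcd_dvd_left x y
    have g2 := Nat.gcd_dvd_right x y
    have := Nat.le_of_dvd (by omega) g1
    have : Nat.gcd x y ≠ 0 := by intro h; rw [Nat.gcd_eq_zero_iff] at h; omega
    have : Nat.gcd x y ≠ 1 := hn
    exact ⟨Nat.gcd x y, by omega, ⟨by omega, g1⟩, by omega, g2⟩
  have h2 : ((P.filter (fun p : ℕ × ℕ => ¬ Nat.Coprime p.1 p.2)).card : ℝ) ≤ 13/16 * Y^2 + 26 * Y := by
    calc ((P.filter (fun p : ℕ × ℕ => ¬ Nat.Coprime p.1 p.2)).card : ℝ) 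
        ≤ ∑ r ∈ Finset.Icc 2 (2*Y-2+2), ((Y:ℝ)/r+1)^2 := by
          refine le_trans (Nat.cast_le.2 ((Finset.card_le_card hsub).trans Finset.card_biUnion_le)) ?_
          push_cast
          apply Finset.sum_le_sum
          intro r hr
          rw [Finset.mem_Icc] at hr
          rw [Finset.card_product]; push_cast
          rw [sq]
          gcongr <;> exact card_mult _ _ _ (by omega)
      _ ≤ ∑ r ∈ Finset.Icc 2 (2*Y-2+2), (13/12*(Y:ℝ)^2 * (1/(r:ℝ)^2) + 13) := by
          apply Finset.sum_le_sum
          intro r hr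
          rw [Finset.mem_Icc] at hr
          have : (13/12*(Y:ℝ)^2 * (1/(r:ℝ)^2)) = 13/12 * ((Y:ℝ)/r)^2 := by
            rw [div_pow]; ring
          rw [this]
          nlinarith [sq_nonneg ((Y:ℝ)/r - 12)]
      _ ≤ _ := by
          rw [Finset.sum_add_distrib, ← Finset.mul_sum, Finset.sum_const, Nat.card_Icc]
          have := sum_inv_sq (2*Y-2)
          have h0 : (0:ℝ) ≤ 1/((2*Y-2:ℕ)+2) := by positivity
          have : ∑ d ∈ Finset.Icc 2 (2*Y-2+2), (1:ℝ)/(d:ℝ)^2 ≤ 3/4 := by linarith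
          have h3 : (13/12*(Y:ℝ)^2) * ∑ d ∈ Finset.Icc 2 (2*Y-2+2), (1:ℝ)/(d:ℝ)^2 ≤ (13/12*(Y:ℝ)^2) * (3/4) := by gcongr
          have h4 : ((2*Y-2+2+1-2 : ℕ):ℝ) ≤ 2 * Y := by
            have : 2*Y-2+2+1-2 ≤ 2*Y := by omega
            exact_mod_cast this
          rw [nsmul_eq_mul]
          linarith
  have h1' : ((P.filter (fun p : ℕ × ℕ => Nat.Coprime p.1 p.2)).card : ℝ) + (P.filter (fun p : ℕ × ℕ => ¬ Nat.Coprime p.1 p.2)).card = (Y:ℝ)^2 := by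
    exact_mod_cast h1.trans hc
  have : (416:ℝ) ≤ Y := by exact_mod_cast hY
  nlinarith

theorem exists_digits {Y : ℕ} (hY : 416 ≤ Y) : ∃ B : Finset Mob, (∀ g ∈ B, Dig Y g) ∧ (Y:ℝ)^2/8 ≤ B.card := by
  have hc := coprime_count hY
  set Q := ((Finset.Ioc Y (2*Y)) ×ˢ (Finset.Ioc (2*Y) (3*Y))).filter (fun p : ℕ × ℕ => Nat.Coprime p.1 p.2) with hQ
  have : ∀ p : Q, ∃ g : Mob, Dig Y g ∧ g.c = p.1.1 ∧ g.d = p.1.2 := by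
    rintro ⟨p, hp⟩
    simp only [hQ, Finset.mem_filter, Finset.mem_product] at hp
    exact exists_dig hp.1.1 hp.1.2 hp.2
  choose f h1 h2 h3 using this
  refine ⟨Finset.univ.image f, ?_, ?_⟩
  · intro g hg
    rw [Finset.mem_image] at hg
    obtain ⟨p, _, rfl⟩ := hg
    exact h1 p
  · rw [Finset.card_image_of_injective, Finset.card_univ, Fintype.card_coe]
    · exact hc
    · intro p q h
      apply Subtype.ext
      apply Prod.ext
      · rw [← h2, ← h2, h]
      · rw [← h3, ← h3, h]

end Mob
end

section
open Filter MeasureTheory Real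

namespace Mob
open scoped ENNReal

/-- stage-n coding map -/
noncomputable def X {m : ℕ} (g : Fin m → Mob) : ℕ → (ℕ → Fin m) → ℝ
  | 0, _ => 0
  | n+1, w => (g (w 0)).app (X g n (fun i => w (i+1)))

theorem X_mem {m : ℕ} {g : Fin m → Mob} (hg : ∀ i, Ok (g i)) : ∀ n w, X g n w ∈ Set.Icc (0:ℝ) 1
  | 0, _ => by simp [X]
  | n+1, w => by rw [X]; exact (hg _).app_mem (X_mem hg n _)

theorem X_mono {m : ℕ} {g : Fin m → Mob} (hg : ∀ i, Ok (g i)) : ∀ n w, X g n w ≤ X g (n+1) w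
  | 0, w => by rw [X]; exact (X_mem hg 1 w).1
  | n+1, w => by rw [X, X]; exact (hg _).app_mono (X_mem hg n _).1 (X_mono hg n _)

theorem X_meas {m : ℕ} (g : Fin m → Mob) : ∀ n, Measurable (X g n)
  | 0 => by
    have : X g 0 = fun _ => 0 := by funext w; rfl
    rw [this]; exact measurable_const
  | n+1 => by
    have h1 : Measurable (fun w : ℕ → Fin m => X g n (fun i => w (i+1))) := by
      apply (X_meas g n).comp
      fun_prop
    have h2 : Measurable (fun p : Fin m × ℝ => (g p.1).app p.2) := 
      measurable_from_prod_countable_right (fun i => Ok.measurable (g i))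
    exact h2.comp ((measurable_pi_apply 0).prodMk h1)

noncomputable def Xlim {m : ℕ} (g : Fin m → Mob) (w : ℕ → Fin m) : ℝ := ⨆ n, X g n w

theorem X_tendsto {m : ℕ} {g : Fin m → Mob} (hg : ∀ i, Ok (g i)) (w) : 
    Tendsto (fun n => X g n w) atTop (nhds (Xlim g w)) := by
  apply tendsto_atTop_ciSup
  · exact monotone_nat_of_le_succ (fun n => X_mono hg n w)
  · exact ⟨1, by rintro _ ⟨n, rfl⟩; exact (X_mem hg n w).2⟩

theorem Xlim_mem {m : ℕ} {g : Fin m → Mob} (hg : ∀ i, Ok (g i)) (w) : Xlim g w ∈ Set.Icc (0:ℝ) 1 :=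
  isClosed_Icc.mem_of_tendsto (X_tendsto hg w) (Eventually.of_forall (fun n => X_mem hg n w))

theorem Xlim_meas {m : ℕ} (g : Fin m → Mob) : Measurable (Xlim g) := 
  Measurable.iSup (fun n => X_meas g n)

theorem Xlim_eq {m : ℕ} {g : Fin m → Mob} (hg : ∀ i, Ok (g i)) (w) : 
    Xlim g w = (g (w 0)).app (Xlim g (fun i => w (i+1))) := by
  have h1 := (X_tendsto hg w).comp (tendsto_add_atTop_nat 1)
  have hc : ContinuousAt (g (w 0)).app (Xlim g (fun i => w (i+1))) := by
    unfold app
    have := (hg (w 0)).den_pos (Xlim_mem hg (fun i => w (i+1))).1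
    unfold den at this
    exact ContinuousAt.div (by fun_prop) (by fun_prop) this.ne'
  have h2 := hc.tendsto.comp (X_tendsto hg (fun i => w (i+1)))
  exact tendsto_nhds_unique h1 h2

def cons {m : ℕ} (p : Fin m × (ℕ → Fin m)) : ℕ → Fin m
  | 0 => p.1
  | n+1 => p.2 n

theorem cons_meas {m : ℕ} : Measurable (cons (m := m)) := by
  rw [measurable_pi_iff]
  intro n
  cases n with
  | zero => exact measurable_fst
  | succ n => exact (measurable_pi_apply n).comp measurable_snd

noncomputable def unif (m : ℕ) : Measure (Fin m) := (m:ℝ≥0∞)⁻¹ • Measure.count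

instance (m : ℕ) [NeZero m] : IsProbabilityMeasure (unif m) := ⟨by
  simp only [unif, Measure.smul_apply, Measure.count_univ, ENat.card_eq_coe_fintype_card, Fintype.card_fin]
  exact ENNReal.inv_mul_cancel (by simp [NeZero.ne m]) (by simp)⟩

theorem infPi_cons (m : ℕ) [NeZero m] : 
   ((unif m).prod (Measure.infinitePi (fun _ : ℕ => unif m))).map cons = Measure.infinitePi (fun _ : ℕ => unif m) := by
  apply Measure.eq_infinitePi
  intro s t ht
  obtain ⟨N, hN⟩ := s.exists_nat_subset_range
  set t' : ℕ → Set (Fin m) := fun i => if i ∈ s then t i else Set.univ with ht'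
  have hs : s ⊆ Finset.range (N+1) := hN.trans (Finset.range_mono (by omega))
  have e1 : Set.pi (s : Set ℕ) t = Set.pi (Finset.range (N+1) : Set ℕ) t' := by
    ext w
    simp only [Set.mem_pi, Finset.mem_coe, ht']
    constructor
    · intro h i _
      split_ifs with hi
      · exact h i hi
      · trivial
    · intro h i hi
      have := h i (hs hi)
      simpa [hi] using this
  have e2 : ∏ i ∈ s, (unif m) (t i) = ∏ i ∈ Finset.range (N+1), (unif m) (t' i) := by
    rw [← Finset.prod_subset hs]
    · apply Finset.prod_congr rfl
      intro i hi; simp [ht', hi]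
    · intro i _ hi; simp [ht', hi]
  have e3 : cons ⁻¹' (Set.pi (Finset.range (N+1) : Set ℕ) t') = t' 0 ×ˢ (Set.pi (Finset.range N : Set ℕ) (fun i => t' (i+1))) := by
    ext ⟨x, w⟩
    simp only [Set.mem_preimage, Set.mem_pi, Set.mem_prod, Finset.coe_range, Set.mem_Iio]
    constructor
    · intro h
      exact ⟨h 0 (by omega), fun i hi => h (i+1) (by omega)⟩
    · rintro ⟨h1, h2⟩ i hi
      cases i with
      | zero => exact h1
      | succ i => exact h2 i (by omega)
  rw [e1, e2, Measure.map_apply cons_meas, e3, Measure.prod_prod, Measure.infinitePi_pi, Finset.prod_range_succ', mul_comm]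
  · intros; exact MeasurableSet.of_discrete
  · apply MeasurableSet.pi (Finset.countable_toSet _)
    intros; exact MeasurableSet.of_discrete

theorem exists_nu0 {m : ℕ} [NeZero m] {g : Fin m → Mob} (hg : ∀ i, Ok (g i)) :
    ∃ ν : Measure ℝ, IsProbabilityMeasure ν ∧ ν (Set.Icc 0 1)ᶜ = 0 ∧ 
     ν = (m:ℝ≥0∞)⁻¹ • ∑ i, ν.map (g i).app := by
  set P := Measure.infinitePi (fun _ : ℕ => unif m) with hP
  have hpm : IsProbabilityMeasure (P.map (Xlim g)) := 
    Measure.isProbabilityMeasure_map (Xlim_meas g).aemeasurable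
  refine ⟨P.map (Xlim g), hpm, ?_, ?_⟩
  · rw [Measure.map_apply (Xlim_meas g) measurableSet_Icc.compl]
    convert measure_empty (μ := P)
    ext w; simpa using Xlim_mem hg w
  · ext S hS
    conv_lhs => rw [hP, ← infPi_cons, ← hP]
    rw [Measure.map_map (Xlim_meas g) cons_meas, Measure.map_apply ((Xlim_meas g).comp cons_meas) hS, Measure.prod_apply ((Xlim_meas g).comp cons_meas hS)]
    simp only [unif, lintegral_smul_measure, lintegral_count, tsum_fintype, Measure.smul_apply, Measure.finsetSum_apply]
    congr 1
    apply Finset.sum_congr rfl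
    intro i _
    rw [Measure.map_map (Ok.measurable _) (Xlim_meas g), Measure.map_apply ((Ok.measurable _).comp (Xlim_meas g)) hS]
    congr 1
    ext w
    simp only [Set.mem_preimage, Function.comp]
    rw [Xlim_eq hg]
    rfl

end Mob
end

section
open Filter MeasureTheory Real

namespace Mob
open scoped ENNReal

/-- self-similar measure for the digit set B -/
structure SS (Y : ℕ) (B : Finset Mob) (ν : Measure ℝ) : Prop where
  dig : ∀ g ∈ B, Dig Y g
  ne : B.card ≠ 0
  prob : IsProbabilityMeasure ν
  supp : ν (Set.Icc 0 1)ᶜ = 0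
  eq : ν = (B.card:ℝ≥0∞)⁻¹ • ∑ g ∈ B, ν.map g.app

theorem exists_SS {Y : ℕ} {B : Finset Mob} (hB : ∀ g ∈ B, Dig Y g) (hne : B.card ≠ 0) : ∃ ν, SS Y B ν := by
  have : NeZero B.card := ⟨hne⟩
  obtain ⟨ν, h1, h2, h3⟩ := exists_nu0 (m := B.card) (g := fun i => (B.equivFin.symm i).1)
    (fun i => (hB _ (B.equivFin.symm i).2).ok)
  refine ⟨ν, hB, hne, h1, h2, ?_⟩
  conv_lhs => rw [h3]
  congr 1
  rw [← Finset.sum_coe_sort B]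
  exact Fintype.sum_equiv B.equivFin.symm _ _ (fun i => rfl)

variable {Y : ℕ} {B : Finset Mob} {ν : Measure ℝ}

theorem SS.ae_mem (h : SS Y B ν) : ∀ᵐ x ∂ν, x ∈ Set.Icc (0:ℝ) 1 := by
  rw [ae_iff]; exact h.supp

theorem SS.iter (h : SS Y B ν) : ∀ k, ν = ((B.card:ℝ≥0∞)^k)⁻¹ • ∑ G ∈ W B k, ν.map G.app
  | 0 => by
    have : ν.map one.app = ν := by
      have : one.app = id := by funext x; simp [app, one]
      rw [this, Measure.map_id]
    simp [W, this]
  | k+1 => by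
    conv_lhs => rw [h.iter k]
    rw [W_sum_succ h.dig, pow_succ, ENNReal.mul_inv (by simp [h.ne]) (by simp), mul_smul, Finset.smul_sum (r := (B.card:ℝ≥0∞)⁻¹)]
    congr 1
    apply Finset.sum_congr rfl
    intro G hG
    conv_lhs => rw [h.eq]
    rw [Measure.map_smul, ← Measure.mapₗ_apply_of_measurable (Ok.measurable G), map_sum]
    simp only [Measure.mapₗ_apply_of_measurable (Ok.measurable G)]
    congr 1
    apply Finset.sum_congr rfl
    intro g hg
    rw [Measure.map_map (Ok.measurable G) (Ok.measurable g)]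
    apply Measure.map_congr
    filter_upwards [h.ae_mem] with x hx
    exact (app_mul (W_ok h.dig k G hG) (h.dig g hg).ok hx).symm

theorem SS.apply (h : SS Y B ν) (k : ℕ) {S : Set ℝ} (hS : MeasurableSet S) : 
    ν S = ((B.card:ℝ≥0∞)^k)⁻¹ * ∑ G ∈ W B k, ν (G.app ⁻¹' S) := by
  conv_lhs => rw [h.iter k]
  rw [Measure.smul_apply, Measure.finsetSum_apply, smul_eq_mul]
  congr 1
  exact Finset.sum_congr rfl (fun G _ => Measure.map_apply (Ok.measurable G) hS)

theorem SS.integral (h : SS Y B ν) (k : ℕ) {f : ℝ → ℂ} (hf : Measurable f) {C : ℝ} (hC : ∀ x, ‖f x‖ ≤ C) :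
    ∫ x, f x ∂ν = ((B.card:ℝ)^k)⁻¹ * ∑ G ∈ W B k, ∫ x, f (G.app x) ∂ν := by
  have := h.prob
  conv_lhs => rw [h.iter k]
  rw [integral_smul_measure, integral_finsetSum_measure]
  · rw [ENNReal.toReal_inv, ENNReal.toReal_pow, ENNReal.toReal_natCast, Complex.real_smul]
    push_cast
    congr 1
    apply Finset.sum_congr rfl
    intro G _
    rw [integral_map (Ok.measurable G).aemeasurable hf.aestronglyMeasurable]
  · intro G _
    have : IsProbabilityMeasure (ν.map G.app) := Measure.isProbabilityMeasure_map (Ok.measurable G).aemeasurable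
    exact Integrable.of_bound hf.aestronglyMeasurable C (Eventually.of_forall hC)

theorem Ok.continuousOn {g} (h : Ok g) : ContinuousOn g.app (Set.Icc 0 1) := by
  intro x hx
  have := h.den_pos hx.1
  unfold den at this
  apply ContinuousAt.continuousWithinAt
  unfold app
  exact ContinuousAt.div (by fun_prop) (by fun_prop) this.ne'

theorem Ok.surj {g} (h : Ok g) {x y z : ℝ} (hx : 0 ≤ x) (hxz : x ≤ z) (hz : z ≤ 1) (h1 : g.app x ≤ y) (h2 : y ≤ g.app z) :
    ∃ θ ∈ Set.Icc (0:ℝ) 1, g.app θ = y := by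
  have := intermediate_value_Icc hxz (h.continuousOn.mono (Set.Icc_subset_Icc hx hz)) ⟨h1, h2⟩
  obtain ⟨θ, hθ, e⟩ := this
  exact ⟨θ, ⟨hx.trans hθ.1, hθ.2.trans hz⟩, e⟩

theorem meet_card (hB : ∀ g ∈ B, Dig Y g) (hY : 1 ≤ Y) (k : ℕ) {S : Set ℝ} {r : ℝ} 
    (hS : ∀ x ∈ S, ∀ y ∈ S, x - y ≤ r) (hr : r < 1/(2*(6*Y:ℝ)^(2*k))) (T : Finset Mob) (hT : T ⊆ W B k) 
    (hm : ∀ G ∈ T, ∃ θ ∈ Set.Icc (0:ℝ) 1, G.app θ ∈ S) : T.card ≤ 2 := by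
  rcases T.eq_empty_or_nonempty with rfl | hne
  · simp
  obtain ⟨L, hL, hLm⟩ := T.exists_min_image (fun G => G.app 0) hne
  obtain ⟨R, hR, hRm⟩ := T.exists_max_image (fun G => G.app 0) hne
  have : T ⊆ {L, R} := by
    intro G hG
    by_contra hc
    simp only [Finset.mem_insert, Finset.mem_singleton, not_or] at hc
    obtain ⟨a, ha, haS⟩ := hm L hL
    obtain ⟨b, hb, hbS⟩ := hm R hR
    have oG := W_ok hB k G (hT hG)
    have oL := W_ok hB k L (hT hL)
    have oR := W_ok hB k R (hT hR)
    have z : (0:ℝ) ∈ Set.Icc (0:ℝ) 1 := by simp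
    have h1 : L.app a ≤ G.app 0 := by
      by_contra hh
      push Not at hh
      obtain ⟨θ, hθ, e⟩ := oL.surj le_rfl ha.1 ha.2 (hLm G hG) hh.le
      exact hc.1 (W_disj hB k L (hT hL) G (hT hG) θ hθ 0 z e).symm
    have h2 : G.app 1 ≤ R.app b := by
      by_contra hh
      push Not at hh
      obtain ⟨θ, hθ, e⟩ := oG.surj le_rfl zero_le_one le_rfl ((hRm G hG).trans (oR.app_mono le_rfl hb.1)) hh.le
      exact hc.2 (W_disj hB k G (hT hG) R (hT hR) θ hθ b hb e)
    have h3 := hS _ hbS _ haS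
    have h4 := oG.app_sub (x := 1) (y := 0) zero_le_one le_rfl
    have h5 : G.den 1 ≤ 2 * G.d := oG.den_le le_rfl
    have h6 : G.den 0 = G.d := by simp [den]
    have h7 : (G.d:ℝ) ≤ (6*Y)^k := by exact_mod_cast W_d_le hB k G (hT hG)
    have h8 := oG.den_pos (x := 1) zero_le_one
    have h9 : (0:ℝ) < G.d := by exact_mod_cast oG.d_pos
    have h10 : 1/(2*(6*Y:ℝ)^(2*k)) ≤ (1 - 0) / (G.den 1 * G.den 0) := by
      rw [sub_zero, h6]
      apply one_div_le_one_div_of_le (by positivity)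
      calc G.den 1 * G.d ≤ (2 * G.d) * G.d := by gcongr
        _ ≤ (2 * (6*Y)^k) * (6*Y)^k := by gcongr
        _ = _ := by rw [mul_comm 2 k, pow_mul]; ring
    linarith
  exact (Finset.card_le_card this).trans Finset.card_le_two

theorem SS.frostman (h : SS Y B ν) {t : ℝ} (ht : 0 ≤ t) (hc : (36*(Y:ℝ)^2)^t ≤ B.card) (hY : 1 ≤ Y) {S : Set ℝ} (hSm : MeasurableSet S) {r : ℝ} (hr : 0 < r)
    (hS : ∀ x ∈ S, ∀ y ∈ S, x - y ≤ r) : ν S ≤ ENNReal.ofReal ((2 * B.card * 2^t) * r^t) := by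
  have := h.prob
  have hcard : (1:ℝ) ≤ B.card := by exact_mod_cast Nat.one_le_iff_ne_zero.2 h.ne
  have hY' : (1:ℝ) ≤ Y := by exact_mod_cast hY
  rcases le_or_gt (1/2) r with hr2 | hr2
  · refine prob_le_one.trans ?_
    rw [← ENNReal.ofReal_one]
    apply ENNReal.ofReal_le_ofReal
    have : 1 ≤ 2^t * r^t := by
      rw [← Real.mul_rpow (by norm_num) hr.le]
      exact Real.one_le_rpow (by linarith) ht
    calc (1:ℝ) ≤ (2*B.card) * (2^t * r^t) := by nlinarith
      _ = _ := by ring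
  · -- choose k
    have hex : ∃ k : ℕ, 1/(2*(6*Y:ℝ)^(2*k)) ≤ r := by
      obtain ⟨n, hn⟩ := exists_nat_gt (1/r)
      refine ⟨n, ?_⟩
      rw [div_le_iff₀ (by positivity)]
      rw [div_lt_iff₀ hr] at hn
      have : (n:ℝ) ≤ (6*Y:ℝ)^(2*n) := by
        have h1 : n < 2^n := Nat.lt_two_pow_self
        have h2 : (n:ℝ) ≤ 2^n := by exact_mod_cast h1.le
        have h3 : (2:ℝ)^n ≤ (6*Y)^n := by gcongr; linarith
        have h4 : (6*Y:ℝ)^n ≤ (6*Y)^(2*n) := pow_le_pow_right₀ (by linarith) (by omega)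
        linarith
      nlinarith
    classical
    set k1 := Nat.find hex with hk1
    have hk : 1/(2*(6*Y:ℝ)^(2*k1)) ≤ r := Nat.find_spec hex
    have hk0 : k1 ≠ 0 := by
      intro h0; rw [h0] at hk; norm_num at hk; linarith
    obtain ⟨k, hkk⟩ := Nat.exists_eq_succ_of_ne_zero hk0
    have hkm : r < 1/(2*(6*Y:ℝ)^(2*k)) := by
      have := Nat.find_min hex (m := k) (by omega)
      push Not at this; exact this
    rw [h.apply k hSm]
    set T := (W B k).filter (fun G => ∃ θ ∈ Set.Icc (0:ℝ) 1, G.app θ ∈ S) with hT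
    have hTc : T.card ≤ 2 := meet_card h.dig hY k hS hkm T (Finset.filter_subset _ _) (by
      intro G hG; exact (Finset.mem_filter.1 hG).2)
    have hsum : ∑ G ∈ W B k, ν (G.app ⁻¹' S) ≤ 2 := by
      calc ∑ G ∈ W B k, ν (G.app ⁻¹' S) ≤ ∑ G ∈ W B k, if (∃ θ ∈ Set.Icc (0:ℝ) 1, G.app θ ∈ S) then (1:ℝ≥0∞) else 0 := by
            apply Finset.sum_le_sum
            intro G _
            split_ifs with hG
            · exact prob_le_one
            · apply le_of_eq
              refine measure_mono_null ?_ h.supp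
              intro x hx hx2
              exact hG ⟨x, hx2, hx⟩
        _ = (T.card : ℝ≥0∞) := by rw [← Finset.sum_filter, Finset.sum_const, nsmul_eq_mul, mul_one]
        _ ≤ 2 := by exact_mod_cast hTc
    calc ((B.card:ℝ≥0∞)^k)⁻¹ * ∑ G ∈ W B k, ν (G.app ⁻¹' S) ≤ ((B.card:ℝ≥0∞)^k)⁻¹ * 2 := by gcongr
      _ = ENNReal.ofReal (((B.card:ℝ)^k)⁻¹ * 2) := by
          rw [ENNReal.ofReal_mul (by positivity), ENNReal.ofReal_inv_of_pos (by positivity), ENNReal.ofReal_pow (by positivity)]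
          simp
      _ ≤ _ := by
          apply ENNReal.ofReal_le_ofReal
          have e1 : ((B.card:ℝ)^k1)⁻¹ ≤ 2^t * r^t := by
            rw [← Real.mul_rpow (by norm_num) hr.le]
            calc ((B.card:ℝ)^k1)⁻¹ ≤ (((36*(Y:ℝ)^2)^t)^k1)⁻¹ := by gcongr
              _ = (((36*(Y:ℝ)^2)^k1)⁻¹)^t := by
                 rw [Real.inv_rpow (by positivity), ← Real.rpow_natCast _ k1, ← Real.rpow_natCast _ k1, ← Real.rpow_mul (by positivity), ← Real.rpow_mul (by positivity), mul_comm t]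
              _ ≤ (2*r)^t := by
                 apply Real.rpow_le_rpow (by positivity) _ ht
                 have : (6*Y:ℝ)^(2*k1) = (36*(Y:ℝ)^2)^k1 := by rw [pow_mul]; congr 1; ring
                 rw [this, one_div, mul_inv] at hk
                 linarith
          have e2 : ((B.card:ℝ)^k)⁻¹ = B.card * ((B.card:ℝ)^k1)⁻¹ := by
            rw [hkk, pow_succ]; field_simp
          rw [e2]
          calc B.card * ((B.card:ℝ)^k1)⁻¹ * 2 ≤ B.card * (2^t * r^t) * 2 := by gcongr
            _ = _ := by ring

theorem SS.ae_words (h : SS Y B ν) : ∀ᵐ x ∂ν, ∀ k, ∃ G ∈ W B k, ∃ θ ∈ Set.Icc (0:ℝ) 1, x = G.app θ := by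
  have := h.prob
  rw [ae_all_iff]
  intro k
  rw [h.iter k]
  apply Measure.ae_smul_measure
  rw [ae_iff, Measure.finsetSum_apply, Finset.sum_eq_zero]
  intro G hG
  have hcl : IsClosed (G.app '' Set.Icc 0 1) := 
    (isCompact_Icc.image_of_continuousOn (W_ok h.dig k G hG).continuousOn).isClosed
  have : (ν.map G.app) (G.app '' Set.Icc 0 1)ᶜ = 0 := by
    rw [Measure.map_apply (Ok.measurable G) hcl.measurableSet.compl]
    refine measure_mono_null ?_ h.supp
    intro x hx hx2
    exact hx ⟨x, hx2, rfl⟩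
  refine measure_mono_null ?_ this
  rintro x hx ⟨θ, hθ, e⟩
  exact hx ⟨G, hG, θ, hθ, e.symm⟩

theorem bad_aux {G : Mob} (hG : Ok G) {θ : ℝ} (hθ : θ ∈ Set.Icc (0:ℝ) 1) {q p : ℤ} (hq : 1 ≤ q) (hqc : q < G.c) :
    1 / (2 * (G.d:ℝ)) ≤ |q * G.app θ - p| := by
  have hden := hG.den_pos hθ.1
  have hdle := hG.den_le hθ.2
  have e : q * G.app θ - p = (θ * ((G.a * q - G.c * p : ℤ):ℝ) - ((G.d * p - G.b * q : ℤ):ℝ)) / G.den θ := by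
    unfold app; unfold den at *
    push_cast
    rw [eq_div_iff hden.ne', sub_mul, mul_div_assoc', div_mul_cancel₀ _ hden.ne']
    ring
  set v : ℤ := G.a * q - G.c * p with hv
  set u : ℤ := G.d * p - G.b * q with hu
  have e2 : q = G.c * u + G.d * v := by
    have := hG.det
    zify at this
    rw [hu, hv]; linear_combination (-q) * this
  have hcd : (G.c:ℤ) ≤ G.d := by exact_mod_cast hG.cd
  have key : (1:ℝ) ≤ |θ * v - u| := by
    have hc0 : (0:ℤ) < G.c := by omega
    rcases lt_trichotomy u 0 with hu0 | hu0 | hu0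
    · have hv0 : 1 ≤ v := by
        by_contra hh; push Not at hh
        nlinarith
      have h1 : (1:ℝ) ≤ v := by exact_mod_cast hv0
      have h2 : (u:ℝ) ≤ -1 := by exact_mod_cast (by omega : u ≤ -1)
      have : 0 ≤ θ * v := mul_nonneg hθ.1 (by linarith)
      rw [le_abs]; left; linarith
    · exfalso
      rw [hu0] at e2
      have : 1 ≤ v := by
        by_contra hh; push Not at hh
        nlinarith
      nlinarith
    · have hv0 : v ≤ -1 := by
        by_contra hh; push Not at hh
        nlinarith
      have h1 : (v:ℝ) ≤ -1 := by exact_mod_cast hv0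
      have h2 : (1:ℝ) ≤ u := by exact_mod_cast (by omega : 1 ≤ u)
      have : 0 ≤ θ * (-v) := mul_nonneg hθ.1 (by linarith)
      rw [le_abs]; right; linarith
  rw [e, abs_div, abs_of_pos hden]
  calc 1 / (2 * (G.d:ℝ)) ≤ 1 / G.den θ := one_div_le_one_div_of_le hden hdle
    _ ≤ _ := by gcongr

theorem d_step {G g : Mob} (hG : Ok G) (hg : Dig Y g) : (G.mul g).d ≤ 6 * Y * G.d := by
  have h2 := hg.d2
  have h3 := hg.bd
  have h4 := hG.cd
  simp only [mul]
  calc G.c * g.b + G.d * g.d ≤ G.d * g.d + G.d * g.d := by gcongr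
      _ = 2 * (G.d * g.d) := by ring
      _ ≤ 2 * (G.d * (3 * Y)) := by gcongr
      _ = _ := by ring

theorem words_bad (hB : ∀ g ∈ B, Dig Y g) (hY : 1 ≤ Y) {x : ℝ} (hx : ∀ k, ∃ G ∈ W B k, ∃ θ ∈ Set.Icc (0:ℝ) 1, x = G.app θ)
    {q : ℕ} (hq : 1 ≤ q) (p : ℤ) : 1 / (72 * (Y:ℝ)^2 * q) ≤ |q * x - p| := by
  have hex : ∃ k, ∃ G ∈ W B k, ∃ θ ∈ Set.Icc (0:ℝ) 1, x = G.app θ ∧ q < G.d := by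
    obtain ⟨G, hG, θ, hθ, e⟩ := hx q
    refine ⟨q, G, hG, θ, hθ, e, ?_⟩
    calc q < 2^q := Nat.lt_two_pow_self
      _ ≤ (2*Y)^q := by gcongr; omega
      _ ≤ _ := W_d_ge hB q G hG
  classical
  set k := Nat.find hex with hk
  obtain ⟨G, hG, θ, hθ, e, hlt⟩ := Nat.find_spec hex
  rw [← hk] at hG
  have hk0 : k ≠ 0 := by
    intro h0
    rw [h0] at hG
    simp only [W, Finset.mem_singleton] at hG
    rw [hG] at hlt; simp [one] at hlt; omega
  obtain ⟨j, hj⟩ := Nat.exists_eq_succ_of_ne_zero hk0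
  obtain ⟨G2, hG2, θ2, hθ2, e2⟩ := hx (k+1)
  obtain ⟨G1, hG1, g, hg, rfl⟩ := mem_W_succ.1 hG2
  have og := (hB g hg).ok
  have hG1G : G1 = G := by
    rw [app_mul (W_ok hB k G1 hG1) og hθ2] at e2
    exact W_disj hB k G1 hG1 G hG _ (og.app_mem hθ2) θ hθ (by rw [← e2, e])
  subst hG1G
  have hG1' := hG1
  rw [hj] at hG1'
  obtain ⟨H, hH, h, hh, e3⟩ := mem_W_succ.1 hG1'
  have oH := W_ok hB j H hH
  have hHd : H.d ≤ q := by
    by_contra hc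
    push Not at hc
    refine Nat.find_min hex (m := j) (by omega) ⟨H, hH, h.app θ, (hB h hh).ok.app_mem hθ, ?_, hc⟩
    rw [e, ← e3, app_mul oH (hB h hh).ok hθ]
  have o1 := W_ok hB k G1 hG1
  have s1 := d_step oH (hB h hh)
  rw [e3] at s1
  have s2 := d_step o1 (hB g hg)
  have s3 : (G1.mul g).d ≤ 36 * Y^2 * q := by
    calc _ ≤ 6 * Y * G1.d := s2
      _ ≤ 6 * Y * (6 * Y * H.d) := by gcongr
      _ ≤ 6 * Y * (6 * Y * q) := by gcongr
      _ = _ := by ring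
  have o2 := W_ok hB (k+1) _ hG2
  have hc : (q:ℤ) < (G1.mul g).c := by
    have : q < (G1.mul g).c := by
      simp only [mul]
      have := (hB g hg).c1
      calc q < G1.d := hlt
        _ = G1.d * 1 := by ring
        _ ≤ G1.d * g.c := by gcongr; omega
        _ ≤ _ := Nat.le_add_left _ _
    exact_mod_cast this
  have fin := bad_aux o2 hθ2 (q := q) (p := p) (by exact_mod_cast hq) hc
  rw [← e2] at fin
  refine le_trans ?_ fin
  have hd0 : (0:ℝ) < (G1.mul g).d := by exact_mod_cast o2.d_pos
  apply one_div_le_one_div_of_le (by positivity)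
  have : ((G1.mul g).d:ℝ) ≤ 36 * (Y:ℝ)^2 * q := by exact_mod_cast s3
  linarith

end Mob
end

section
open Filter MeasureTheory Real

/-- e(x) -/
noncomputable def ee (x : ℝ) : ℂ := Complex.exp (2 * π * x * Complex.I)

theorem ee_eq (x : ℝ) : ee x = Complex.exp ((2 * π * x : ℝ) * Complex.I) := by
  unfold ee; push_cast; rfl

theorem norm_ee (x : ℝ) : ‖ee x‖ = 1 := by
  rw [ee_eq]; exact Complex.norm_exp_ofReal_mul_I _

theorem ee_add (x y : ℝ) : ee (x + y) = ee x * ee y := by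
  unfold ee; rw [← Complex.exp_add]; push_cast; ring_nf

theorem ee_conj (x : ℝ) : (starRingEnd ℂ) (ee x) = ee (-x) := by
  rw [ee_eq, ee_eq, ← Complex.exp_conj, map_mul, Complex.conj_ofReal, Complex.conj_I]; push_cast; ring_nf

theorem ee_sub (x y : ℝ) : ee (x - y) = ee x * (starRingEnd ℂ) (ee y) := by
  rw [ee_conj, ← ee_add, sub_eq_add_neg]

theorem ee_zero : ee 0 = 1 := by simp [ee]

theorem ee_cont : Continuous ee := by unfold ee; fun_prop

theorem ee_int (z : ℤ) : ee z = 1 := by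
  have := Complex.exp_int_mul_two_pi_mul_I z
  unfold ee
  rw [← this]; congr 1; push_cast; ring

theorem ee_lip (x y : ℝ) : ‖ee x - ee y‖ ≤ 2 * π * |x - y| := by
  have h : ee x - ee y = ee y * (ee (x - y) - 1) := by
    rw [mul_sub, ← ee_add, mul_one]; congr 2; ring
  rw [h, norm_mul, norm_ee, one_mul, ee_eq]
  have := Real.norm_exp_I_mul_ofReal_sub_one_le (x := 2 * π * (x-y))
  rw [mul_comm] at this
  refine this.trans ?_
  rw [Real.norm_eq_abs, abs_mul, abs_of_pos (by positivity)]

theorem ee_deriv {ψ : ℝ → ℝ} {p x : ℝ} (h : HasDerivAt ψ p x) : 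
    HasDerivAt (fun x => ee (ψ x)) (ee (ψ x) * (2 * π * Complex.I * p)) x := by
  unfold ee
  have h1 : HasDerivAt (fun x => (2 * π * (ψ x : ℂ) * Complex.I)) (2 * π * p * Complex.I) x := 
    ((h.ofReal_comp.const_mul (2 * π : ℂ)).mul_const Complex.I)
  convert h1.cexp using 1
  ring

theorem vdc {ψ p r : ℝ → ℝ} {lam Lam : ℝ} (hlam : 0 < lam)
    (h1 : ∀ x ∈ Set.Icc (0:ℝ) 1, HasDerivAt ψ (p x) x)
    (h2 : ∀ x ∈ Set.Icc (0:ℝ) 1, HasDerivAt p (r x) x)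
    (h3 : ∀ x ∈ Set.Icc (0:ℝ) 1, lam ≤ |p x|)
    (h4 : ∀ x ∈ Set.Icc (0:ℝ) 1, |r x| ≤ Lam)
    (h5 : ContinuousOn r (Set.Icc 0 1)) :
    ‖∫ x in (0:ℝ)..1, ee (ψ x)‖ ≤ 1/lam + Lam/lam^2 := by
  have hp0 : ∀ x ∈ Set.Icc (0:ℝ) 1, p x ≠ 0 := by
    intro x hx h0
    have := h3 x hx
    rw [h0, abs_zero] at this
    linarith
  set c : ℂ := (2 * π * Complex.I)⁻¹ with hc
  have hcn : ‖c‖ ≤ 1/2 := by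
    rw [hc, norm_inv, norm_mul, norm_mul, Complex.norm_I, Complex.norm_real, Real.norm_eq_abs, abs_of_pos pi_pos]
    simp only [Complex.norm_ofNat, mul_one]
    rw [inv_eq_one_div]
    apply one_div_le_one_div_of_le (by norm_num)
    linarith [pi_gt_three]
  have hc0 : (2 * π * Complex.I) * c = 1 := by
    rw [hc]; exact mul_inv_cancel₀ Complex.two_pi_I_ne_zero
  clear_value c
  set H : ℝ → ℂ := fun x => ee (ψ x) * c * ((p x)⁻¹ : ℝ) with hH
  have hderiv : ∀ x ∈ Set.Icc (0:ℝ) 1, HasDerivAt H (ee (ψ x) - ee (ψ x) * c * (r x / (p x)^2 : ℝ)) x := by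
    intro x hx
    have e1 := (ee_deriv (h1 x hx)).mul_const c
    have e2 := ((h2 x hx).inv (hp0 x hx)).ofReal_comp
    have e3 := e1.mul e2
    have hpx : (p x : ℂ) ≠ 0 := by exact_mod_cast hp0 x hx
    have e4 : ee (ψ x) * (2 * π * Complex.I * p x) * c * ((p⁻¹ x : ℝ) : ℂ) + ee (ψ x) * c * ((-r x / (p x)^2 : ℝ) : ℂ) = ee (ψ x) - ee (ψ x) * c * (r x / (p x)^2 : ℝ) := by
      simp only [Pi.inv_apply]
      push_cast
      have : ee (ψ x) * (2 * π * Complex.I * p x) * c * (p x : ℂ)⁻¹ = ee (ψ x) * ((2 * π * Complex.I) * c) * (p x * (p x : ℂ)⁻¹) := by ring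
      rw [this, hc0, mul_inv_cancel₀ hpx]
      ring
    rw [← e4]
    exact e3
  have cψ : ContinuousOn (fun x => ee (ψ x)) (Set.Icc 0 1) := 
    ee_cont.comp_continuousOn (fun x hx => (h1 x hx).continuousAt.continuousWithinAt)
  have cp : ContinuousOn p (Set.Icc 0 1) := fun x hx => (h2 x hx).continuousAt.continuousWithinAt
  have cR : ContinuousOn (fun x => ee (ψ x) * c * (r x / (p x)^2 : ℝ)) (Set.Icc 0 1) := by
    apply (cψ.mul continuousOn_const).mul
    apply Complex.continuous_ofReal.comp_continuousOn
    exact h5.div (cp.pow 2) (fun x hx => pow_ne_zero _ (hp0 x hx))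
  have i1 : IntervalIntegrable (fun x => ee (ψ x)) volume 0 1 := by
    apply ContinuousOn.intervalIntegrable; rwa [Set.uIcc_of_le zero_le_one]
  have i2 : IntervalIntegrable (fun x => ee (ψ x) * c * (r x / (p x)^2 : ℝ)) volume 0 1 := by
    apply ContinuousOn.intervalIntegrable; rwa [Set.uIcc_of_le zero_le_one]
  have ftc := intervalIntegral.integral_eq_sub_of_hasDerivAt (a := 0) (b := 1) (f := H) 
    (f' := fun x => ee (ψ x) - ee (ψ x) * c * (r x / (p x)^2 : ℝ)) (by
      rw [Set.uIcc_of_le zero_le_one]; exact hderiv) (i1.sub i2)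
  rw [intervalIntegral.integral_sub i1 i2] at ftc
  have hHn : ∀ x ∈ Set.Icc (0:ℝ) 1, ‖H x‖ ≤ 1/2 * (1/lam) := by
    intro x hx
    simp only [hH]
    rw [norm_mul, norm_mul, norm_ee, one_mul, Complex.norm_real, norm_inv, Real.norm_eq_abs]
    apply mul_le_mul hcn _ (by positivity) (by norm_num)
    rw [inv_eq_one_div]
    exact one_div_le_one_div_of_le hlam (h3 x hx)
  have hLam : 0 ≤ Lam := (abs_nonneg _).trans (h4 0 (by simp))
  have hR : ‖∫ x in (0:ℝ)..1, ee (ψ x) * c * (r x / (p x)^2 : ℝ)‖ ≤ Lam/lam^2 := by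
    have := intervalIntegral.norm_integral_le_of_norm_le_const (a := 0) (b := 1) (C := Lam/lam^2) (f := fun x => ee (ψ x) * c * (r x / (p x)^2 : ℝ)) (by
      intro x hx
      rw [Set.uIoc_of_le zero_le_one] at hx
      have hx' : x ∈ Set.Icc (0:ℝ) 1 := ⟨hx.1.le, hx.2⟩
      rw [norm_mul, norm_mul, norm_ee, one_mul, Complex.norm_real, norm_div, norm_pow, Real.norm_eq_abs, Real.norm_eq_abs]
      calc ‖c‖ * (|r x| / |p x|^2) ≤ 1 * (Lam / lam^2) := by
            have := h4 x hx'; have := h3 x hx'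
            gcongr
            linarith
        _ = _ := one_mul _)
    simpa using this
  have e : ∫ x in (0:ℝ)..1, ee (ψ x) = H 1 - H 0 + ∫ x in (0:ℝ)..1, ee (ψ x) * c * (r x / (p x)^2 : ℝ) := by
    rw [← ftc]; ring
  rw [e]
  have a1 := hHn 1 (by simp)
  have a0 := hHn 0 (by simp)
  calc _ ≤ ‖H 1‖ + ‖H 0‖ + ‖∫ x in (0:ℝ)..1, ee (ψ x) * c * (r x / (p x)^2 : ℝ)‖ := 
        (norm_add_le _ _).trans (add_le_add_left (norm_sub_le _ _) _)
    _ ≤ _ := by linarith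

namespace Mob

theorem Ok.hasDeriv {g} (h : Ok g) {x : ℝ} (hx : 0 ≤ x) : HasDerivAt g.app (1/(g.den x)^2) x := by
  have hp := h.den_pos hx
  have h1 : HasDerivAt (fun x : ℝ => (g.a:ℝ) * x + g.b) g.a x := by
    simpa using ((hasDerivAt_id x).const_mul (g.a:ℝ)).add_const (g.b:ℝ)
  have h2 : HasDerivAt (fun x : ℝ => (g.c:ℝ) * x + g.d) g.c x := by
    simpa using ((hasDerivAt_id x).const_mul (g.c:ℝ)).add_const (g.d:ℝ)
  have h3 := h1.div h2 hp.ne'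
  have e : ((g.a:ℝ) * (g.c * x + g.d) - (g.a * x + g.b) * g.c) = 1 := by linear_combination h.det'
  rw [e] at h3
  exact h3

theorem Ok.hasDeriv2 {g} (h : Ok g) {x : ℝ} (hx : 0 ≤ x) : 
    HasDerivAt (fun x => 1/(g.den x)^2) (-(2*g.c)/(g.den x)^3) x := by
  have hp := h.den_pos hx
  have h2 : HasDerivAt (fun x : ℝ => (g.c:ℝ) * x + g.d) g.c x := by
    simpa using ((hasDerivAt_id x).const_mul (g.c:ℝ)).add_const (g.d:ℝ)
  have h2' : HasDerivAt g.den g.c x := h2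
  have h3 := (h2'.pow 2).inv (pow_ne_zero 2 hp.ne')
  have e : (-(2*g.c)/(g.den x)^3 : ℝ) = -(((2:ℕ):ℝ) * g.den x ^ (2-1) * g.c) / (g.den x ^ 2)^2 := by
    push_cast; field_simp
  rw [e]
  have e2 : (fun x => 1/(g.den x)^2) = (g.den ^ 2)⁻¹ := by funext y; simp
  rw [e2]
  exact h3

theorem pair_bound {g1 g2 : Mob} (o1 : Ok g1) (o2 : Ok g2) {n D0 D1 η : ℝ} (hn : 0 < n) (hD0 : 0 < D0) (hη : 0 < η)
    (l1 : D0 ≤ g1.d) (l2 : D0 ≤ g2.d) (u1 : g1.d ≤ D1) (u2 : g2.d ≤ D1) 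
    (hA : ∀ x ∈ Set.Icc (0:ℝ) 1, η ≤ |g2.den x - g1.den x|) :
    ‖∫ x in (0:ℝ)..1, ee (n * (g1.app x - g2.app x))‖ ≤ 1/(n*η/(8*D1^3)) + (2*n/D0^2)/(n*η/(8*D1^3))^2 := by
  have hD1 : 0 < D1 := by linarith
  apply vdc (p := fun x => n * (1/(g1.den x)^2 - 1/(g2.den x)^2)) 
    (r := fun x => n * (-(2*g1.c)/(g1.den x)^3 - -(2*g2.c)/(g2.den x)^3)) (by positivity)
  · intro x hx
    exact ((o1.hasDeriv hx.1).sub (o2.hasDeriv hx.1)).const_mul n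
  · intro x hx
    exact ((o1.hasDeriv2 hx.1).sub (o2.hasDeriv2 hx.1)).const_mul n
  · intro x hx
    have p1 := o1.den_pos hx.1; have p2 := o2.den_pos hx.1
    have q1 : g1.den x ≤ 2 * D1 := (o1.den_le hx.2).trans (by linarith)
    have q2 : g2.den x ≤ 2 * D1 := (o2.den_le hx.2).trans (by linarith)
    have hAx := hA x hx
    set a := g1.den x
    set b := g2.den x
    have e : n * (1/a^2 - 1/b^2) = n * ((b - a) * ((a+b)/(a^2*b^2))) := by
      field_simp; ring
    rw [e, abs_mul, abs_mul, abs_of_pos hn, abs_of_pos (by positivity : 0 < (a+b)/(a^2*b^2))]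
    have k : 1/(8*D1^3) ≤ (a+b)/(a^2*b^2) := by
      rw [div_le_div_iff₀ (by positivity) (by positivity)]
      have k1 : a*b^2 ≤ (2*D1)^3 := by
        calc a * b^2 ≤ (2*D1)*(2*D1)^2 := by gcongr
          _ = _ := by ring
      have k2 : a * (a*b^2) ≤ a * (2*D1)^3 := by gcongr
      have : 0 < b * (8 * D1^3) := by positivity
      nlinarith
    calc n * η/(8*D1^3) = n * (η * (1/(8*D1^3))) := by ring
      _ ≤ _ := by gcongr
  · intro x hx
    have key : ∀ g : Mob, Ok g → D0 ≤ g.d → 0 ≤ 2 * g.c/(g.den x)^3 ∧ 2 * g.c/(g.den x)^3 ≤ 2 / D0^2 := by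
      intro g o l
      have p := o.den_pos hx.1
      have gd := o.den_ge hx.1
      refine ⟨by positivity, ?_⟩
      rw [div_le_div_iff₀ (by positivity) (by positivity)]
      have hc : (g.c:ℝ) ≤ g.den x := by
        have : (g.c:ℝ) ≤ g.d := by exact_mod_cast o.cd
        linarith
      calc 2 * (g.c:ℝ) * D0^2 ≤ 2 * g.den x * (g.den x)^2 := by gcongr; linarith
        _ = _ := by ring
    obtain ⟨a1, a2⟩ := key g1 o1 l1
    obtain ⟨b1, b2⟩ := key g2 o2 l2
    rw [abs_mul, abs_of_pos hn, mul_comm 2 n, mul_div_assoc]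
    apply mul_le_mul_of_nonneg_left _ hn.le
    rw [abs_le]
    rw [neg_div, neg_div]
    constructor <;> linarith
  · apply ContinuousOn.mul continuousOn_const
    have : ∀ g : Mob, Ok g → ContinuousOn (fun x => -(2*g.c)/(g.den x)^3) (Set.Icc 0 1) := by
      intro g o
      apply ContinuousOn.div continuousOn_const
      · unfold den; fun_prop
      · intro x hx; exact pow_ne_zero 3 (o.den_pos hx.1).ne'
    exact (this g1 o1).sub (this g2 o2)

end Mob
end

section
open Filter MeasureTheory Real

namespace Mob
variable {Y : ℕ} {B : Finset Mob} {ν : Measure ℝ}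

theorem W_mul_mem (k : ℕ) {G : Mob} (hG : G ∈ W B k) : ∀ j, ∀ h ∈ W B j, G.mul h ∈ W B (k+j)
  | 0, h, hh => by
    simp only [W, Finset.mem_singleton] at hh
    rw [hh, mul_one']; exact hG
  | j+1, h, hh => by
    obtain ⟨H, hH, g, hg, rfl⟩ := mem_W_succ.1 hh
    rw [← mul_assoc']
    exact mem_W_succ.2 ⟨G.mul H, W_mul_mem k hG j H hH, g, hg, rfl⟩

theorem bad_count (hB : ∀ g ∈ B, Dig Y g) (hY : 1 ≤ Y) (k : ℕ) (y D : ℝ) :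
    ((W B k).filter (fun G => |G.den y - D| < 1)).card ≤ 4 * (6*Y)^k := by
  set T := (W B k).filter (fun G => |G.den y - D| < 1) with hT
  have : T.card ≤ (Finset.range ((6*Y)^k+1) ×ˢ Finset.range 2).card := by
    apply Finset.card_le_card_of_injOn (fun G => (G.c, ((G.d:ℤ) - ⌊D - G.c * y⌋).toNat))
    · intro G hG
      have hG' := Finset.mem_filter.1 (Finset.mem_coe.1 hG)
      have h1 := W_d_le hB k G hG'.1
      have h2 := (W_ok hB k G hG'.1).cd
      have h3 := abs_lt.1 hG'.2
      unfold den at h3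
      have f1 := Int.floor_le (D - G.c * y)
      have f2 := Int.lt_floor_add_one (D - G.c * y)
      have h4 : (G.d:ℤ) < ⌊D - G.c * y⌋ + 2 := by
        have : ((G.d:ℤ):ℝ) < ((⌊D - G.c * y⌋ + 2 : ℤ) : ℝ) := by push_cast; linarith
        exact_mod_cast this
      simp only [Finset.coe_product, Set.mem_prod, Finset.coe_range, Set.mem_Iio]
      constructor
      · omega
      · omega
    · intro G hG H hH he
      have hG' := Finset.mem_filter.1 (Finset.mem_coe.1 hG)
      have hH' := Finset.mem_filter.1 (Finset.mem_coe.1 hH)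
      simp only [Prod.mk.injEq] at he
      have key : ∀ G : Mob, |G.den y - D| < 1 → ⌊D - G.c * y⌋ ≤ (G.d:ℤ) := by
        intro G h
        have h3 := abs_lt.1 h
        unfold den at h3
        have f1 := Int.floor_le (D - G.c * y)
        have : ((⌊D - G.c * y⌋ - 1 : ℤ):ℝ) < ((G.d:ℤ):ℝ) := by push_cast; linarith
        have : (⌊D - G.c * y⌋ - 1 : ℤ) < (G.d:ℤ) := by exact_mod_cast this
        omega
      have k1 := key G hG'.2; have k2 := key H hH'.2
      obtain ⟨e1, e2⟩ := he
      rw [e1] at e2 k1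
      exact W_eq_of_cd hB hG'.1 hH'.1 e1 (by omega)
  rw [Finset.card_product, Finset.card_range, Finset.card_range] at this
  have : 1 ≤ (6*Y)^k := Nat.one_le_pow _ _ (by omega)
  omega

theorem good_den (hB : ∀ g ∈ B, Dig Y g) (hY : 1 ≤ Y) {s : ℕ} (hs : 2 * (6*Y)^s ≤ ((2*Y)^s)^2) {G1 G2 h : Mob}
    (h1 : G1 ∈ W B s) (h2 : G2 ∈ W B s) (hh : h ∈ W B s) (hA : 1 ≤ |G2.den (h.app 0) - G1.den (h.app 0)|)
    {x : ℝ} (hx : x ∈ Set.Icc (0:ℝ) 1) : ((2*Y:ℝ)^s)/2 ≤ |(G2.mul h).den x - (G1.mul h).den x| := by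
  have oh := W_ok hB s h hh
  have o1 := W_ok hB s G1 h1
  have o2 := W_ok hB s G2 h2
  rw [den_mul oh hx.1, den_mul oh hx.1, ← sub_mul, abs_mul, abs_of_pos (oh.den_pos hx.1)]
  have hd : ((2*Y:ℝ)^s) ≤ h.d := by exact_mod_cast W_d_ge hB s h hh
  have hd2 := oh.den_ge hx.1
  have hpos : (0:ℝ) < (2*Y:ℝ)^s := by positivity
  have c1 : (G1.c:ℝ) ≤ (6*Y)^s := by exact_mod_cast o1.cd.trans (W_d_le hB s G1 h1)
  have c2 : (G2.c:ℝ) ≤ (6*Y)^s := by exact_mod_cast o2.cd.trans (W_d_le hB s G2 h2)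
  have hs' : 2 * (6*Y:ℝ)^s ≤ ((2*Y:ℝ)^s)^2 := by exact_mod_cast hs
  have e : G2.den (h.app x) - G1.den (h.app x) = (G2.den (h.app 0) - G1.den (h.app 0)) + ((G2.c:ℝ) - G1.c) * (h.app x - h.app 0) := by
    unfold den; ring
  have sm : |((G2.c:ℝ) - G1.c) * (h.app x - h.app 0)| ≤ 1/2 := by
    rw [abs_mul, oh.app_sub hx.1 le_rfl]
    have a1 : |(G2.c:ℝ) - G1.c| ≤ (6*Y)^s := by
      rw [abs_le]
      have : (0:ℝ) ≤ G1.c := by positivity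
      have : (0:ℝ) ≤ G2.c := by positivity
      constructor <;> linarith
    have a2 : |(x - 0) / (h.den x * h.den 0)| ≤ 1/((2*Y:ℝ)^s)^2 := by
      have p1 := oh.den_pos hx.1
      have p2 : h.den 0 = h.d := by simp [den]
      rw [p2, sub_zero, abs_div, abs_of_nonneg hx.1, abs_of_pos (by nlinarith), sq]
      gcongr
      · exact hx.2
      · linarith
    calc _ ≤ (6*Y:ℝ)^s * (1/((2*Y:ℝ)^s)^2) := by gcongr
      _ ≤ 1/2 := by
        rw [mul_one_div, div_le_div_iff₀ (by positivity) (by norm_num)]; linarith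
  have half : 1/2 ≤ |G2.den (h.app x) - G1.den (h.app x)| := by
    rw [e]
    have := abs_add_le ((G2.den (h.app 0) - G1.den (h.app 0)) + ((G2.c:ℝ) - G1.c) * (h.app x - h.app 0)) (-(((G2.c:ℝ) - G1.c) * (h.app x - h.app 0)))
    rw [abs_neg, add_neg_cancel_right] at this
    linarith
  calc (2*Y:ℝ)^s/2 = 1/2 * (2*Y:ℝ)^s := by ring
    _ ≤ _ := by gcongr; linarith

/-- average of exponentials -/
noncomputable def Phi (B : Finset Mob) (s : ℕ) (h : Mob) (n : ℝ) (x : ℝ) : ℂ :=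
  ((B.card:ℝ)^s)⁻¹ * ∑ G ∈ W B s, ee (n * (G.mul h).app x)

theorem Phi_meas (s : ℕ) (h : Mob) (n : ℝ) : Measurable (Phi B s h n) := by
  unfold Phi
  apply Measurable.const_mul
  apply Finset.measurable_sum
  intro G _
  exact ee_cont.measurable.comp ((Ok.measurable _).const_mul n)

theorem avg_norm_le (hB : ∀ g ∈ B, Dig Y g) (hne : B.card ≠ 0) (s : ℕ) (f : Mob → ℂ) {C : ℝ} (hf : ∀ G ∈ W B s, ‖f G‖ ≤ C) :
    ‖(((B.card:ℝ)^s)⁻¹ : ℂ) * ∑ G ∈ W B s, f G‖ ≤ C := by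
  have hc : (0:ℝ) < (B.card:ℝ)^s := by positivity
  have h1 : ‖∑ G ∈ W B s, f G‖ ≤ (B.card:ℝ)^s * C := by
    refine (norm_sum_le_of_le _ hf).trans ?_
    rw [Finset.sum_const, W_card hB, nsmul_eq_mul]; push_cast; rfl
  rw [norm_mul, norm_inv, norm_pow]
  simp only [Complex.ofReal_natCast, Complex.norm_natCast]
  rw [inv_mul_le_iff₀ hc]; exact h1

theorem Phi_le (hB : ∀ g ∈ B, Dig Y g) (hne : B.card ≠ 0) (s : ℕ) (h : Mob) (n x : ℝ) : ‖Phi B s h n x‖ ≤ 1 := by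
  have := avg_norm_le hB hne s (fun G => ee (n * (G.mul h).app x)) (C := 1) (fun G _ => by rw [norm_ee])
  simpa [Phi] using this

theorem Phi_lip (hB : ∀ g ∈ B, Dig Y g) (hne : B.card ≠ 0) (hY : 1 ≤ Y) (s : ℕ) {h : Mob} (hh : h ∈ W B s) {n : ℝ} (hn : 0 < n) {x y : ℝ}
    (hx : x ∈ Set.Icc (0:ℝ) 1) (hy : y ∈ Set.Icc (0:ℝ) 1) : 
    ‖Phi B s h n x - Phi B s h n y‖ ≤ 2 * π * (n / ((2*Y:ℝ)^s)^4) * |x - y| := by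
  have := avg_norm_le hB hne s (fun G => ee (n * (G.mul h).app x) - ee (n * (G.mul h).app y)) 
     (C := 2 * π * (n / ((2*Y:ℝ)^s)^4) * |x - y|) (by
    intro G hG
    have hm := W_mul_mem s hG s h hh
    have o := W_ok hB _ _ hm
    refine (ee_lip _ _).trans ?_
    rw [← mul_sub, abs_mul, abs_of_pos hn, o.app_sub hx.1 hy.1, abs_div]
    have hd : (((2*Y:ℝ)^s)^2) ≤ (G.mul h).d := by
      have := W_d_ge hB _ _ hm
      rw [← pow_mul, mul_two]; exact_mod_cast this
    have px := o.den_pos hx.1; have py := o.den_pos hy.1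
    rw [abs_of_pos (by positivity : 0 < (G.mul h).den x * (G.mul h).den y)]
    have hpos : (0:ℝ) < (2*Y:ℝ)^s := by positivity
    have : |x - y| / ((G.mul h).den x * (G.mul h).den y) ≤ |x - y| / ((2*Y:ℝ)^s)^4 := by
      gcongr
      calc ((2*Y:ℝ)^s)^4 = ((2*Y:ℝ)^s)^2 * ((2*Y:ℝ)^s)^2 := by ring
        _ ≤ _ := by
          have := o.den_ge hx.1; have := o.den_ge hy.1
          gcongr <;> linarith
    calc _ ≤ 2 * π * (n * (|x - y| / ((2*Y:ℝ)^s)^4)) := by gcongr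
      _ = _ := by ring)
  rw [Finset.sum_sub_distrib, mul_sub] at this
  simpa [Phi] using this

theorem app_contOn {g : Mob} (o : Ok g) (n : ℝ) : ContinuousOn (fun x => ee (n * g.app x)) (Set.Icc 0 1) := 
  ee_cont.comp_continuousOn (continuousOn_const.mul o.continuousOn)

theorem Phi_contOn (hB : ∀ g ∈ B, Dig Y g) (s : ℕ) {h : Mob} (hh : h ∈ W B s) (n : ℝ) : 
    ContinuousOn (Phi B s h n) (Set.Icc 0 1) := by
  unfold Phi
  apply ContinuousOn.mul continuousOn_const
  apply continuousOn_finsetSum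
  intro G hG
  exact app_contOn (W_ok hB _ _ (W_mul_mem s hG s h hh)) n

/-- L2 bound for Phi -/
theorem Phi_L2 (hB : ∀ g ∈ B, Dig Y g) (hne : B.card ≠ 0) (hY : 1 ≤ Y) {s : ℕ} (hs : 2 * (6*Y)^s ≤ ((2*Y)^s)^2) {h : Mob} (hh : h ∈ W B s) {n : ℝ} (hn : 0 < n) :
    ∫ x in (0:ℝ)..1, ‖Phi B s h n x‖^2 ≤ 4 * (6*Y:ℝ)^s / (B.card:ℝ)^s + 
      (1/(n*((2*Y:ℝ)^s/2)/(8*(((6*Y:ℝ)^s)^2)^3)) + (2*n/(((2*Y:ℝ)^s)^2)^2)/(n*((2*Y:ℝ)^s/2)/(8*(((6*Y:ℝ)^s)^2)^3))^2) := by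
  set gb : ℝ := (1/(n*((2*Y:ℝ)^s/2)/(8*(((6*Y:ℝ)^s)^2)^3)) + (2*n/(((2*Y:ℝ)^s)^2)^2)/(n*((2*Y:ℝ)^s/2)/(8*(((6*Y:ℝ)^s)^2)^3))^2) with hgb
  have hgb0 : 0 ≤ gb := by positivity
  have hpos : (0:ℝ) < (2*Y:ℝ)^s := by positivity
  set m : ℝ := (B.card:ℝ)^s with hm
  have hm0 : 0 < m := by positivity
  -- expand
  have e1 : ∀ x, ((‖Phi B s h n x‖^2 : ℝ) : ℂ) = ((m:ℂ)⁻¹)^2 * ∑ G1 ∈ W B s, ∑ G2 ∈ W B s, ee (n * ((G1.mul h).app x - (G2.mul h).app x)) := by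
    intro x
    rw [← Complex.normSq_eq_norm_sq, ← Complex.mul_conj]
    unfold Phi
    rw [map_mul, map_sum, ← Complex.ofReal_inv, Complex.conj_ofReal]
    rw [show ∀ a b c : ℂ, a * b * (a * c) = a^2 * (b * c) by intros; ring, Finset.sum_mul_sum]
    congr 1
    apply Finset.sum_congr rfl; intro G1 _
    apply Finset.sum_congr rfl; intro G2 _
    rw [← ee_sub, mul_sub]
  have hii : ∀ G1 ∈ W B s, ∀ G2 ∈ W B s, IntervalIntegrable (fun x => ee (n * ((G1.mul h).app x - (G2.mul h).app x))) volume 0 1 := by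
    intro G1 h1 G2 h2
    apply ContinuousOn.intervalIntegrable
    rw [Set.uIcc_of_le zero_le_one]
    exact ee_cont.comp_continuousOn (continuousOn_const.mul ((W_ok hB _ _ (W_mul_mem s h1 s h hh)).continuousOn.sub (W_ok hB _ _ (W_mul_mem s h2 s h hh)).continuousOn))
  have e2 : ((∫ x in (0:ℝ)..1, ‖Phi B s h n x‖^2 : ℝ) : ℂ) = ((m:ℂ)⁻¹)^2 * ∑ G1 ∈ W B s, ∑ G2 ∈ W B s, ∫ x in (0:ℝ)..1, ee (n * ((G1.mul h).app x - (G2.mul h).app x)) := by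
    rw [← intervalIntegral.integral_ofReal]
    simp_rw [e1]
    rw [intervalIntegral.integral_const_mul, intervalIntegral.integral_finsetSum]
    · congr 1
      apply Finset.sum_congr rfl; intro G1 h1
      rw [intervalIntegral.integral_finsetSum]
      exact hii G1 h1
    · intro G1 h1
      have := IntervalIntegrable.sum (W B s) (hii G1 h1)
      have e : (fun x => ∑ G2 ∈ W B s, ee (n * ((G1.mul h).app x - (G2.mul h).app x))) = ∑ G2 ∈ W B s, fun x => ee (n * ((G1.mul h).app x - (G2.mul h).app x)) := by
        funext x; simp [Finset.sum_apply]
      rw [e]; exact this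
  have each : ∀ G1 ∈ W B s, ∀ G2 ∈ W B s, ‖∫ x in (0:ℝ)..1, ee (n * ((G1.mul h).app x - (G2.mul h).app x))‖ ≤ (if |G2.den (h.app 0) - G1.den (h.app 0)| < 1 then 1 else 0) + gb := by
    intro G1 h1 G2 h2
    split_ifs with hbad
    · have := intervalIntegral.norm_integral_le_of_norm_le_const (a := 0) (b := 1) (C := 1) (f := fun x => ee (n * ((G1.mul h).app x - (G2.mul h).app x))) (by
        intro x _; rw [norm_ee])
      simp at this
      linarith
    · rw [zero_add]
      push Not at hbad
      have m1 := W_mul_mem s h1 s h hh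
      have m2 := W_mul_mem s h2 s h hh
      apply pair_bound (W_ok hB _ _ m1) (W_ok hB _ _ m2) hn (by positivity) (by positivity)
      · have := W_d_ge hB _ _ m1
        rw [← pow_mul, mul_two]; exact_mod_cast this
      · have := W_d_ge hB _ _ m2
        rw [← pow_mul, mul_two]; exact_mod_cast this
      · have := W_d_le hB _ _ m1
        rw [← pow_mul, mul_two]; exact_mod_cast this
      · have := W_d_le hB _ _ m2
        rw [← pow_mul, mul_two]; exact_mod_cast this
      · intro x hx
        exact good_den hB hY hs h1 h2 hh hbad hx
  have hI0 : 0 ≤ ∫ x in (0:ℝ)..1, ‖Phi B s h n x‖^2 := intervalIntegral.integral_nonneg zero_le_one (fun x _ => by positivity)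
  have hcard : ((W B s).card : ℝ) = m := by rw [W_card hB]; push_cast; rfl
  have hsum : ‖∑ G1 ∈ W B s, ∑ G2 ∈ W B s, ∫ x in (0:ℝ)..1, ee (n * ((G1.mul h).app x - (G2.mul h).app x))‖ ≤ m * (4 * (6*Y:ℝ)^s + m * gb) := by
    rw [← hcard, ← nsmul_eq_mul, ← Finset.sum_const]
    apply norm_sum_le_of_le
    intro G1 h1
    refine (norm_sum_le_of_le _ (each G1 h1)).trans ?_
    rw [Finset.sum_add_distrib, Finset.sum_const, nsmul_eq_mul]
    gcongr
    rw [← Finset.sum_filter, Finset.sum_const, nsmul_eq_mul, mul_one]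
    exact_mod_cast bad_count hB hY s (h.app 0) (G1.den (h.app 0))
  have e3 : ∫ x in (0:ℝ)..1, ‖Phi B s h n x‖^2 = ‖((∫ x in (0:ℝ)..1, ‖Phi B s h n x‖^2 : ℝ) : ℂ)‖ := by
    rw [Complex.norm_real, Real.norm_of_nonneg hI0]
  rw [e3, e2, norm_mul, norm_pow, norm_inv, Complex.norm_real, Real.norm_of_nonneg hm0.le]
  clear_value gb m
  calc (m⁻¹)^2 * _ ≤ (m⁻¹)^2 * (m * (4 * (6*Y:ℝ)^s + m * gb)) := by gcongr
    _ = _ := by field_simp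

end Mob
end

section
open Filter MeasureTheory Real

namespace Mob
variable {Y : ℕ} {B : Finset Mob} {ν : Measure ℝ}

theorem avgF (S : SS Y B ν) (hY : 1 ≤ Y) (l : ℕ) {F : ℝ → ℂ} (hFm : Measurable F) (hF1 : ∀ x, ‖F x‖ ≤ 1)
    (hFc : ContinuousOn F (Set.Icc 0 1)) {L : ℝ} (hL : 0 ≤ L)
    (hFL : ∀ x ∈ Set.Icc (0:ℝ) 1, ∀ y ∈ Set.Icc (0:ℝ) 1, ‖F x - F y‖ ≤ L * |x - y|) :
    ‖∫ x, F x ∂ν‖^2 ≤ 4 * ((6*Y:ℝ)^l)^2 / (B.card:ℝ)^l * (∫ x in (0:ℝ)..1, ‖F x‖^2) + 2 * (L / ((2*Y:ℝ)^l)^2)^2 := by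
  have := S.prob
  have hB := S.dig
  have hpos : (0:ℝ) < (2*Y:ℝ)^l := by positivity
  have hposb : (0:ℝ) < (6*Y:ℝ)^l := by positivity
  set m : ℝ := (B.card:ℝ)^l with hm
  have hm0 : 0 < m := by have := S.ne; positivity
  have hcard : ((W B l).card : ℝ) = m := by rw [W_card hB]; push_cast; rfl
  have hsqc : ContinuousOn (fun x => ‖F x‖^2) (Set.Icc 0 1) := hFc.norm.pow 2
  have sub : ∀ G ∈ W B l, Set.Icc (G.app 0) (G.app 1) ⊆ Set.Icc (0:ℝ) 1 := by
    intro G hG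
    have o := W_ok hB l G hG
    exact Set.Icc_subset_Icc (o.app_mem ⟨le_rfl, zero_le_one⟩).1 (o.app_mem ⟨zero_le_one, le_rfl⟩).2
  have hint : ∀ G ∈ W B l, IntegrableOn (fun x => ‖F x‖^2) (Set.Icc (G.app 0) (G.app 1)) volume := by
    intro G hG
    exact (hsqc.mono (sub G hG)).integrableOn_Icc
  -- pointwise
  have pt : ∀ G ∈ W B l, ∀ θ ∈ Set.Icc (0:ℝ) 1, ‖F (G.app θ)‖^2 ≤ 4 * ((6*Y:ℝ)^l)^2 * (∫ x in Set.Icc (G.app 0) (G.app 1), ‖F x‖^2) + 2 * (L / ((2*Y:ℝ)^l)^2)^2 := by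
    intro G hG θ hθ
    have o := W_ok hB l G hG
    have hd : ((2*Y:ℝ)^l) ≤ G.d := by exact_mod_cast W_d_ge hB l G hG
    have hd' : (G.d:ℝ) ≤ (6*Y:ℝ)^l := by exact_mod_cast W_d_le hB l G hG
    set I := G.app 1 - G.app 0 with hI
    have eI : I = 1 / (G.den 1 * G.den 0) := by
      rw [hI, o.app_sub zero_le_one le_rfl, sub_zero]
    have d0 : G.den 0 = G.d := by simp [den]
    have d1 := o.den_ge zero_le_one
    have d2 := o.den_le le_rfl
    have hI1 : I ≤ 1 / ((2*Y:ℝ)^l)^2 := by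
      rw [eI, d0, sq]
      have : (2*Y:ℝ)^l ≤ G.den 1 := by linarith
      have : 0 ≤ G.den 1 := by linarith
      gcongr
    have hI2 : 1/(2*((6*Y:ℝ)^l)^2) ≤ I := by
      rw [eI, d0]
      have hdp : (0:ℝ) < G.d := by linarith
      have : (0:ℝ) < G.den 1 := by linarith
      apply one_div_le_one_div_of_le (by positivity)
      calc _ ≤ (2 * (6*Y:ℝ)^l) * (6*Y:ℝ)^l := by gcongr; linarith
        _ = _ := by ring
    have hI0 : 0 < I := lt_of_lt_of_le (by positivity) hI2
    set v := ‖F (G.app θ)‖^2 with hv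
    have hmem : G.app θ ∈ Set.Icc (G.app 0) (G.app 1) := ⟨o.app_mono le_rfl hθ.1, o.app_mono hθ.1 hθ.2⟩
    have p1 : ∀ y ∈ Set.Icc (G.app 0) (G.app 1), v ≤ 2 * ‖F y‖^2 + 2 * (L*I)^2 := by
      intro y hy
      have h1 := hFL _ (sub G hG hmem) _ (sub G hG hy)
      have h2 : |G.app θ - y| ≤ I := by
        rw [abs_le, hI]; constructor <;> linarith [hmem.1, hmem.2, hy.1, hy.2]
      have h3 : ‖F (G.app θ) - F y‖ ≤ L * I := h1.trans (by gcongr)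
      have h4 : ‖F (G.app θ)‖ ≤ ‖F y‖ + L * I := by
        have := norm_add_le (F y) (F (G.app θ) - F y)
        rw [add_sub_cancel] at this; linarith
      calc v ≤ (‖F y‖ + L*I)^2 := by rw [hv]; gcongr
        _ ≤ _ := by nlinarith [sq_nonneg (‖F y‖ - L*I)]
    have p2 : v * I ≤ 2 * (∫ x in Set.Icc (G.app 0) (G.app 1), ‖F x‖^2) + 2 * (L*I)^2 * I := by
      have hv : volume.real (Set.Icc (G.app 0) (G.app 1)) = I := by
        rw [Real.volume_real_Icc_of_le (by linarith)]
      have hi2 : IntegrableOn (fun y => 2 * ‖F y‖^2 + 2 * (L*I)^2) (Set.Icc (G.app 0) (G.app 1)) volume := 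
        ((hint G hG).const_mul 2).add (integrableOn_const (by simp))
      have := setIntegral_mono_on (μ := volume) (s := Set.Icc (G.app 0) (G.app 1)) (f := fun _ => v) (g := fun y => 2 * ‖F y‖^2 + 2 * (L*I)^2) 
        (integrableOn_const (by simp)) hi2 measurableSet_Icc p1
      rw [integral_add ((hint G hG).const_mul 2) (integrableOn_const (by simp)), integral_const_mul, setIntegral_const, setIntegral_const, hv, smul_eq_mul, smul_eq_mul] at this
      linarith
    set J := ∫ x in Set.Icc (G.app 0) (G.app 1), ‖F x‖^2 with hJ
    have hJ0 : 0 ≤ J := setIntegral_nonneg measurableSet_Icc (fun x _ => by positivity)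
    have p3 : v ≤ 2 * J * (1/I) + 2 * (L*I)^2 := by
      have : v = (v * I) * (1/I) := by field_simp
      rw [this]
      calc _ ≤ (2 * J + 2 * (L*I)^2 * I) * (1/I) := by gcongr
        _ = _ := by field_simp
    have p4 : 1/I ≤ 2*((6*Y:ℝ)^l)^2 := by
      rw [div_le_iff₀ hI0]; rw [div_le_iff₀ (by positivity)] at hI2; linarith
    calc v ≤ _ := p3
      _ ≤ 2 * J * (2*((6*Y:ℝ)^l)^2) + 2 * (L*(1 / ((2*Y:ℝ)^l)^2))^2 := by gcongr
      _ = _ := by rw [mul_one_div]; ring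
  have each : ∀ G ∈ W B l, ‖∫ x, F (G.app x) ∂ν‖^2 ≤ 4 * ((6*Y:ℝ)^l)^2 * (∫ x in Set.Icc (G.app 0) (G.app 1), ‖F x‖^2) + 2 * (L / ((2*Y:ℝ)^l)^2)^2 := by
    intro G hG
    have := norm_integral_le_of_norm_le_const (μ := ν) (f := fun x => F (G.app x)) (C := √(4 * ((6*Y:ℝ)^l)^2 * (∫ x in Set.Icc (G.app 0) (G.app 1), ‖F x‖^2) + 2 * (L / ((2*Y:ℝ)^l)^2)^2)) (by
      filter_upwards [S.ae_mem] with x hx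
      exact Real.le_sqrt_of_sq_le (pt G hG x hx))
    rw [probReal_univ, mul_one] at this
    have h0 : 0 ≤ 4 * ((6*Y:ℝ)^l)^2 * (∫ x in Set.Icc (G.app 0) (G.app 1), ‖F x‖^2) + 2 * (L / ((2*Y:ℝ)^l)^2)^2 := by
      have : 0 ≤ ∫ x in Set.Icc (G.app 0) (G.app 1), ‖F x‖^2 := setIntegral_nonneg measurableSet_Icc (fun x _ => by positivity)
      positivity
    calc _ ≤ _ := pow_le_pow_left₀ (norm_nonneg _) this 2
      _ = _ := Real.sq_sqrt h0
  have tot : ∑ G ∈ W B l, (∫ x in Set.Icc (G.app 0) (G.app 1), ‖F x‖^2) ≤ ∫ x in (0:ℝ)..1, ‖F x‖^2 := by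
    rw [← integral_biUnion_finset (W B l) (fun _ _ => measurableSet_Icc) ?_ hint, intervalIntegral.integral_of_le zero_le_one, ← integral_Icc_eq_integral_Ioc]
    · apply setIntegral_mono_set hsqc.integrableOn_Icc
      · exact Eventually.of_forall (fun x => by positivity)
      · exact (Set.iUnion₂_subset sub).eventuallyLE
    · intro G hG H hH hne
      rw [Function.onFun, Set.disjoint_left]
      intro y hy1 hy2
      obtain ⟨θ, hθ, e1⟩ := (W_ok hB l G hG).surj le_rfl zero_le_one le_rfl hy1.1 hy1.2
      obtain ⟨θ', hθ', e2⟩ := (W_ok hB l H hH).surj le_rfl zero_le_one le_rfl hy2.1 hy2.2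
      exact hne (W_disj hB l G hG H hH θ hθ θ' hθ' (e1.trans e2.symm))
  rw [S.integral l hFm hF1]
  rw [norm_mul, mul_pow]
  have h1 : ‖∑ G ∈ W B l, ∫ x, F (G.app x) ∂ν‖^2 ≤ m * ∑ G ∈ W B l, ‖∫ x, F (G.app x) ∂ν‖^2 := by
    rw [← hcard]
    calc _ ≤ (∑ G ∈ W B l, ‖∫ x, F (G.app x) ∂ν‖)^2 := by gcongr; exact norm_sum_le _ _
      _ ≤ _ := sq_sum_le_card_mul_sum_sq
  have h2 : ∑ G ∈ W B l, ‖∫ x, F (G.app x) ∂ν‖^2 ≤ 4 * ((6*Y:ℝ)^l)^2 * (∫ x in (0:ℝ)..1, ‖F x‖^2) + m * (2 * (L / ((2*Y:ℝ)^l)^2)^2) := by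
    refine (Finset.sum_le_sum each).trans ?_
    rw [Finset.sum_add_distrib, Finset.sum_const, nsmul_eq_mul, hcard, ← Finset.mul_sum]
    gcongr
  have h3 : ‖((((B.card:ℝ)^l)⁻¹ : ℝ) : ℂ)‖ = m⁻¹ := by
    rw [Complex.norm_real, Real.norm_of_nonneg (by positivity)]
  rw [h3]
  clear_value m
  calc m⁻¹^2 * _ ≤ m⁻¹^2 * (m * (4 * ((6*Y:ℝ)^l)^2 * (∫ x in (0:ℝ)..1, ‖F x‖^2) + m * (2 * (L / ((2*Y:ℝ)^l)^2)^2))) := by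
        gcongr
        exact h1.trans (by gcongr)
    _ = _ := by
      generalize (∫ x in (0:ℝ)..1, ‖F x‖^2) = J
      generalize (L / ((2*Y:ℝ)^l)^2) = K
      field_simp

theorem nuhat_le (S : SS Y B ν) (s : ℕ) (n : ℝ) {C : ℝ} (h : ∀ h ∈ W B s, ‖∫ x, Phi B s h n x ∂ν‖ ≤ C) :
    ‖∫ x, ee (n * x) ∂ν‖ ≤ C := by
  have := S.prob
  have hB := S.dig
  have hem : Measurable (fun x : ℝ => ee (n*x)) := ee_cont.measurable.comp (measurable_id.const_mul n)
  have e1 := S.integral s (f := fun x => ee (n * x)) hem (C := 1) (fun x => by rw [norm_ee])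
  have e2 : ∀ G ∈ W B s, ∫ x, ee (n * G.app x) ∂ν = ((B.card:ℝ)^s)⁻¹ * ∑ h ∈ W B s, ∫ x, ee (n * (G.mul h).app x) ∂ν := by
    intro G hG
    rw [S.integral s (f := fun x => ee (n * G.app x)) (hem.comp (Ok.measurable G)) (C := 1) (fun x => by rw [norm_ee])]
    congr 1
    apply Finset.sum_congr rfl
    intro h hh
    apply integral_congr_ae
    filter_upwards [S.ae_mem] with x hx
    rw [app_mul (W_ok hB s G hG) (W_ok hB s h hh) hx]
  have e3 : ∫ x, ee (n * x) ∂ν = ((B.card:ℝ)^s)⁻¹ * ∑ h ∈ W B s, ∫ x, Phi B s h n x ∂ν := by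
    rw [e1]
    congr 1
    rw [Finset.sum_congr rfl e2, ← Finset.mul_sum, Finset.sum_comm, Finset.mul_sum]
    apply Finset.sum_congr rfl
    intro h hh
    unfold Phi
    rw [integral_const_mul, integral_finsetSum]
    · intro G hG
      apply Integrable.of_bound (C := 1)
      · exact (hem.comp (Ok.measurable (G.mul h))).aestronglyMeasurable
      · exact Eventually.of_forall (fun x => by rw [norm_ee])
  rw [e3]
  have := avg_norm_le hB S.ne s (fun h => ∫ x, Phi B s h n x ∂ν) h
  push_cast at this ⊢
  exact this

end Mob
end

section
open Filter MeasureTheory Real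

namespace Mob
variable {Y : ℕ} {B : Finset Mob} {ν : Measure ℝ}

theorem gb_arith {A P n T : ℝ} (hA : 1 ≤ A) (hT : 1 ≤ T) (hP : P = T * A) (h2 : T^12 ≤ A) (hn : A^8 ≤ n) :
    (1/(n*(A/2)/(8*(P^2)^3)) + (2*n/(A^2)^2)/(n*(A/2)/(8*(P^2)^3))^2) ≤ 528 / A := by
  have hn0 : 0 < n := lt_of_lt_of_le (by positivity) hn
  have hA0 : 0 < A := by linarith
  have hT0 : 0 < T := by linarith
  subst hP
  have e : (1/(n*(A/2)/(8*((T*A)^2)^3)) + (2*n/(A^2)^2)/(n*(A/2)/(8*((T*A)^2)^3))^2) = (16 * T^6 * A^5 + 512 * T^12 * A^6) / n := by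
    field_simp; ring
  rw [e, div_le_div_iff₀ hn0 hA0]
  have h6 : T^6 ≤ T^12 := pow_le_pow_right₀ hT (by norm_num)
  have : A^5 ≤ A^6 := pow_le_pow_right₀ hA (by norm_num)
  calc (16 * T^6 * A^5 + 512 * T^12 * A^6) * A ≤ (16 * T^12 * A^6 + 512 * T^12 * A^6) * A := by gcongr
    _ = 528 * T^12 * A^7 := by ring
    _ ≤ 528 * A * A^7 := by gcongr
    _ = 528 * A^8 := by ring
    _ ≤ _ := by gcongr

theorem phi_int (S : SS Y B ν) (hQ : (6*Y:ℝ)^2 ≤ 288 * B.card) (ha : (288:ℝ)^8 ≤ 2*Y) {s : ℕ} (hs : 1 ≤ s) {n : ℝ}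
    (hn1 : ((2*Y:ℝ)^s)^8 ≤ n) (hn2 : n ≤ ((2*Y:ℝ)^s)^8 * (2*Y:ℝ)^8) {h : Mob} (hh : h ∈ W B s) :
    ‖∫ x, Phi B s h n x ∂ν‖^2 ≤ (2128*288^4+80) * (288^s)^4 / (2*Y:ℝ)^s := by
  have hB := S.dig
  have hY : 1 ≤ Y := by
    by_contra hc
    have : Y = 0 := by omega
    rw [this] at ha; norm_num at ha
  have ha1 : (1:ℝ) ≤ 2*Y := le_trans (by norm_num) ha
  have hcard : (0:ℝ) < B.card := by have := S.ne; positivity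
  set A := (2*Y:ℝ)^s with hA
  have hA1 : 1 ≤ A := one_le_pow₀ ha1
  have hA0 : 0 < A := by linarith
  have hn0 : 0 < n := lt_of_lt_of_le (by positivity) hn1
  have h6 : (6*Y:ℝ)^s = 3^s * A := by rw [hA, ← mul_pow]; congr 1; ring
  have hs2 : 2 * (6*Y)^s ≤ ((2*Y)^s)^2 := by
    have : 2 * (6*Y:ℝ)^s ≤ ((2*Y:ℝ)^s)^2 := by
      rw [h6, ← hA]
      have : 2 * (3:ℝ)^s ≤ A := by
        calc 2 * (3:ℝ)^s ≤ 2^s * 3^s := by gcongr; exact le_self_pow₀ (by norm_num) (by omega)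
          _ = 6^s := by rw [← mul_pow]; norm_num
          _ ≤ A := by rw [hA]; gcongr; exact le_trans (by norm_num) ha
      calc _ = (2 * 3^s) * A := by ring
        _ ≤ A * A := by gcongr
        _ = _ := by ring
    exact_mod_cast this
  have i2 := Phi_L2 hB S.ne hY hs2 hh hn0
  have g := gb_arith hA1 (one_le_pow₀ (by norm_num : (1:ℝ) ≤ 3)) h6 (by
    rw [← pow_mul, mul_comm, pow_mul, hA]; gcongr; exact le_trans (by norm_num) ha) hn1
  have hQs : ((6*Y:ℝ)^s)^2 ≤ 288^s * (B.card:ℝ)^s := by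
    rw [← pow_mul, mul_comm s 2, pow_mul, ← mul_pow]; gcongr
  have bad : 4 * (6*Y:ℝ)^s / (B.card:ℝ)^s ≤ 4 * 288^s / A := by
    rw [div_le_div_iff₀ (by positivity) hA0]
    have : A ≤ (6*Y:ℝ)^s := by rw [hA]; gcongr; norm_num
    calc _ ≤ 4 * (6*Y:ℝ)^s * (6*Y:ℝ)^s := by gcongr
      _ = 4 * ((6*Y:ℝ)^s)^2 := by ring
      _ ≤ 4 * (288^s * (B.card:ℝ)^s) := by gcongr
      _ = _ := by ring
  have hQ1 : (1:ℝ) ≤ 288^s := one_le_pow₀ (by norm_num)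
  have i3 : ∫ x in (0:ℝ)..1, ‖Phi B s h n x‖^2 ≤ 532 * 288^s / A := by
    calc _ ≤ 4 * 288^s / A + 528 / A := i2.trans (add_le_add bad g)
      _ ≤ 4 * 288^s / A + 528 * 288^s / A := by gcongr; linarith
      _ = _ := by ring
  have av := avgF S hY (3*s+4) (Phi_meas s h n) (Phi_le hB S.ne s h n) (Phi_contOn hB s hh n) (L := 2 * π * (n / ((2*Y:ℝ)^s)^4)) (by positivity)
    (fun x hx y hy => Phi_lip hB S.ne hY s hh hn0 hx hy)
  refine av.trans ?_
  rw [← hA]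
  have j1 : 4 * ((6*Y:ℝ)^(3*s+4))^2 / (B.card:ℝ)^(3*s+4) ≤ 4 * ((288^s)^3 * 288^4) := by
    rw [div_le_iff₀ (by positivity)]
    have : ((6*Y:ℝ)^(3*s+4))^2 ≤ 288^(3*s+4) * (B.card:ℝ)^(3*s+4) := by
      rw [← pow_mul, mul_comm _ 2, pow_mul, ← mul_pow]; gcongr
    calc _ ≤ 4 * (288^(3*s+4) * (B.card:ℝ)^(3*s+4)) := by gcongr
      _ = _ := by rw [pow_add 288, mul_comm 3 s, pow_mul 288]; ring
  have j2 : 2 * π * (n / A^4) / ((2*Y:ℝ)^(3*s+4))^2 ≤ 2 * π / A^2 := by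
    have : ((2*Y:ℝ)^(3*s+4))^2 = A^6 * (2*Y:ℝ)^8 := by rw [hA]; ring
    rw [this, div_le_div_iff₀ (by positivity) (by positivity)]
    have : n / A^4 ≤ A^4 * (2*Y:ℝ)^8 := by
      rw [div_le_iff₀ (by positivity)]; calc n ≤ _ := hn2
        _ = _ := by ring
    calc _ ≤ 2 * π * (A^4 * (2*Y:ℝ)^8) * A^2 := by gcongr
      _ = _ := by ring
  have j3 : 2 * (2 * π * (n / A^4) / ((2*Y:ℝ)^(3*s+4))^2)^2 ≤ 80 * (288^s)^4 / A := by
    have hpi : π^2 ≤ 10 := by nlinarith [Real.pi_lt_d2, Real.pi_pos]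
    calc _ ≤ 2 * (2 * π / A^2)^2 := by gcongr
      _ = 8 * π^2 / A^4 := by ring
      _ ≤ 8 * 10 / A^4 := by gcongr
      _ ≤ 80 * 1 / A := by
        norm_num
        gcongr
        exact le_self_pow₀ hA1 (by norm_num)
      _ ≤ _ := by gcongr; exact one_le_pow₀ hQ1
  calc _ ≤ 4 * ((288^s)^3 * 288^4) * (532 * 288^s / A) + 80 * (288^s)^4 / A := by
        have : 0 ≤ ∫ x in (0:ℝ)..1, ‖Phi B s h n x‖^2 := intervalIntegral.integral_nonneg zero_le_one (fun x _ => by positivity)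
        gcongr
    _ = _ := by ring

theorem decay (S : SS Y B ν) (hQ : (6*Y:ℝ)^2 ≤ 288 * B.card) (ha : (288:ℝ)^8 ≤ 2*Y) :
    ∃ D : ℝ, 0 ≤ D ∧ ∀ n : ℕ, 1 ≤ n → ‖∫ x, ee (n * x) ∂ν‖^32 * n ≤ D := by
  have := S.prob
  set C1 : ℝ := 2128*288^4+80 with hC1
  have hC10 : 0 < C1 := by rw [hC1]; positivity
  clear_value C1
  have ha1 : (1:ℝ) ≤ 2*Y := le_trans (by norm_num) ha
  refine ⟨(C1^16 + 1) * (2*Y:ℝ)^8, by positivity, ?_⟩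
  intro n hn
  have hle1 : ‖∫ x, ee (n * x) ∂ν‖ ≤ 1 := by
    have := norm_integral_le_of_norm_le_const (μ := ν) (f := fun x => ee (n * x)) (C := 1) (Eventually.of_forall (fun x => by rw [norm_ee]))
    rwa [probReal_univ, mul_one] at this
  have hlog := Nat.pow_log_le_self ((2*Y)^8) (x := n) (by omega)
  have hY2 : 2 ≤ 2 * Y := by
    have : (2:ℝ) ≤ 2*Y := le_trans (by norm_num) ha
    exact_mod_cast this
  have hlog2 := Nat.lt_pow_succ_log_self (b := (2*Y)^8) (Nat.one_lt_pow (by norm_num) (by omega)) n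
  set s := Nat.log ((2*Y)^8) n with hs
  rcases Nat.eq_zero_or_pos s with h0 | h0
  · rw [h0] at hlog2
    simp only [pow_one] at hlog2
    have : (n:ℝ) ≤ (2*Y:ℝ)^8 := by exact_mod_cast hlog2.le
    calc _ ≤ 1 * (2*Y:ℝ)^8 := by gcongr; exact pow_le_one₀ (norm_nonneg _) hle1
      _ ≤ _ := by gcongr; linarith [pow_pos hC10 16]
  set A := (2*Y:ℝ)^s with hA
  have hA1 : 1 ≤ A := one_le_pow₀ ha1
  have hA0 : 0 < A := by linarith
  have n1 : A^8 ≤ n := by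
    rw [hA, ← pow_mul, mul_comm s 8, pow_mul]; exact_mod_cast hlog
  have n2 : (n:ℝ) ≤ A^8 * (2*Y:ℝ)^8 := by
    have : (n:ℝ) ≤ ((2*Y:ℝ)^8)^(s+1) := by exact_mod_cast hlog2.le
    refine this.trans (le_of_eq ?_)
    rw [hA, ← mul_pow, ← pow_succ, ← pow_mul, ← pow_mul, mul_comm 8]
  have key : ‖∫ x, ee (n * x) ∂ν‖ ≤ √(C1 * (288^s)^4 / A) := by
    apply nuhat_le S s
    intro h hh
    apply Real.le_sqrt_of_sq_le
    rw [hC1]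
    exact phi_int S hQ ha h0 n1 n2 hh
  have hq : ((288:ℝ)^s)^8 ≤ A := by
    rw [← pow_mul, mul_comm, pow_mul, hA]; gcongr
  have k32 : ‖∫ x, ee (n * x) ∂ν‖^32 ≤ C1^16 / A^8 := by
    calc _ ≤ (√(C1 * (288^s)^4 / A))^32 := by gcongr
      _ = (C1 * (288^s)^4 / A)^16 := by
        rw [show 32 = 2 * 16 by norm_num, pow_mul, Real.sq_sqrt (by positivity)]
      _ = C1^16 * (((288:ℝ)^s)^8)^8 / A^16 := by ring
      _ ≤ C1^16 * A^8 / A^16 := by gcongr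
      _ = _ := by field_simp
  calc _ ≤ C1^16 / A^8 * (A^8 * (2*Y:ℝ)^8) := by gcongr
    _ = C1^16 * (2*Y:ℝ)^8 := by field_simp
    _ ≤ _ := by gcongr; linarith

end Mob
end

section
open Filter MeasureTheory Real

namespace Mob

theorem row_sum {ρ : ℝ} (h0 : 0 ≤ ρ) (h1 : ρ < 1) (T : Finset ℕ) (s : ℕ) :
    ∑ u ∈ T, ρ ^ (max s u - min s u) ≤ 2 * (1 - ρ)⁻¹ := by
  have key : ∀ (U : Finset ℕ) (f : ℕ → ℕ), Set.InjOn f U → ∑ u ∈ U, ρ ^ (f u) ≤ (1 - ρ)⁻¹ := by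
    intro U f hf
    rw [← Finset.sum_image (g := f) (f := fun k => ρ ^ k) hf, ← tsum_geometric_of_lt_one h0 h1]
    exact (summable_geometric_of_lt_one h0 h1).sum_le_tsum _ (fun i _ => by positivity)
  rw [← Finset.sum_filter_add_sum_filter_not T (fun u => u ≤ s), two_mul]
  apply add_le_add
  · apply key
    intro a ha b hb e
    have ha' := (Finset.mem_filter.1 (Finset.mem_coe.1 ha)).2
    have hb' := (Finset.mem_filter.1 (Finset.mem_coe.1 hb)).2
    simp only at e
    omega
  · apply key
    intro a ha b hb e
    have ha' := (Finset.mem_filter.1 (Finset.mem_coe.1 ha)).2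
    have hb' := (Finset.mem_filter.1 (Finset.mem_coe.1 hb)).2
    simp only at e
    omega

theorem lac_diff {n : ℕ → ℕ} (h0 : 1 ≤ n 0) (h : ∀ s, 2 * n s ≤ n (s+1)) (s : ℕ) : ∀ k, 2^k + n s ≤ n (s+k+1)
  | 0 => by
    have : ∀ s, 1 ≤ n s := by
      intro s; induction s with
      | zero => exact h0
      | succ s ih => have := h s; omega
    have := this s; have := h s
    rw [pow_zero, add_zero]; omega
  | k+1 => by
    have := lac_diff h0 h s k
    have := h (s+k+1)
    rw [pow_succ, show s+(k+1)+1 = s+k+1+1 by ring]; omega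

theorem sum_sq_int (ν : Measure ℝ) [IsProbabilityMeasure ν] {D : ℝ} (hD : 0 ≤ D) 
    (hdec : ∀ n : ℕ, 1 ≤ n → ‖∫ x, ee (n * x) ∂ν‖^32 * n ≤ D) :
    ∃ C : ℝ, 0 < C ∧ ∀ n : ℕ → ℕ, 1 ≤ n 0 → (∀ s, 2 * n s ≤ n (s+1)) → ∀ T : Finset ℕ, ∀ h : ℕ, 1 ≤ h → 
      ∫ x, ‖∑ s ∈ T, ee (h * (n s * x))‖^2 ∂ν ≤ C * T.card := by
  set ρ : ℝ := (1/2:ℝ)^((1:ℝ)/32) with hρ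
  have hρ0 : 0 < ρ := by positivity
  have hρ1 : ρ < 1 := Real.rpow_lt_one (by norm_num) (by norm_num) (by norm_num)
  have hρ32 : ρ^32 = 1/2 := by
    rw [hρ, ← Real.rpow_natCast, ← Real.rpow_mul (by norm_num)]; norm_num
  clear_value ρ
  set c : ℝ := (2*D)^((1:ℝ)/32) + 1 with hc
  have hc1 : 1 ≤ c := by have : 0 ≤ (2*D)^((1:ℝ)/32) := by positivity
                         linarith
  have hc32 : 2*D ≤ c^32 := by
    calc 2*D = ((2*D)^((1:ℝ)/32))^32 := by
          rw [← Real.rpow_natCast, ← Real.rpow_mul (by positivity)]; norm_num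
      _ ≤ _ := by gcongr; linarith
  clear_value c
  have hρ' : 0 < (1 - ρ)⁻¹ := inv_pos.2 (by linarith)
  refine ⟨c * (2 * (1-ρ)⁻¹), by positivity, ?_⟩
  intro n h0 hn T h hh
  -- bound for differences
  have dec2 : ∀ k : ℕ, ∀ j : ℕ, 2^j ≤ k → ‖∫ x, ee (k * x) ∂ν‖ ≤ c * ρ^(j+1) := by
    intro k j hjk
    have hk := hdec k (le_trans (Nat.one_le_two_pow) hjk)
    have hk2 : (2:ℝ)^j ≤ k := by exact_mod_cast hjk
    apply le_of_pow_le_pow_left₀ (n := 32) (by norm_num) (by positivity)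
    rw [mul_pow, ← pow_mul, mul_comm (j+1), pow_mul, hρ32]
    have h1 : ‖∫ x, ee (k * x) ∂ν‖^32 * 2^j ≤ D := le_trans (by gcongr) hk
    have h2 : ‖∫ x, ee (k * x) ∂ν‖^32 = (‖∫ x, ee (k * x) ∂ν‖^32 * 2^j) * (1/2)^j := by
      rw [mul_assoc, ← mul_pow]; norm_num
    rw [h2]
    calc _ ≤ D * (1/2)^j := by gcongr
      _ = 2 * D * (1/2)^(j+1) := by rw [pow_succ]; ring
      _ ≤ _ := by gcongr
  have pos : ∀ s u, u < s → ‖∫ x, ee (h * (n s * x) - h * (n u * x)) ∂ν‖ ≤ c * ρ^(s - u) := by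
    intro s u hus
    obtain ⟨k, rfl⟩ := Nat.exists_eq_add_of_lt hus
    have hl := lac_diff h0 hn u k
    have hl0 : n u ≤ n (u+k+1) := le_trans (Nat.le_add_left _ _) hl
    have e : ∀ x:ℝ, h * (n (u+k+1) * x) - h * (n u * x) = ((h * (n (u+k+1) - n u) : ℕ) : ℝ) * x := by
      intro x; rw [Nat.cast_mul, Nat.cast_sub hl0]; ring
    simp_rw [e]
    rw [show u+k+1-u = k+1 by omega]
    apply dec2
    calc 2^k ≤ n (u+k+1) - n u := by omega
      _ ≤ _ := Nat.le_mul_of_pos_left _ hh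
  have pair : ∀ s u, ‖∫ x, ee (h * (n s * x) - h * (n u * x)) ∂ν‖ ≤ c * ρ^(max s u - min s u) := by
    intro s u
    rcases lt_trichotomy s u with hsu | hsu | hsu
    · have := pos u s hsu
      rw [max_eq_right hsu.le, min_eq_left hsu.le]
      refine le_trans (le_of_eq ?_) this
      rw [← RCLike.norm_conj, ← integral_conj]
      simp_rw [ee_conj, neg_sub]
    · subst hsu
      simp only [sub_self, ee_zero]
      simp; exact hc1
    · have := pos s u hsu
      rwa [max_eq_left hsu.le, min_eq_right hsu.le]
  have hint : ∀ s u, Integrable (fun x : ℝ => ee (h * (n s * x) - h * (n u * x))) ν := by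
    intro s u
    apply Integrable.of_bound (C := 1)
    · exact (ee_cont.comp (by fun_prop)).measurable.aestronglyMeasurable
    · exact Eventually.of_forall (fun x => by rw [norm_ee])
  have e1 : ∀ x : ℝ, ((‖∑ s ∈ T, ee (h * (n s * x))‖^2 : ℝ) : ℂ) = ∑ s ∈ T, ∑ u ∈ T, ee (h * (n s * x) - h * (n u * x)) := by
    intro x
    rw [← Complex.normSq_eq_norm_sq, ← Complex.mul_conj, map_sum, Finset.sum_mul_sum]
    apply Finset.sum_congr rfl; intro G1 _
    apply Finset.sum_congr rfl; intro G2 _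
    rw [← ee_sub]
  have e2 : ((∫ x, ‖∑ s ∈ T, ee (h * (n s * x))‖^2 ∂ν : ℝ) : ℂ) = ∑ s ∈ T, ∑ u ∈ T, ∫ x, ee (h * (n s * x) - h * (n u * x)) ∂ν := by
    rw [← integral_complex_ofReal]
    simp_rw [e1]
    rw [integral_finsetSum]
    · apply Finset.sum_congr rfl; intro s _
      rw [integral_finsetSum]
      intro u _; exact hint s u
    · intro s _
      exact integrable_finsetSum _ (fun u _ => hint s u)
  have e3 : ∫ x, ‖∑ s ∈ T, ee (h * (n s * x))‖^2 ∂ν = ‖((∫ x, ‖∑ s ∈ T, ee (h * (n s * x))‖^2 ∂ν : ℝ) : ℂ)‖ := by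
    rw [Complex.norm_real, Real.norm_of_nonneg (integral_nonneg (fun x => by positivity))]
  rw [e3, e2]
  calc _ ≤ ∑ s ∈ T, c * (2 * (1-ρ)⁻¹) := by
        apply norm_sum_le_of_le
        intro s _
        refine (norm_sum_le_of_le _ (fun u _ => pair s u)).trans ?_
        rw [← Finset.mul_sum]
        gcongr
        exact row_sum hρ0.le hρ1 T s
    _ = _ := by rw [Finset.sum_const, nsmul_eq_mul]; ring

end Mob
end

section
open Filter MeasureTheory Real

namespace Mob

theorem row_sum2 (V : ℕ → ℝ) (hV : ∀ k, 0 ≤ V k) (N s : ℕ) (hs : s < N) :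
    ∑ u ∈ (Finset.range N).filter (fun u => u ≠ s), V (max s u - min s u) ≤ 2 * ∑ k ∈ Finset.Icc 1 N, V k := by
  have key : ∀ (U : Finset ℕ) (f : ℕ → ℕ), Set.InjOn f U → (∀ u ∈ U, f u ∈ Finset.Icc 1 N) → ∑ u ∈ U, V (f u) ≤ ∑ k ∈ Finset.Icc 1 N, V k := by
    intro U f hf hm
    rw [← Finset.sum_image (g := f) (f := V) hf]
    apply Finset.sum_le_sum_of_subset_of_nonneg
    · intro k hk
      obtain ⟨u, hu, rfl⟩ := Finset.mem_image.1 hk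
      exact hm u hu
    · intro i _ _; exact hV i
  rw [← Finset.sum_filter_add_sum_filter_not _ (fun u => u ≤ s), two_mul]
  apply add_le_add
  · apply key
    · intro a ha b hb e
      have ha' := (Finset.mem_filter.1 (Finset.mem_coe.1 ha)).2
      have hb' := (Finset.mem_filter.1 (Finset.mem_coe.1 hb)).2
      simp only at e
      omega
    · intro u hu
      simp only [Finset.mem_filter, Finset.mem_range, Finset.mem_Icc] at hu ⊢
      omega
  · apply key
    · intro a ha b hb e
      have ha' := (Finset.mem_filter.1 (Finset.mem_coe.1 ha)).2
      have hb' := (Finset.mem_filter.1 (Finset.mem_coe.1 hb)).2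
      simp only at e
      omega
    · intro u hu
      simp only [Finset.mem_filter, Finset.mem_range, Finset.mem_Icc] at hu ⊢
      omega

theorem quad {ι : Type*} (T : Finset ι) (x : ι → ℝ) (N : ℕ) (c : ℕ → ℝ) {m : ℝ} (hm : 0 ≤ m) (hc : ∀ j, |c j| ≤ m) :
    |∑ s ∈ T, ‖∑ j ∈ Finset.range N, (c j : ℂ) * ee (j * x s)‖^2 - T.card * ∑ j ∈ Finset.range N, c j ^2| 
      ≤ m^2 * (N * (2 * ∑ k ∈ Finset.Icc 1 N, ‖∑ s ∈ T, ee (k * x s)‖)) := by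
  set V : ℕ → ℝ := fun k => ‖∑ s ∈ T, ee (k * x s)‖ with hV
  have hU : ∀ i j : ℕ, ‖∑ s ∈ T, ee (i * x s - j * x s)‖ = V (max i j - min i j) := by
    have p : ∀ i j : ℕ, j ≤ i → ‖∑ s ∈ T, ee (i * x s - j * x s)‖ = V (i - j) := by
      intro i j hij
      simp only [hV]
      congr 1
      apply Finset.sum_congr rfl
      intro s _
      rw [Nat.cast_sub hij]; ring_nf
    intro i j
    rcases le_total j i with h | h
    · rw [p i j h, max_eq_left h, min_eq_right h]
    · rw [max_eq_right h, min_eq_left h, ← p j i h, ← RCLike.norm_conj, map_sum]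
      simp_rw [ee_conj, neg_sub]
  have e1 : ((∑ s ∈ T, ‖∑ j ∈ Finset.range N, (c j : ℂ) * ee (j * x s)‖^2 : ℝ) : ℂ) = ∑ i ∈ Finset.range N, ∑ j ∈ Finset.range N, (c i : ℂ) * c j * ∑ s ∈ T, ee (i * x s - j * x s) := by
    push_cast
    simp_rw [Finset.mul_sum]
    simp_rw [Finset.sum_comm (t := T)]
    apply Finset.sum_congr rfl
    intro s _
    rw [← Complex.ofReal_pow, ← Complex.normSq_eq_norm_sq, ← Complex.mul_conj, map_sum, Finset.sum_mul_sum]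
    apply Finset.sum_congr rfl; intro i _
    apply Finset.sum_congr rfl; intro j _
    rw [map_mul, Complex.conj_ofReal, ee_sub]; ring
  have e2 : ∀ i ∈ Finset.range N, ∑ j ∈ Finset.range N, (c i : ℂ) * c j * ∑ s ∈ T, ee (i * x s - j * x s) = (T.card : ℂ) * (c i : ℂ)^2 + ∑ j ∈ (Finset.range N).filter (fun u => u ≠ i), (c i : ℂ) * c j * ∑ s ∈ T, ee (i * x s - j * x s) := by
    intro i hi
    rw [← Finset.sum_filter_add_sum_filter_not _ (fun u => u = i), Finset.filter_eq' , if_pos hi, Finset.sum_singleton]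
    congr 1
    simp only [sub_self, ee_zero, Finset.sum_const, nsmul_eq_mul, mul_one]
    ring
  have e3 : ((∑ s ∈ T, ‖∑ j ∈ Finset.range N, (c j : ℂ) * ee (j * x s)‖^2 - T.card * ∑ j ∈ Finset.range N, c j ^2 : ℝ) : ℂ) = ∑ i ∈ Finset.range N, ∑ j ∈ (Finset.range N).filter (fun u => u ≠ i), (c i : ℂ) * c j * ∑ s ∈ T, ee (i * x s - j * x s) := by
    rw [Complex.ofReal_sub, e1, Finset.sum_congr rfl e2, Finset.sum_add_distrib, ← Finset.mul_sum]
    push_cast; ring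
  rw [← Real.norm_eq_abs, ← Complex.norm_real, e3]
  calc _ ≤ ∑ i ∈ Finset.range N, m^2 * (2 * ∑ k ∈ Finset.Icc 1 N, V k) := by
        apply norm_sum_le_of_le
        intro i hi
        have := row_sum2 V (fun k => norm_nonneg _) N i (Finset.mem_range.1 hi)
        refine le_trans ?_ (mul_le_mul_of_nonneg_left this (sq_nonneg m))
        rw [Finset.mul_sum]
        apply norm_sum_le_of_le
        intro j _
        rw [norm_mul, hU, norm_mul, Complex.norm_real, Complex.norm_real, sq]
        have := hc i; have := hc j
        have : 0 ≤ V (max i j - min i j) := norm_nonneg _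
        rw [Real.norm_eq_abs, Real.norm_eq_abs]
        gcongr
    _ = _ := by rw [Finset.sum_const, Finset.card_range, nsmul_eq_mul]; ring

theorem ee_dni (x : ℝ) : 4 * dni x ≤ ‖1 - ee x‖ := by
  have h1 : ee x = ee (x - round x) := by
    have : ee x = ee (x - round x) * ee ((round x : ℤ) : ℝ) := by rw [← ee_add]; congr 1; ring
    rw [this, ee_int, mul_one]
  have h2 := abs_sub_round x
  unfold dni
  rw [h1]
  set y := x - round x with hy
  rw [norm_sub_rev, ee_eq, mul_comm ((_:ℝ):ℂ) Complex.I, Complex.norm_exp_I_mul_ofReal_sub_one]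
  rw [Real.norm_eq_abs, abs_mul, abs_of_pos (by norm_num : (0:ℝ) < 2)]
  have e : |Real.sin (2 * π * y / 2)| = Real.sin (π * |y|) := by
    have : 2 * π * y / 2 = π * y := by ring
    rw [this]
    rcases le_total 0 y with h | h
    · rw [abs_of_nonneg h, abs_of_nonneg]
      rw [abs_of_nonneg h] at h2
      apply Real.sin_nonneg_of_nonneg_of_le_pi
      · positivity
      · nlinarith [Real.pi_pos]
    · rw [abs_of_nonpos h, mul_neg, Real.sin_neg, abs_of_nonpos]
      rw [abs_of_nonpos h] at h2
      apply Real.sin_nonpos_of_nonpos_of_neg_pi_le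
      · nlinarith [Real.pi_pos]
      · nlinarith [Real.pi_pos]
  rw [e]
  have := Real.mul_le_sin (x := π * |y|) (by positivity) (by nlinarith [Real.pi_pos])
  have e2 : 2 / π * (π * |y|) = 2 * |y| := by field_simp
  rw [e2] at this
  linarith

/-- tent -/
def tent (M j : ℕ) : ℕ := min j (2*M - j)

theorem tent_sq (M : ℕ) : (M:ℝ)^3 / 3 ≤ ∑ j ∈ Finset.range (2*M+1), ((tent M j : ℕ) : ℝ)^2 := by
  have h1 : ∀ M : ℕ, (M:ℝ)^3/3 ≤ ∑ j ∈ Finset.range (M+1), ((j:ℕ):ℝ)^2 := by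
    intro M
    induction M with
    | zero => simp
    | succ M ih =>
      rw [Finset.sum_range_succ]
      push_cast at ih ⊢
      nlinarith [(Nat.cast_nonneg M : (0:ℝ) ≤ M)]
  refine (h1 M).trans ?_
  calc _ = ∑ j ∈ Finset.range (M+1), ((tent M j : ℕ) : ℝ)^2 := by
        apply Finset.sum_congr rfl
        intro j hj
        have : tent M j = j := by
          unfold tent
          have := Finset.mem_range.1 hj; omega
        rw [this]
    _ ≤ _ := by
      apply Finset.sum_le_sum_of_subset_of_nonneg
      · intro j hj
        simp only [Finset.mem_range] at hj ⊢; omega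
      · intros; positivity

theorem unhit {ι : Type*} (T : Finset ι) (x : ι → ℝ) {M : ℕ} (hM : 1 ≤ M) (hx : ∀ s ∈ T, 2 / (M:ℝ) ≤ dni (x s)) :
    (T.card:ℝ) ≤ 38 * ∑ k ∈ Finset.Icc 1 (2*M+1), ‖∑ s ∈ T, ee (k * x s)‖ := by
  have hM0 : (0:ℝ) < M := by exact_mod_cast hM
  set N := 2*M+1 with hN
  set a : ℕ → ℝ := fun j => ((tent M j : ℕ) : ℝ) with ha
  set b : ℕ → ℝ := fun j => a j - a (j-1) with hb
  set SS0 := ∑ k ∈ Finset.Icc 1 N, ‖∑ s ∈ T, ee (k * x s)‖ with hSS0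
  have hS0 : 0 ≤ SS0 := Finset.sum_nonneg (fun _ _ => norm_nonneg _)
  have ha0 : a 0 = 0 := by simp [ha, tent]
  have haM : ∀ j, |a j| ≤ M := by
    intro j
    rw [abs_of_nonneg (by positivity)]
    simp only [ha]
    have : tent M j ≤ M := by unfold tent; omega
    exact_mod_cast this
  have hb1 : ∀ j, |b j| ≤ 1 := by
    intro j
    simp only [hb, ha]
    have h1 : tent M j ≤ tent M (j-1) + 1 := by unfold tent; omega
    have h2 : tent M (j-1) ≤ tent M j + 1 := by unfold tent; omega
    have h1' : (tent M j : ℝ) ≤ tent M (j-1) + 1 := by exact_mod_cast h1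
    have h2' : (tent M (j-1) : ℝ) ≤ tent M j + 1 := by exact_mod_cast h2
    rw [abs_le]; constructor <;> linarith
  have tele : ∀ y : ℝ, ∀ n : ℕ, ∑ j ∈ Finset.range (n+1), (b j : ℂ) * ee (j * y) = (1 - ee y) * (∑ j ∈ Finset.range (n+1), (a j : ℂ) * ee (j * y)) + a n * ee ((n+1:ℕ) * y) := by
    intro y n
    induction n with
    | zero => simp [hb, ha0]
    | succ n ih =>
      rw [Finset.sum_range_succ, ih, Finset.sum_range_succ _ (n+1)]
      have e : ee (((n+1+1:ℕ):ℝ) * y) = ee ((n+1:ℕ)*y) * ee y := by rw [← ee_add]; congr 1; push_cast; ring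
      rw [e]
      have : (b (n+1) : ℂ) = a (n+1) - a n := by simp [hb]
      rw [this]; ring
  have haN : a (2*M) = 0 := by simp [ha, tent]
  have per : ∀ s ∈ T, 18/(M:ℝ)^2 * ‖∑ j ∈ Finset.range N, (a j : ℂ) * ee (j * x s)‖^2 ≤ ‖∑ j ∈ Finset.range N, (b j : ℂ) * ee (j * x s)‖^2 := by
    intro s hs
    rw [hN, tele, haN, Complex.ofReal_zero, zero_mul, add_zero, norm_mul, mul_pow]
    gcongr
    have h1 := ee_dni (x s)
    have h2 := hx s hs
    have h3 : 8 / (M:ℝ) ≤ ‖1 - ee (x s)‖ := by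
      have : 8 / (M:ℝ) = 4 * (2/M) := by ring
      linarith
    calc 18/(M:ℝ)^2 ≤ 64 / (M:ℝ)^2 := by gcongr; norm_num
      _ = (8/(M:ℝ))^2 := by ring
      _ ≤ _ := by gcongr
  have tot := Finset.sum_le_sum per
  rw [← Finset.mul_sum] at tot
  have qa := (abs_le.1 (quad T x N a hM0.le haM)).1
  have qb := (abs_le.1 (quad T x N b zero_le_one hb1)).2
  rw [← hSS0] at qa qb
  have hbs : ∑ j ∈ Finset.range N, b j^2 ≤ N := by
    calc _ ≤ ∑ j ∈ Finset.range N, (1:ℝ) := by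
          apply Finset.sum_le_sum; intro j _
          rw [← sq_abs]; exact pow_le_one₀ (abs_nonneg _) (hb1 j)
      _ = _ := by simp
  have has := tent_sq M
  set Qa := ∑ s ∈ T, ‖∑ j ∈ Finset.range N, (a j : ℂ) * ee (j * x s)‖^2
  set Qb := ∑ s ∈ T, ‖∑ j ∈ Finset.range N, (b j : ℂ) * ee (j * x s)‖^2
  have hNr : (N:ℝ) = 2*M+1 := by rw [hN]; push_cast; ring
  have hM1 : (1:ℝ) ≤ M := by exact_mod_cast hM
  have h1 : (T.card:ℝ) * ((M:ℝ)^3/3) - (M:ℝ)^2 * (N * (2 * SS0)) ≤ Qa := by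
    have : (T.card:ℝ) * ((M:ℝ)^3/3) ≤ T.card * ∑ j ∈ Finset.range N, a j^2 := by gcongr
    linarith
  have h2 : Qb ≤ T.card * N + N * (2 * SS0) := by
    have : (T.card:ℝ) * ∑ j ∈ Finset.range N, b j^2 ≤ T.card * N := by gcongr
    linarith
  have h3 : (T.card:ℝ) * (6*M) - 18 * (N * (2 * SS0)) ≤ 18/(M:ℝ)^2 * Qa := by
    calc _ = 18/(M:ℝ)^2 * ((T.card:ℝ) * ((M:ℝ)^3/3) - (M:ℝ)^2 * (N * (2 * SS0))) := by field_simp; ring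
      _ ≤ _ := by gcongr
  have h4 : (T.card:ℝ) * N ≤ 38 * SS0 * N := by
    have : (T.card:ℝ) * (2 * N) ≤ T.card * (6*M) := mul_le_mul_of_nonneg_left (by rw [hNr]; linarith) (Nat.cast_nonneg _)
    linarith
  exact le_of_mul_le_mul_right h4 (by rw [hNr]; linarith)

theorem prob_bound (ν : Measure ℝ) [IsProbabilityMeasure ν] {C : ℝ} {n : ℕ → ℕ} {T : Finset ℕ} (hT : T.card ≠ 0)
    (hC : ∀ h : ℕ, 1 ≤ h → ∫ x, ‖∑ s ∈ T, ee (h * (n s * x))‖^2 ∂ν ≤ C * T.card) {M : ℕ} (hM : 1 ≤ M) :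
    ν {β | ∃ δ, ∀ s ∈ T, 2/(M:ℝ) ≤ dni (n s * β - δ)} ≤ ENNReal.ofReal (38^2 * C * (2*M+1)^2 / T.card) := by
  set f : ℝ → ℝ := fun β => ∑ k ∈ Finset.Icc 1 (2*M+1), ‖∑ s ∈ T, ee (k * (n s * β))‖^2 with hf
  have hcont : ∀ k : ℕ, Continuous (fun β : ℝ => ‖∑ s ∈ T, ee (k * (n s * β))‖^2) := by
    intro k
    apply Continuous.pow
    apply Continuous.norm
    apply continuous_finsetSum
    intro s _
    exact ee_cont.comp (by fun_prop)
  have hint : ∀ k : ℕ, Integrable (fun β : ℝ => ‖∑ s ∈ T, ee (k * (n s * β))‖^2) ν := by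
    intro k
    apply Integrable.of_bound (C := (T.card:ℝ)^2) (hcont k).measurable.aestronglyMeasurable
    refine Eventually.of_forall (fun x => ?_)
    rw [norm_pow, norm_norm]
    gcongr
    have := norm_sum_le_of_le T (f := fun s => ee (k * (n s * x))) (n := fun _ => (1:ℝ)) (fun s _ => by rw [norm_ee])
    simpa using this
  have hcd : (0:ℝ) < T.card := by positivity
  have hsub : {β | ∃ δ, ∀ s ∈ T, 2/(M:ℝ) ≤ dni (n s * β - δ)} ⊆ {β | (T.card:ℝ)^2 / (38^2 * (2*M+1)) ≤ f β} := by
    rintro β ⟨δ, h⟩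
    have u := unhit T (fun s => n s * β - δ) hM h
    have e : ∀ k : ℕ, ‖∑ s ∈ T, ee (k * (n s * β - δ))‖ = ‖∑ s ∈ T, ee (k * (n s * β))‖ := by
      intro k
      have : ∀ s ∈ T, ee (k * (n s * β - δ)) = ee (k * (n s * β)) * ee (- (k*δ)) := by
        intro s _; rw [← ee_add]; congr 1; ring
      rw [Finset.sum_congr rfl this, ← Finset.sum_mul, norm_mul, norm_ee, mul_one]
    simp_rw [e] at u
    show _ ≤ f β
    rw [div_le_iff₀ (by positivity)]
    calc (T.card:ℝ)^2 ≤ (38 * ∑ k ∈ Finset.Icc 1 (2*M+1), ‖∑ s ∈ T, ee (k * (n s * β))‖)^2 := by gcongr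
      _ = 38^2 * (∑ k ∈ Finset.Icc 1 (2*M+1), ‖∑ s ∈ T, ee (k * (n s * β))‖)^2 := by ring
      _ ≤ 38^2 * ((Finset.Icc 1 (2*M+1)).card * f β) := by gcongr; exact sq_sum_le_card_mul_sum_sq
      _ = _ := by rw [Nat.card_Icc]; push_cast; ring
  refine (measure_mono hsub).trans ?_
  have hfi : Integrable f ν := integrable_finsetSum _ (fun k _ => hint k)
  have mk := mul_meas_ge_le_integral_of_nonneg (μ := ν) (f := f) (Eventually.of_forall (fun x => Finset.sum_nonneg (fun k _ => by positivity))) hfi ((T.card:ℝ)^2 / (38^2 * (2*M+1)))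
  have hI : ∫ x, f x ∂ν ≤ (2*M+1) * (C * T.card) := by
    rw [hf, integral_finsetSum _ (fun k _ => hint k)]
    calc _ ≤ ∑ k ∈ Finset.Icc 1 (2*M+1), C * T.card := by
          apply Finset.sum_le_sum
          intro k hk
          exact hC k (Finset.mem_Icc.1 hk).1
      _ = _ := by rw [Finset.sum_const, Nat.card_Icc, nsmul_eq_mul]; push_cast; ring
  rw [← ofReal_measureReal]
  apply ENNReal.ofReal_le_ofReal
  have mk2 := mk.trans hI
  rw [le_div_iff₀ hcd]
  rw [div_mul_eq_mul_div, div_le_iff₀ (by positivity)] at mk2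
  apply le_of_mul_le_mul_right (a := (T.card:ℝ)) _ hcd
  linarith

end Mob
end

section
open Filter MeasureTheory Real

namespace Mob

theorem dni_le (x : ℝ) (k : ℤ) : dni x ≤ |x - k| := round_le x k

theorem mink_step {a : ℝ} {q : ℕ} (hq : 1 ≤ q) {p : ℤ} (hpq : IsCoprime p (q:ℤ))
    (h : |a - p / q| ≤ 1 / (q:ℝ)^2) (g : ℝ) :
    ∃ n : ℕ, q ≤ n ∧ n < 2 * q ∧ (n:ℝ) * dni (n * a - g) ≤ 5 := by
  obtain ⟨u, v, huv⟩ := hpq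
  set k : ℤ := round ((q:ℝ) * g) with hk
  have hqz : (0:ℤ) < q := by exact_mod_cast hq
  have hm0 := Int.emod_nonneg (u * k) hqz.ne'
  have hm1 := Int.emod_lt_of_pos (u * k) hqz
  have hm2 := Int.emod_add_mul_ediv (u*k) q
  obtain ⟨m, hm⟩ := Int.eq_ofNat_of_zero_le hm0
  rw [hm] at hm1 hm2
  have hmq : m < q := by exact_mod_cast hm1
  refine ⟨q + m, by omega, by omega, ?_⟩
  set d := (u * k) / (q:ℤ)
  have key : ((q + m : ℕ):ℤ) * p - k = q * (p - d * p - k * v) := by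
    push_cast
    linear_combination p * hm2 + k * huv
  have hq0 : (0:ℝ) < q := by exact_mod_cast hq
  have keyR : (((q + m : ℕ):ℝ)) * p - k = q * ((p - d * p - k * v : ℤ):ℝ) := by exact_mod_cast key
  set j : ℤ := p - d * p - k * v
  set n : ℕ := q + m with hn
  have hn2 : (n:ℝ) ≤ 2 * q := by
    have : n ≤ 2 * q := by omega
    exact_mod_cast this
  have e : n * a - g - j = n * (a - p / q) + (k - q * g) / q := by
    have : (j:ℝ) = (n * p - k) / q := by rw [keyR]; field_simp
    rw [this]; field_simp; ring
  have h1 : |(n:ℝ) * (a - p/q)| ≤ 2 / q := by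
    rw [abs_mul, abs_of_nonneg (Nat.cast_nonneg n)]
    calc (n:ℝ) * |a - p/q| ≤ 2 * q * (1/(q:ℝ)^2) := by gcongr
      _ = 2 / q := by field_simp
  have h2 : |((k:ℝ) - q * g) / q| ≤ (1/2) / q := by
    rw [abs_div, abs_of_pos hq0]
    gcongr
    rw [abs_sub_comm]
    exact abs_sub_round _
  have h3 : dni (n * a - g) ≤ (5/2) / q := by
    calc dni (n * a - g) ≤ |n * a - g - j| := dni_le _ _
      _ ≤ 2 / q + (1/2)/q := by rw [e]; exact (abs_add_le _ _).trans (add_le_add h1 h2)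
      _ = _ := by ring
  calc (n:ℝ) * dni (n * a - g) ≤ 2 * q * ((5/2)/q) := by
        apply mul_le_mul hn2 h3 (abs_nonneg _) (by positivity)
    _ = 5 := by field_simp

theorem cf_seq {a : ℝ} (ha : Irrational a) :
    ∀ t : ℕ, ∃ (p p' : ℤ) (q q' : ℕ), (GenContFract.of a).dens t = q ∧ (GenContFract.of a).dens (t+1) = q' ∧
      (GenContFract.of a).nums t = p ∧ (GenContFract.of a).nums (t+1) = p' ∧ 1 ≤ q ∧ q ≤ q' ∧
      (p' * q - p * q')^2 = 1 := by
  have hnt : ∀ t, ¬ (GenContFract.of a).TerminatedAt t := by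
    intro t ht
    have : (GenContFract.of a).Terminates := ⟨t, ht⟩
    obtain ⟨q, hq⟩ := (GenContFract.terminates_iff_rat a).1 this
    exact ha ⟨q, hq.symm⟩
  have hgp : ∀ t, ∃ (gp : GenContFract.Pair ℝ) (z : ℕ), (GenContFract.of a).s.get? t = some gp ∧ gp.a = 1 ∧ gp.b = z ∧ 1 ≤ z := by
    intro t
    obtain ⟨gp, hgp⟩ := Option.ne_none_iff_exists'.1 (hnt t)
    obtain ⟨h1, z, hz⟩ := GenContFract.of_partNum_eq_one_and_exists_int_partDen_eq hgp
    have h2 := GenContFract.of_one_le_get?_partDen (GenContFract.partDen_eq_s_b hgp)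
    rw [hz] at h2
    have h3 : 1 ≤ z := by exact_mod_cast h2
    obtain ⟨w, rfl⟩ := Int.eq_ofNat_of_zero_le (by linarith : (0:ℤ) ≤ z)
    exact ⟨gp, w, hgp, h1, by simpa using hz, by exact_mod_cast h3⟩
  intro t
  induction t with
  | zero =>
    obtain ⟨gp, z, h1, h2, h3, h4⟩ := hgp 0
    refine ⟨⌊a⌋, z * ⌊a⌋ + 1, 1, z, ?_, ?_, ?_, ?_, le_rfl, h4, ?_⟩
    · simp [GenContFract.zeroth_den_eq_one]
    · rw [GenContFract.first_den_eq h1, h3]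
    · rw [GenContFract.zeroth_num_eq_h, GenContFract.of_h_eq_floor]
    · rw [GenContFract.first_num_eq h1, GenContFract.of_h_eq_floor, h2, h3]; push_cast; ring
    · push_cast; ring
  | succ t ih =>
    obtain ⟨p, p', q, q', d, d', e, e', hq, hqq, hdet⟩ := ih
    obtain ⟨gp, z, h1, h2, h3, h4⟩ := hgp (t+1)
    refine ⟨p', z * p' + p, q', z * q' + q, d', ?_, e', ?_, by omega, by nlinarith, ?_⟩
    · rw [GenContFract.dens_recurrence h1 d d', h2, h3]; push_cast; ring
    · rw [GenContFract.nums_recurrence h1 e e', h2, h3]; push_cast; ring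
    · push_cast; rw [← hdet]; ring

theorem cf_props {a : ℝ} (ha : Irrational a) :
    ∃ (q : ℕ → ℕ) (p : ℕ → ℤ), (∀ t, (GenContFract.of a).dens t = q t) ∧ (∀ t, 1 ≤ q t) ∧
      (∀ t, q t ≤ q (t+1)) ∧ (∀ t, 2 * q t ≤ q (t+2)) ∧ (∀ t, IsCoprime (p t) (q t : ℤ)) ∧
      ∀ t, |a - p t / q t| ≤ 1 / (q t : ℝ)^2 := by
  have hnt : ∀ t, ¬ (GenContFract.of a).TerminatedAt t := by
    intro t ht
    have : (GenContFract.of a).Terminates := ⟨t, ht⟩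
    obtain ⟨q, hq⟩ := (GenContFract.terminates_iff_rat a).1 this
    exact ha ⟨q, hq.symm⟩
  choose p p' q q' d d' e e' hq hqq hdet using cf_seq ha
  have hqs : ∀ t, q' t = q (t+1) := by
    intro t
    have := d (t+1)
    rw [d' t] at this
    exact_mod_cast this
  have hps : ∀ t, p' t = p (t+1) := by
    intro t
    have := e (t+1)
    rw [e' t] at this
    exact_mod_cast this
  refine ⟨q, p, d, hq, fun t => by rw [← hqs]; exact hqq t, ?_, ?_, ?_⟩
  · intro t
    obtain ⟨gp, hgp⟩ := Option.ne_none_iff_exists'.1 (hnt (t+1))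
    have h1 := (GenContFract.of_partNum_eq_one_and_exists_int_partDen_eq hgp).1
    have h2 := GenContFract.of_one_le_get?_partDen (GenContFract.partDen_eq_s_b hgp)
    have h3 := GenContFract.dens_recurrence hgp (d t) (d (t+1))
    rw [d (t+2), h1] at h3
    have h4 : q t ≤ q (t+1) := by rw [← hqs]; exact hqq t
    have h5 : (q t : ℝ) ≤ q (t+1) := by exact_mod_cast h4
    have h6 : (0:ℝ) ≤ q (t+1) := Nat.cast_nonneg _
    have : (2:ℝ) * q t ≤ q (t+2) := by rw [h3]; nlinarith
    exact_mod_cast this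
  · intro t
    have h := hdet t
    rcases sq_eq_one_iff.1 h with h | h
    · exact ⟨- q' t, p' t, by linear_combination h⟩
    · exact ⟨q' t, - p' t, by linear_combination -h⟩
  · intro t
    have h := GenContFract.abs_sub_convs_le (hnt t)
    rw [GenContFract.conv_eq_num_div_den, e, d, d] at h
    refine h.trans ?_
    have h4 : q t ≤ q (t+1) := by rw [← hqs]; exact hqq t
    have h5 : (q t : ℝ) ≤ q (t+1) := by exact_mod_cast h4
    have h6 : (0:ℝ) < q t := by exact_mod_cast hq t
    rw [sq]
    gcongr

theorem mink_seq {a : ℝ} (ha : a ∈ KSet) (g : ℝ) :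
    ∃ (n : ℕ → ℕ) (C : ℝ), 1 ≤ C ∧ 1 ≤ n 0 ∧ (∀ s, 2 * n s ≤ n (s+1)) ∧
      (∀ s, (n s : ℝ) * dni (n s * a - g) ≤ 5) ∧ ∀ s, Real.log (n s) ≤ C * (s + 1) := by
  obtain ⟨hirr, C, hC⟩ := ha
  obtain ⟨q, p, hd, hq, hmono, h2, hcop, happ⟩ := cf_props hirr
  choose n hn1 hn2 hn3 using fun s => mink_step (hq (4*s)) (hcop (4*s)) (happ (4*s)) g
  refine ⟨n, 4 * |C| + 1 + Real.log (q 0), ?_, ?_, ?_, hn3, ?_⟩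
  · have := Real.log_natCast_nonneg (q 0)
    have := abs_nonneg C
    linarith
  · exact (hq _).trans (hn1 0)
  · intro s
    have e1 := h2 (4*s)
    have e2 := h2 (4*s+2)
    have e3 := hn1 (s+1)
    have e4 := hn2 s
    have : 4 * (s+1) = 4*s+2+2 := by ring
    rw [this] at e3
    omega
  · intro s
    have hqpos : (0:ℝ) < q (4*s) := by exact_mod_cast hq _
    have hnpos : (0:ℝ) < n s := by
      have : 0 < n s := lt_of_lt_of_le (hq (4*s)) (hn1 s)
      exact_mod_cast this
    have hle : (n s : ℝ) ≤ 2 * q (4*s) := by exact_mod_cast (hn2 s).le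
    have h1 : Real.log (n s) ≤ Real.log 2 + Real.log (q (4*s)) := by
      rw [← Real.log_mul (by norm_num) hqpos.ne']
      exact Real.log_le_log hnpos hle
    have hl2 : Real.log 2 ≤ 1 := by have := Real.log_two_lt_d9; linarith
    have h0 := Real.log_natCast_nonneg (q 0)
    have habs := abs_nonneg C
    have h3 : Real.log (q (4*s)) ≤ 4 * |C| * s + Real.log (q 0) := by
      rcases Nat.eq_zero_or_pos s with rfl | hs
      · simp
      · have := hC (4*s) (by omega)
        unfold qden at this
        rw [hd] at this
        have hs' : (0:ℝ) < ((4*s:ℕ):ℝ) := by exact_mod_cast (by omega : 0 < 4*s)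
        rw [div_le_iff₀ hs'] at this
        push_cast at this
        have hs'' : (0:ℝ) ≤ s := Nat.cast_nonneg s
        nlinarith [le_abs_self C]
    have hs'' : (0:ℝ) ≤ s := Nat.cast_nonneg s
    nlinarith

theorem mink_inf {a : ℝ} (ha : Irrational a) (g : ℝ) (N : ℕ) :
    ∃ n : ℕ, N ≤ n ∧ (n : ℝ) * dni (n * a - g) ≤ 5 := by
  obtain ⟨q, p, hd, hq, hmono, h2, hcop, happ⟩ := cf_props ha
  have hgrow : ∀ t, t ≤ q (2*t) := by
    intro t
    induction t with
    | zero => omega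
    | succ t ih =>
      have := h2 (2*t)
      have := hq (2*t)
      have e : 2 * (t+1) = 2*t+2 := by ring
      rw [e]; omega
  obtain ⟨n, h1, -, h3⟩ := mink_step (hq (2*N)) (hcop (2*N)) (happ (2*N)) g
  exact ⟨n, (hgrow N).trans h1, h3⟩

theorem liminf_pos {a : ℝ} (ha : Irrational a) (g : ℝ) {c : ℝ} (hc : 0 < c)
    (h : ∀ n : ℕ, 1 ≤ n → c ≤ (n:ℝ) * dni (n * a - g)) :
    0 < Filter.atTop.liminf (fun n : ℕ => (n : ℝ) * dni (n * a - g)) := by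
  refine lt_of_lt_of_le hc ?_
  apply Filter.le_liminf_of_le
  · have hfr : ∃ᶠ n : ℕ in atTop, (n : ℝ) * dni (n * a - g) ≤ 5 := by
      rw [Filter.frequently_atTop]
      intro N
      obtain ⟨n, h1, h2⟩ := mink_inf ha g N
      exact ⟨n, h1, h2⟩
    exact IsCoboundedUnder.of_frequently_le hfr
  · filter_upwards [eventually_ge_atTop 1] with n hn using h n hn

theorem mem_BSet {b d c : ℝ} (hc : 0 < c) (h1 : ∀ n : ℕ, 1 ≤ n → c ≤ (n:ℝ) * dni (n * b))
    (h2 : ∀ n : ℕ, 1 ≤ n → c ≤ (n:ℝ) * dni (n * b - d)) : (b, d) ∈ BSet := by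
  have hirr : Irrational b := by
    rintro ⟨r, rfl⟩
    have := h1 r.den r.pos
    have e : (r.den : ℝ) * (r:ℝ) = (r.num : ℤ) := by
      have := Rat.den_mul_eq_num r
      exact_mod_cast this
    rw [e] at this
    have : dni ((r.num:ℤ):ℝ) = 0 := by simp [dni]
    simp_all
    linarith
  refine ⟨?_, liminf_pos hirr d hc h2⟩
  have := liminf_pos hirr 0 hc (by simpa using h1)
  simpa [Bad] using this

end Mob
end

section
open Filter MeasureTheory Real

namespace Mob

theorem hits (ν : Measure ℝ) [IsProbabilityMeasure ν] {D : ℝ} (hD : 0 ≤ D)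
    (hdec : ∀ n : ℕ, 1 ≤ n → ‖∫ x, ee (n * x) ∂ν‖^32 * n ≤ D) {e : ℝ} (he : 0 < e)
    {a : ℝ} (ha : a ∈ KSet) (g : ℝ) :
    ∀ᵐ β ∂ν, ∀ δ : ℝ, ∃ᶠ n : ℕ in Filter.atTop,
          (n : ℝ) * dni (n * a - g) * dni (n * β - δ) <
            (Real.log (Real.log (Real.log n))) ^ e / (Real.log n) ^ ((1:ℝ)/2) := by
  obtain ⟨C, hC0, hC⟩ := sum_sq_int ν hD hdec
  obtain ⟨n, C1, hC1, hn0, hn2, hn5, hnlog⟩ := mink_seq ha g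
  have hnpow : ∀ s, 2^s ≤ n s := by
    intro s
    induction s with
    | zero => simpa using hn0
    | succ s ih => have := hn2 s; rw [pow_succ]; omega
  set w : ℕ → ℝ := fun K => Real.log (Real.log (Real.log ((2:ℝ)^K))) with hw
  have hwlim : Tendsto w atTop atTop := by
    have h2 : Tendsto (fun K : ℕ => (2:ℝ)^K) atTop atTop := tendsto_pow_atTop_atTop_of_one_lt (by norm_num)
    exact Real.tendsto_log_atTop.comp (Real.tendsto_log_atTop.comp (Real.tendsto_log_atTop.comp h2))
  have hllim : Tendsto (fun K : ℕ => Real.log (Real.log ((2:ℝ)^K))) atTop atTop := by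
    have h2 : Tendsto (fun K : ℕ => (2:ℝ)^K) atTop atTop := tendsto_pow_atTop_atTop_of_one_lt (by norm_num)
    exact (Real.tendsto_log_atTop.comp (Real.tendsto_log_atTop.comp h2))
  have hlim1 : Tendsto (fun K : ℕ => (Real.log ((2:ℝ)^K))) atTop atTop := by
    have h2 : Tendsto (fun K : ℕ => (2:ℝ)^K) atTop atTop := tendsto_pow_atTop_atTop_of_one_lt (by norm_num)
    exact (Real.tendsto_log_atTop.comp h2)
  set x : ℕ → ℝ := fun K => 10 * Real.sqrt (3 * C1 * K) / (w K)^e with hx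
  set M : ℕ → ℕ := fun K => ⌊x K⌋₊ + 1 with hM
  set T : ℕ → Finset ℕ := fun K => Finset.Ioc K (2*K) with hT
  have hTc : ∀ K, (T K).card = K := by
    intro K; simp only [hT, Nat.card_Ioc]; omega
  set Bd : ℕ → Set ℝ := fun K => {β | ∃ δ, ∀ s ∈ T K, 2/(M K:ℝ) ≤ dni (n s * β - δ)} with hBd
  have hp : ∀ K, 1 ≤ K → ν (Bd K) ≤ ENNReal.ofReal (38^2 * C * (2*M K+1)^2 / K) := by
    intro K hK
    have := prob_bound ν (C := C) (n := n) (T := T K) (by rw [hTc]; omega) (fun h hh => hC n hn0 hn2 (T K) h hh)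
      (M := M K) (by simp [hM])
    rw [hTc] at this
    exact this
  have hb : Tendsto (fun K : ℕ => 38^2 * C * (2*(M K:ℝ)+1)^2 / K) atTop (nhds 0) := by
    have hup : Tendsto (fun K : ℕ => 38^2 * C * (8 * (300 * C1) * ((w K)^e)⁻¹^2 + 18 * (K:ℝ)⁻¹)) atTop (nhds 0) := by
      have h1 : Tendsto (fun K : ℕ => ((w K)^e)⁻¹) atTop (nhds 0) :=
        ((tendsto_rpow_atTop he).comp hwlim).inv_tendsto_atTop
      have h2 : Tendsto (fun K : ℕ => (K:ℝ)⁻¹) atTop (nhds 0) := tendsto_inv_atTop_nhds_zero_nat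
      have := (((h1.pow 2).const_mul (8 * (300 * C1))).add (h2.const_mul 18)).const_mul (38^2*C)
      simpa using this
    refine squeeze_zero' (Eventually.of_forall fun K => by positivity) ?_ hup
    filter_upwards [hwlim.eventually_gt_atTop 0, eventually_ge_atTop 1] with K hwK hK
    have hK0 : (0:ℝ) < K := by exact_mod_cast hK
    have hx0 : 0 ≤ x K := by simp only [hx]; positivity
    have hMx : (M K:ℝ) ≤ x K + 1 := by
      simp only [hM]; push_cast
      have := Nat.floor_le hx0
      linarith
    have hxsq : x K ^ 2 = 300 * C1 * K * ((w K)^e)⁻¹^2 := by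
      simp only [hx]
      rw [div_eq_mul_inv, mul_pow, mul_pow, Real.sq_sqrt (by positivity)]
      ring
    have h2 : (2*(M K:ℝ)+1)^2 ≤ 8 * (x K)^2 + 18 := by
      have h3 : 2*(M K:ℝ)+1 ≤ 2 * x K + 3 := by linarith
      have h4 : (2*(M K:ℝ)+1)^2 ≤ (2 * x K + 3)^2 := by gcongr
      nlinarith [sq_nonneg (2 * x K - 3)]
    calc 38^2 * C * (2*(M K:ℝ)+1)^2 / K ≤ 38^2 * C * (8 * (x K)^2 + 18) / K := by gcongr
      _ = _ := by rw [hxsq]; field_simp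
  have hzero : ∀ K0, ν (⋂ K ∈ Set.Ici K0, Bd K) = 0 := by
    intro K0
    have hb2 : Tendsto (fun K : ℕ => ENNReal.ofReal (38^2 * C * (2*(M K:ℝ)+1)^2 / K)) atTop (nhds 0) := by
      simpa using ENNReal.tendsto_ofReal hb
    apply le_antisymm _ bot_le
    refine ge_of_tendsto hb2 ?_
    filter_upwards [eventually_ge_atTop K0, eventually_ge_atTop 1] with K h1 h2
    exact (measure_mono (Set.biInter_subset_of_mem h1)).trans (hp K h2)
  have hae : ∀ᵐ β ∂ν, ∀ K0, β ∉ ⋂ K ∈ Set.Ici K0, Bd K := by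
    rw [ae_all_iff]
    intro K0
    exact measure_eq_zero_iff_ae_notMem.1 (hzero K0)
  filter_upwards [hae] with β hβ δ
  rw [Filter.frequently_atTop]
  intro N
  obtain ⟨K1, hK1⟩ := (((hwlim.eventually_gt_atTop 0).and (hllim.eventually_gt_atTop 0)).and
    ((hlim1.eventually_gt_atTop 0))).exists_forall_of_atTop
  have := hβ (max (max N 1) K1)
  simp only [Set.mem_iInter, not_forall] at this
  obtain ⟨K, hK, hnB⟩ := this
  have hK' : max (max N 1) K1 ≤ K := hK
  have hKN : N ≤ K := le_trans (le_trans (le_max_left _ _) (le_max_left _ _)) hK'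
  have hK1' : 1 ≤ K := le_trans (le_trans (le_max_right _ _) (le_max_left _ _)) hK'
  have hKK : K1 ≤ K := le_trans (le_max_right _ _) hK'
  obtain ⟨⟨hw0, hll0⟩, hl0⟩ := hK1 K hKK
  simp only [hBd, Set.mem_ofPred_eq, not_exists, not_forall, not_le] at hnB
  obtain ⟨s, hs, hlt⟩ := hnB δ
  simp only [hT, Finset.mem_Ioc] at hs
  have hK0 : (0:ℝ) < K := by exact_mod_cast hK1'
  have hge : K ≤ n s := hs.1.le.trans (s.lt_two_pow_self.le.trans (hnpow s))
  refine ⟨n s, hKN.trans hge, ?_⟩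
  have hns : (2:ℝ)^K ≤ n s := by
    have : 2^K ≤ n s := (Nat.pow_le_pow_right (by norm_num) hs.1.le).trans (hnpow s)
    exact_mod_cast this
  have l1 : Real.log ((2:ℝ)^K) ≤ Real.log (n s) := Real.log_le_log (by positivity) hns
  have l2 : Real.log (Real.log ((2:ℝ)^K)) ≤ Real.log (Real.log (n s)) := Real.log_le_log hl0 l1
  have l3 : w K ≤ Real.log (Real.log (Real.log (n s))) := Real.log_le_log hll0 l2
  have hup : Real.log (n s) ≤ 3 * C1 * K := by
    refine (hnlog s).trans ?_
    have h1 : (s:ℝ) ≤ 2 * K := by exact_mod_cast hs.2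
    have h2 : (1:ℝ) ≤ K := by exact_mod_cast hK1'
    nlinarith
  have hlpos : 0 < Real.log (n s) := lt_of_lt_of_le hl0 l1
  have hM0 : (0:ℝ) < M K := by simp only [hM]; positivity
  have hxM : x K < M K := by simp only [hM]; push_cast; exact Nat.lt_floor_add_one _
  have hwe : 0 < (w K)^e := Real.rpow_pos_of_pos hw0 e
  have hsq : 0 < Real.sqrt (3 * C1 * K) := Real.sqrt_pos.2 (by positivity)
  have hxpos : 0 < x K := by simp only [hx]; positivity
  calc (n s : ℝ) * dni (n s * a - g) * dni (n s * β - δ) ≤ 5 * (2 / M K) := by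
        apply mul_le_mul (hn5 s) hlt.le (abs_nonneg _) (by norm_num)
    _ = 10 / M K := by ring
    _ < 10 / x K := by gcongr
    _ = (w K)^e / Real.sqrt (3 * C1 * K) := by simp only [hx]; field_simp
    _ ≤ (Real.log (Real.log (Real.log (n s)))) ^ e / (Real.log (n s)) ^ ((1:ℝ)/2) := by
        rw [← Real.sqrt_eq_rpow]
        have : 0 < Real.sqrt (Real.log (n s)) := Real.sqrt_pos.2 hlpos
        have : 0 ≤ (Real.log (Real.log (Real.log (n s)))) ^ e := Real.rpow_nonneg (hw0.le.trans l3) e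
        gcongr

end Mob
end

section
open Filter MeasureTheory Real

namespace Mob

theorem card_le_spread (S : Finset ℕ) (m : ℕ) (h : ∀ i ∈ S, ∀ j ∈ S, i ≤ j → j ≤ i + m) : S.card ≤ m + 1 := by
  rcases S.eq_empty_or_nonempty with rfl | hne
  · simp
  · have : S ⊆ Finset.Icc (S.min' hne) (S.min' hne + m) := by
      intro j hj
      rw [Finset.mem_Icc]
      exact ⟨S.min'_le j hj, h _ (S.min'_mem hne) j hj (S.min'_le j hj)⟩
    have := Finset.card_le_card this
    rw [Nat.card_Icc] at this
    omega

theorem child_sub {R : ℕ} {r a : ℝ} (hr : 0 ≤ r) {i : ℕ} (hi : i < R) :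
    Set.Icc (a + i * r) (a + i * r + r) ⊆ Set.Icc a (a + R * r) := by
  intro x hx
  have : (i:ℝ) + 1 ≤ R := by exact_mod_cast hi
  have h2 : (0:ℝ) ≤ i * r := by positivity
  have h3 : ((i:ℝ) + 1) * r ≤ R * r := by gcongr
  exact ⟨by linarith [hx.1], by linarith [hx.2]⟩

theorem child_far {r a : ℝ} (hr : 0 < r) {i j m : ℕ} {x y : ℝ}
    (hx : x ∈ Set.Icc (a + i * r) (a + i * r + r)) (hy : y ∈ Set.Icc (a + j * r) (a + j * r + r))
    (h : |x - y| < m * r) : j ≤ i + m := by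
  have h1 := neg_abs_le (x - y)
  have h2 : ((j:ℝ) - i - 1) * r < m * r := by linarith [hx.2, hy.1]
  have h3 := lt_of_mul_lt_mul_right h2 hr.le
  have h4 : (j:ℝ) < i + m + 1 := by linarith
  have : j < i + m + 1 := by exact_mod_cast h4
  omega

noncomputable def Wt (V : ℕ → Set ℝ) (d : ℕ → ℝ) (t : ℝ) (J : Set ℝ) : ENNReal :=
  open Classical in ∑' n, if (V n ∩ J).Nonempty then ENNReal.ofReal ((d n)^t) else 0

theorem Wt_sum {V : ℕ → Set ℝ} {d : ℕ → ℝ} {t : ℝ} (ht : 0 < t) (hd : ∀ n, 0 < d n)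
    (hV : ∀ n, ∀ x ∈ V n, ∀ y ∈ V n, |x - y| ≤ d n) {R : ℕ} {r a : ℝ} (hr : 0 < r)
    (hW : Wt V d t (Set.Icc a (a + R * r)) < ENNReal.ofReal (r^t)) :
    ∑ i ∈ Finset.range R, Wt V d t (Set.Icc (a + i * r) (a + i * r + r)) ≤ 2 * Wt V d t (Set.Icc a (a + R * r)) := by
  classical
  unfold Wt
  rw [← ENNReal.tsum_mul_left, ← Summable.tsum_finsetSum (fun _ _ => ENNReal.summable)]
  apply ENNReal.tsum_le_tsum
  intro n
  by_cases hn : (V n ∩ Set.Icc a (a + R * r)).Nonempty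
  · have hdn : d n < r := by
      have h1 : ENNReal.ofReal ((d n)^t) ≤ Wt V d t (Set.Icc a (a + R * r)) := by
        unfold Wt
        refine le_trans ?_ (ENNReal.le_tsum n)
        rw [if_pos hn]
      have h2 := lt_of_le_of_lt h1 hW
      rw [ENNReal.ofReal_lt_ofReal_iff (by positivity)] at h2
      exact (Real.rpow_lt_rpow_iff (hd n).le hr.le ht).1 h2
    rw [if_pos hn, ← Finset.sum_filter, Finset.sum_const, nsmul_eq_mul]
    gcongr
    have : ((Finset.range R).filter (fun i : ℕ => (V n ∩ Set.Icc (a + i * r) (a + i * r + r)).Nonempty)).card ≤ 1 + 1 := by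
      apply card_le_spread
      intro i hi j hj _
      obtain ⟨x, hx1, hx2⟩ := (Finset.mem_filter.1 hi).2
      obtain ⟨y, hy1, hy2⟩ := (Finset.mem_filter.1 hj).2
      refine child_far hr hx2 hy2 ?_
      have := hV n x hx1 y hy1
      push_cast
      linarith
    exact_mod_cast this
  · rw [if_neg hn]
    simp only [mul_zero, nonpos_iff_eq_zero]
    apply Finset.sum_eq_zero
    intro i hi
    rw [if_neg]
    rintro ⟨x, hx1, hx2⟩
    exact hn ⟨x, hx1, child_sub hr.le (Finset.mem_range.1 hi) hx2⟩

theorem bad_spread {b c : ℝ} (hc : 0 < c) (hc2 : c ≤ 1/2) (hb : ∀ m : ℕ, 1 ≤ m → c ≤ (m:ℝ) * dni (m * b))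
    {Q r x y : ℝ} {q q' : ℕ} (hr : 0 < r) (hq1 : 1 ≤ q) (hQ : 0 < Q)
    (hq : (q:ℝ) < c / 4 * Q) (hq' : (q':ℝ) < c / 4 * Q) (hrQ : r ≤ 1 / Q) (hx : dni (q * b - x) < r) (hy : dni (q' * b - y) < r)
    (hxy : |x - y| ≤ 1 / Q) : |x - y| < 2 * r := by
  have hbz : ∀ z : ℤ, z ≠ 0 → ∀ m : ℤ, c ≤ |(z:ℝ)| * |z * b - m| := by
    intro z hz m
    obtain ⟨k, rfl | rfl⟩ := z.eq_nat_or_neg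
    · have h1 := hb k (by omega)
      rw [Int.cast_natCast, Nat.abs_cast]
      refine h1.trans ?_
      gcongr
      exact dni_le _ _
    · have h1 := hb k (by omega)
      rw [Int.cast_neg, Int.cast_natCast, abs_neg, Nat.abs_cast]
      refine h1.trans ?_
      gcongr
      refine (dni_le _ (-m)).trans (le_of_eq ?_)
      rw [← abs_neg]; push_cast; ring_nf
  set m := round ((q:ℝ) * b - x) with hm
  set m' := round ((q':ℝ) * b - y) with hm'
  have hx' : |(q:ℝ) * b - x - m| < r := hx
  have hy' : |(q':ℝ) * b - y - m'| < r := hy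
  have h3 : |((q:ℝ) - q') * b - (m - m')| < 3 * (1/Q) := by
    have : ((q:ℝ) - q') * b - (m - m') = ((q:ℝ) * b - x - m) - ((q':ℝ) * b - y - m') + (x - y) := by ring
    rw [this]
    have h1 := abs_add_le (((q:ℝ) * b - x - m) - ((q':ℝ) * b - y - m')) (x - y)
    have h2 := abs_sub ((q:ℝ) * b - x - m) ((q':ℝ) * b - y - m')
    linarith
  have hqq : q = q' := by
    by_contra hne
    have hz : (q:ℤ) - q' ≠ 0 := by
      intro h; apply hne; omega
    have h4 := hbz _ hz (m - m')
    push_cast at h4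
    have h5 : |(q:ℝ) - q'| < c / 4 * Q := by
      rw [abs_lt]
      have := Nat.cast_nonneg (α := ℝ) q
      have := Nat.cast_nonneg (α := ℝ) q'
      constructor <;> linarith
    have h6 : |(q:ℝ) - q'| * |((q:ℝ) - q') * b - (m - m')| ≤ (c/4 * Q) * (3 * (1/Q)) := by gcongr
    have h7 : (c/4 * Q) * (3 * (1/Q)) = 3/4 * c := by field_simp
    linarith
  subst hqq
  have hQ8 : 1 / Q < 1 / 8 := by
    have : (1:ℝ) ≤ q := by exact_mod_cast hq1
    have h8 : 8 < Q := by nlinarith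
    exact one_div_lt_one_div_of_lt (by norm_num) h8
  have hmm : m = m' := by
    rw [sub_self, zero_mul, zero_sub, abs_neg] at h3
    have : |((m - m' : ℤ):ℝ)| < 1 := by push_cast; linarith
    have h9 : |m - m'| < 1 := by exact_mod_cast this
    have := Int.abs_lt_one_iff.1 h9
    omega
  rw [← hmm] at hy'
  have e : x - y = ((q:ℝ) * b - y - m) - ((q:ℝ) * b - x - m) := by ring
  rw [e]
  have h2 := abs_sub ((q:ℝ) * b - y - m) ((q:ℝ) * b - x - m)
  linarith

theorem fibre_step {b c t : ℝ} (hc : 0 < c) (hc2 : c ≤ 1/2) (hb : ∀ m : ℕ, 1 ≤ m → c ≤ (m:ℝ) * dni (m * b))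
    (ht : 0 < t) {R : ℕ} (hR : 2 * (R:ℝ)^t + 3 < R)
    {V : ℕ → Set ℝ} {d : ℕ → ℝ} (hd : ∀ n, 0 < d n)
    (hV : ∀ n, ∀ x ∈ V n, ∀ y ∈ V n, |x - y| ≤ d n) {Q a : ℝ} (hQ : 0 < Q)
    (hW : Wt V d t (Set.Icc a (a + 1/Q)) < ENNReal.ofReal ((1/(R * Q))^t))
    (hB : ∀ q : ℕ, 1 ≤ q → (q:ℝ) < c / 4 * (Q / R) → ∀ x ∈ Set.Icc a (a + 1/Q), c/4/R^2/q ≤ dni (q * b - x)) :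
    ∃ a', Set.Icc a' (a' + 1/(R * Q)) ⊆ Set.Icc a (a + 1/Q) ∧
      Wt V d t (Set.Icc a' (a' + 1/(R*Q))) < ENNReal.ofReal ((1/(R * (R * Q)))^t) ∧
      ∀ q : ℕ, 1 ≤ q → (q:ℝ) < c / 4 * (R * Q / R) → ∀ x ∈ Set.Icc a' (a' + 1/(R*Q)), c/4/R^2/q ≤ dni (q * b - x) := by
  classical
  have hR0 : (0:ℝ) < R := lt_of_le_of_lt (by positivity) hR
  have hR1 : (1:ℝ) ≤ R := by
    have : 0 < R := by exact_mod_cast hR0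
    exact_mod_cast this
  set r := 1 / (R * Q) with hr
  have hr0 : 0 < r := by positivity
  have hRr : 1 / Q = R * r := by rw [hr]; field_simp
  rw [hRr] at hW hB ⊢
  have hRQ : R * Q / R = Q := by field_simp
  rw [hRQ]
  set I : ℕ → Set ℝ := fun i => Set.Icc (a + i * r) (a + i * r + r) with hI
  set S1 := (Finset.range R).filter (fun i => ∃ x ∈ I i, ∃ q : ℕ, 1 ≤ q ∧ (q:ℝ) < c/4 * Q ∧ dni (q * b - x) < c/4/R^2/q) with hS1
  set S2 := (Finset.range R).filter (fun i => ENNReal.ofReal ((1/(R * (R * Q)))^t) ≤ Wt V d t (I i)) with hS2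
  have hc1 : S1.card ≤ 2 + 1 := by
    apply card_le_spread
    intro i hi j hj _
    obtain ⟨hiR, x, hx, q, hq1, hq, hxq⟩ := Finset.mem_filter.1 hi
    obtain ⟨hjR, y, hy, q', hq1', hq', hyq⟩ := Finset.mem_filter.1 hj
    have hxJ := child_sub (a := a) hr0.le (Finset.mem_range.1 hiR) hx
    have hyJ := child_sub (a := a) hr0.le (Finset.mem_range.1 hjR) hy
    have aux : ∀ (q : ℕ) (x : ℝ), 1 ≤ q → x ∈ Set.Icc a (a + R * r) → dni (q * b - x) < c/4/R^2/q → dni (q * b - x) < r := by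
      intro q x hq1 hx hlt
      have h1 : c/4 * (Q/R) ≤ q := by
        by_contra hcon
        push Not at hcon
        exact absurd (hB q hq1 hcon x hx) (not_le.2 hlt)
      refine lt_of_lt_of_le hlt ?_
      have hq0 : (0:ℝ) < q := by exact_mod_cast hq1
      calc c/4/R^2/q ≤ c/4/R^2/(c/4 * (Q/R)) := by gcongr
        _ = r := by rw [hr]; field_simp
    refine child_far (m := 2) hr0 hx hy ?_
    have hrr : r ≤ 1 / Q := by rw [hRr]; nlinarith
    refine bad_spread hc hc2 hb hr0 hq1 hQ hq hq' hrr (aux q x hq1 hxJ hxq) (aux q' y hq1' hyJ hyq) ?_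
    rw [hRr, abs_le]
    constructor <;> linarith [hxJ.1, hxJ.2, hyJ.1, hyJ.2]
  have hc2' : (S2.card : ℝ) ≤ 2 * (R:ℝ)^t := by
    have h1 := Wt_sum ht hd hV hr0 hW
    have h2 : (S2.card : ENNReal) * ENNReal.ofReal ((1/(R * (R * Q)))^t) ≤ 2 * ENNReal.ofReal (r^t) := by
      calc (S2.card : ENNReal) * ENNReal.ofReal ((1/(R * (R * Q)))^t)
          = ∑ i ∈ S2, ENNReal.ofReal ((1/(R * (R * Q)))^t) := by rw [Finset.sum_const, nsmul_eq_mul]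
        _ ≤ ∑ i ∈ S2, Wt V d t (I i) := Finset.sum_le_sum fun i hi => (Finset.mem_filter.1 hi).2
        _ ≤ ∑ i ∈ Finset.range R, Wt V d t (I i) := Finset.sum_le_sum_of_subset (Finset.filter_subset _ _)
        _ ≤ 2 * Wt V d t (Set.Icc a (a + R * r)) := h1
        _ ≤ 2 * ENNReal.ofReal (r^t) := by gcongr
    have h3 : ENNReal.ofReal ((S2.card : ℝ) * (1/(R * (R * Q)))^t) ≤ ENNReal.ofReal (2 * r^t) := by
      rw [ENNReal.ofReal_mul (by positivity), ENNReal.ofReal_mul (by positivity), ENNReal.ofReal_natCast]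
      simpa using h2
    rw [ENNReal.ofReal_le_ofReal_iff (by positivity)] at h3
    have h4 : r = R * (1/(R * (R * Q))) := by rw [hr]; field_simp
    rw [h4, Real.mul_rpow hR0.le (by positivity), ← mul_assoc 2] at h3
    exact le_of_mul_le_mul_right h3 (by positivity)
  have : ∃ i ∈ Finset.range R, i ∉ S1 ∪ S2 := by
    by_contra hcon
    push Not at hcon
    have h1 : (Finset.range R).card ≤ (S1 ∪ S2).card := Finset.card_le_card hcon
    have h2 := h1.trans (Finset.card_union_le S1 S2)
    rw [Finset.card_range] at h2
    have h3 : (R:ℝ) ≤ S1.card + S2.card := by exact_mod_cast h2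
    have h4 : (S1.card : ℝ) ≤ 3 := by exact_mod_cast hc1
    linarith
  obtain ⟨i, hi, hiS⟩ := this
  rw [Finset.mem_union, not_or] at hiS
  obtain ⟨hi1, hi2⟩ := hiS
  refine ⟨a + i * r, child_sub hr0.le (Finset.mem_range.1 hi), ?_, ?_⟩
  · by_contra hcon
    push Not at hcon
    exact hi2 (Finset.mem_filter.2 ⟨hi, hcon⟩)
  · intro q hq1 hq x hx
    by_contra hcon
    push Not at hcon
    exact hi1 (Finset.mem_filter.2 ⟨hi, x, hx, q, hq1, hq, hcon⟩)

theorem fibre {b c t : ℝ} (hc : 0 < c) (hb : ∀ m : ℕ, 1 ≤ m → c ≤ (m:ℝ) * dni (m * b))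
    (ht : 0 < t) {R : ℕ} (hR : 2 * (R:ℝ)^t + 3 < R)
    {V : ℕ → Set ℝ} {d : ℕ → ℝ} (hd : ∀ n, 0 < d n)
    (hV : ∀ n, ∀ x ∈ V n, ∀ y ∈ V n, |x - y| ≤ d n)
    (hW : Wt V d t Set.univ < ENNReal.ofReal ((1/(R:ℝ))^t)) :
    ∃ x : ℝ, (∀ n, x ∉ V n) ∧ ∀ q : ℕ, 1 ≤ q → c/4/R^2 ≤ (q:ℝ) * dni (q * b - x) := by
  classical
  have hc2 : c ≤ 1/2 := by
    have := hb 1 le_rfl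
    have h2 : dni (((1:ℕ):ℝ) * b) ≤ 1/2 := abs_sub_round _
    push_cast at this h2
    linarith
  have hR0 : (0:ℝ) < R := lt_of_le_of_lt (by positivity) hR
  have hR1 : (1:ℝ) < R := by
    have : (0:ℝ) ≤ 2 * (R:ℝ)^t := by positivity
    linarith
  let P : ℕ → ℝ → Prop := fun k a => Wt V d t (Set.Icc a (a + 1/(R:ℝ)^k)) < ENNReal.ofReal ((1/(R * (R:ℝ)^k))^t) ∧
    ∀ q : ℕ, 1 ≤ q → (q:ℝ) < c / 4 * ((R:ℝ)^k / R) → ∀ x ∈ Set.Icc a (a + 1/(R:ℝ)^k), c/4/R^2/q ≤ dni (q * b - x)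
  have hstep : ∀ k a, P k a → ∃ a', Set.Icc a' (a' + 1/(R:ℝ)^(k+1)) ⊆ Set.Icc a (a + 1/(R:ℝ)^k) ∧ P (k+1) a' := by
    intro k a hP
    obtain ⟨a', h1, h2, h3⟩ := fibre_step hc hc2 hb ht hR hd hV (Q := (R:ℝ)^k) (a := a) (by positivity) hP.1 hP.2
    have e : (R:ℝ) * (R:ℝ)^k = (R:ℝ)^(k+1) := by ring
    rw [e] at h1 h2 h3
    exact ⟨a', h1, h2, h3⟩
  have h0 : P 0 0 := by
    constructor
    · refine lt_of_le_of_lt ?_ (by simpa using hW)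
      unfold Wt
      apply ENNReal.tsum_le_tsum
      intro n
      split_ifs with h1 h2 h2
      · exact le_rfl
      · exact absurd (h1.mono (Set.inter_subset_inter_right _ (Set.subset_univ _))) h2
      · exact bot_le
      · exact le_rfl
    · intro q hq1 hq
      exfalso
      have : (1:ℝ) ≤ q := by exact_mod_cast hq1
      have h2 : (R:ℝ)^0 / R ≤ 1 := by rw [pow_zero, div_le_one hR0]; exact hR1.le
      nlinarith
  choose! f hf1 hf2 using hstep
  let s : ℕ → ℝ := fun k => Nat.rec 0 (fun k a => f k a) k
  have hs : ∀ k, P k (s k) := by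
    intro k
    induction k with
    | zero => exact h0
    | succ k ih => exact hf2 k (s k) ih
  obtain ⟨x, hx⟩ := IsCompact.nonempty_iInter_of_sequence_nonempty_isCompact_isClosed
    (fun k => Set.Icc (s k) (s k + 1/(R:ℝ)^k)) (fun k => hf1 k (s k) (hs k))
    (fun k => Set.nonempty_Icc.2 (by have : (0:ℝ) ≤ 1/(R:ℝ)^k := by positivity
                                     linarith)) isCompact_Icc (fun k => isClosed_Icc)
  rw [Set.mem_iInter] at hx
  refine ⟨x, ?_, ?_⟩
  · intro n hn
    have hlim : Tendsto (fun k : ℕ => (1/(R:ℝ))^k) atTop (nhds 0) :=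
      tendsto_pow_atTop_nhds_zero_of_lt_one (by positivity) (by rw [div_lt_one hR0]; exact hR1)
    obtain ⟨k, hk⟩ := (hlim.eventually_lt_const (hd n)).exists
    have h1 : ENNReal.ofReal ((d n)^t) ≤ Wt V d t (Set.Icc (s k) (s k + 1/(R:ℝ)^k)) := by
      unfold Wt
      refine le_trans ?_ (ENNReal.le_tsum n)
      rw [if_pos ⟨x, hn, hx k⟩]
    have h2 := lt_of_le_of_lt h1 (hs k).1
    rw [ENNReal.ofReal_lt_ofReal_iff (by positivity)] at h2
    have h3 := (Real.rpow_lt_rpow_iff (hd n).le (by positivity) ht).1 h2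
    have h4 : 1 / ((R:ℝ) * (R:ℝ)^k) ≤ (1/(R:ℝ))^k := by
      rw [one_div_pow]
      apply one_div_le_one_div_of_le (by positivity)
      nlinarith [pow_pos hR0 k]
    linarith
  · intro q hq1
    have hlim : Tendsto (fun k : ℕ => (R:ℝ)^k) atTop atTop := tendsto_pow_atTop_atTop_of_one_lt hR1
    obtain ⟨k, hk⟩ := (hlim.eventually_gt_atTop (q * (4 * R / c))).exists
    have h1 := (hs k).2 q hq1 (by
      calc (q:ℝ) = c/4 * ((q * (4 * R / c)) / R) := by field_simp
        _ < c/4 * ((R:ℝ)^k / R) := by gcongr) x (hx k)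
    have hq0 : (0:ℝ) < q := by exact_mod_cast hq1
    rw [div_le_iff₀ hq0] at h1
    linarith

end Mob
end

section
open Filter MeasureTheory Real

namespace Mob

theorem cover_exists {E : Set (ℝ × ℝ)} {D : ℝ} (hD : 0 < D) (h0 : μH[D] E = 0) {η : ℝ} (hη : 0 < η) :
    ∃ (U : ℕ → Set (ℝ × ℝ)) (d : ℕ → ℝ), E ⊆ ⋃ n, U n ∧ (∀ n, 0 < d n) ∧
      (∀ n, ∀ p ∈ U n, ∀ p' ∈ U n, dist p p' ≤ d n) ∧ ∑' n, ENNReal.ofReal ((d n)^D) ≤ ENNReal.ofReal (2 * η) := by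
  rw [Measure.hausdorffMeasure_apply] at h0
  have h1 := (iSup₂_le_iff (a := (0:ENNReal))).1 h0.le 1 one_pos
  have h2 := lt_of_le_of_lt h1 (ENNReal.ofReal_pos.2 hη)
  simp only [iInf_lt_iff] at h2
  obtain ⟨U, hU, hU1, hsum⟩ := h2
  have hfin : ∀ n, Metric.ediam (U n) ≠ ⊤ := fun n => ((hU1 n).trans_lt ENNReal.one_lt_top).ne
  set w : ℕ → ℝ := fun n => (Metric.ediam (U n)).toReal ^ D + η * (1/2)^(n+1) with hw
  have hwpos : ∀ n, 0 < w n := fun n => by simp only [hw]; positivity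
  refine ⟨U, fun n => (w n)^(1/D), hU, fun n => Real.rpow_pos_of_pos (hwpos n) _, ?_, ?_⟩
  · intro n p hp p' hp'
    have h3 := Metric.edist_le_ediam_of_mem hp hp'
    have h4 : dist p p' ≤ (Metric.ediam (U n)).toReal := by
      rw [dist_edist]
      exact ENNReal.toReal_mono (hfin n) h3
    refine h4.trans ?_
    have h5 : ((Metric.ediam (U n)).toReal ^ D)^(1/D) ≤ (w n)^(1/D) := by
      apply Real.rpow_le_rpow (by positivity) _ (by positivity)
      simp only [hw]
      have : 0 < η * (1/2:ℝ)^(n+1) := by positivity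
      linarith
    rwa [← Real.rpow_mul (by positivity), mul_one_div_cancel hD.ne', Real.rpow_one] at h5
  · have e : ∀ n, ENNReal.ofReal (((w n)^(1/D))^D) ≤ (⨆ _ : (U n).Nonempty, Metric.ediam (U n) ^ D) + ENNReal.ofReal (η * (1/2)^(n+1)) := by
      intro n
      rw [← Real.rpow_mul (hwpos n).le, one_div_mul_cancel hD.ne', Real.rpow_one]
      simp only [hw]
      rw [ENNReal.ofReal_add (by positivity) (by positivity)]
      gcongr
      rcases (U n).eq_empty_or_nonempty with he | hne
      · simp [he, Real.zero_rpow hD.ne']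
      · refine le_trans ?_ (le_iSup (fun _ : (U n).Nonempty => Metric.ediam (U n) ^ D) hne)
        rw [ENNReal.toReal_rpow, ENNReal.ofReal_toReal]
        exact ENNReal.rpow_ne_top_of_nonneg hD.le (hfin n)
    refine (ENNReal.tsum_le_tsum e).trans ?_
    rw [ENNReal.tsum_add, two_mul, ENNReal.ofReal_add hη.le hη.le]
    apply add_le_add hsum.le
    have hg : HasSum (fun n : ℕ => η * (1/2:ℝ)^(n+1)) η := by
      have := (hasSum_geometric_two).mul_left (η * (1/2))
      have e2 : η * (1/2) * 2 = η := by ring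
      rw [e2] at this
      have e3 : (fun n : ℕ => η * (1/2:ℝ)^(n+1)) = fun n : ℕ => η * (1/2) * (1/2:ℝ)^n := by
        funext n; ring
      rw [e3]; exact this
    rw [← ENNReal.ofReal_tsum_of_nonneg (fun n => by positivity) hg.summable, hg.tsum_eq]

theorem slicing {ν : Measure ℝ} [IsProbabilityMeasure ν] {E : Set (ℝ × ℝ)} {A t t' κ : ℝ} (hA : 0 < A)
    (ht : 0 < t) (ht' : 0 < t') (hκ : 0 < κ)
    (hF : ∀ S : Set ℝ, MeasurableSet S → ∀ r, 0 < r → (∀ x ∈ S, ∀ y ∈ S, x - y ≤ r) → ν S ≤ ENNReal.ofReal (A * r^t))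
    (hG : ∀ᵐ b ∂ν, ∀ (V : ℕ → Set ℝ) (d : ℕ → ℝ), (∀ n, 0 < d n) → (∀ n, ∀ x ∈ V n, ∀ y ∈ V n, |x - y| ≤ d n) →
      Wt V d t' Set.univ < ENNReal.ofReal κ → ∃ x, (∀ n, x ∉ V n) ∧ (b, x) ∈ E) :
    μH[t + t'] E ≠ 0 := by
  classical
  intro h0
  obtain ⟨U, d, hU, hd, hdist, hsum⟩ := cover_exists (by positivity) h0 (η := κ / (4 * A)) (by positivity)
  set S : ℕ → Set ℝ := fun n => closure (Prod.fst '' U n) with hS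
  have hSm : ∀ n, MeasurableSet (S n) := fun n => isClosed_closure.measurableSet
  have hSd : ∀ n, ∀ x ∈ S n, ∀ y ∈ S n, x - y ≤ d n := by
    intro n x hx y hy
    have h1 : ∀ p ∈ (Prod.fst '' U n) ×ˢ (Prod.fst '' U n), p.1 - p.2 ≤ d n := by
      rintro ⟨u, v⟩ ⟨⟨p, hp, rfl⟩, ⟨p', hp', rfl⟩⟩
      have h2 := hdist n p hp p' hp'
      rw [Prod.dist_eq] at h2
      have h3 := (le_max_left _ _).trans h2
      rw [Real.dist_eq] at h3
      exact (le_abs_self _).trans h3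
    have h2 : (x, y) ∈ closure ((Prod.fst '' U n) ×ˢ (Prod.fst '' U n)) := by
      rw [closure_prod_eq]; exact ⟨hx, hy⟩
    have hcl : IsClosed {p : ℝ × ℝ | p.1 - p.2 ≤ d n} :=
      isClosed_le (continuous_fst.sub continuous_snd) continuous_const
    exact closure_minimal (s := (Prod.fst '' U n) ×ˢ (Prod.fst '' U n)) (t := {p : ℝ × ℝ | p.1 - p.2 ≤ d n}) h1 hcl h2
  have hpt : ∀ᵐ b ∂ν, ENNReal.ofReal κ ≤ ∑' n, (S n).indicator (fun _ => ENNReal.ofReal ((d n)^t')) b := by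
    filter_upwards [hG] with b hb
    by_contra hcon
    push Not at hcon
    obtain ⟨x, hx, hxE⟩ := hb (fun n => {x | (b, x) ∈ U n}) d hd (by
      intro n x hx y hy
      have h2 := hdist n _ hx _ hy
      rw [Prod.dist_eq] at h2
      exact (le_max_right _ _).trans h2) (by
      refine lt_of_le_of_lt ?_ hcon
      unfold Wt
      apply ENNReal.tsum_le_tsum
      intro n
      split_ifs with h
      · obtain ⟨x, hx, -⟩ := h
        rw [Set.indicator_of_mem]
        exact subset_closure ⟨(b, x), hx, rfl⟩
      · exact bot_le)
    obtain ⟨n, hn⟩ := Set.mem_iUnion.1 (hU hxE)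
    exact hx n hn
  have h1 : ENNReal.ofReal κ ≤ ∫⁻ b, ∑' n, (S n).indicator (fun _ => ENNReal.ofReal ((d n)^t')) b ∂ν := by
    calc ENNReal.ofReal κ = ∫⁻ _, ENNReal.ofReal κ ∂ν := by simp
      _ ≤ _ := lintegral_mono_ae hpt
  rw [lintegral_tsum (fun n => (measurable_const.indicator (hSm n)).aemeasurable)] at h1
  have h2 : ∀ n, ∫⁻ b, (S n).indicator (fun _ => ENNReal.ofReal ((d n)^t')) b ∂ν ≤ ENNReal.ofReal A * ENNReal.ofReal ((d n)^(t+t')) := by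
    intro n
    rw [lintegral_indicator (hSm n), setLIntegral_const]
    calc ENNReal.ofReal ((d n)^t') * ν (S n) ≤ ENNReal.ofReal ((d n)^t') * ENNReal.ofReal (A * (d n)^t) := by
          gcongr
          exact hF _ (hSm n) _ (hd n) (hSd n)
      _ = ENNReal.ofReal A * ENNReal.ofReal ((d n)^(t+t')) := by
          have := hd n
          rw [← ENNReal.ofReal_mul (by positivity), ← ENNReal.ofReal_mul hA.le, Real.rpow_add this]
          congr 1; ring
  have h3 : ENNReal.ofReal κ ≤ ENNReal.ofReal A * ENNReal.ofReal (2 * (κ / (4 * A))) := by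
    refine h1.trans ((ENNReal.tsum_le_tsum h2).trans ?_)
    rw [ENNReal.tsum_mul_left]
    gcongr
  rw [← ENNReal.ofReal_mul hA.le, ENNReal.ofReal_le_ofReal_iff (by positivity)] at h3
  have : A * (2 * (κ / (4 * A))) = κ / 2 := by field_simp; norm_num
  linarith

end Mob
end

section
open Filter MeasureTheory Real

namespace Mob

theorem choose_Y {t : ℝ} (ht : t < 1) (ht0 : 0 < t) : ∃ Y : ℕ, 416 ≤ Y ∧ (288:ℝ)^8 ≤ 2 * Y ∧ (36*(Y:ℝ)^2)^t ≤ (Y:ℝ)^2/8 := by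
  have h1 : Tendsto (fun Y : ℕ => (Y:ℝ)^(2-2*t)) atTop atTop :=
    (tendsto_rpow_atTop (by linarith)).comp tendsto_natCast_atTop_atTop
  have h2 : Tendsto (fun Y : ℕ => (2:ℝ) * Y) atTop atTop := tendsto_natCast_atTop_atTop.const_mul_atTop (by norm_num)
  obtain ⟨Y, ⟨hY1, hY2⟩, hY3⟩ := (((eventually_ge_atTop 416).and (h2.eventually_ge_atTop (288^8))).and
    (h1.eventually_ge_atTop 288)).exists
  refine ⟨Y, hY1, hY2, ?_⟩
  have hY0 : (0:ℝ) < Y := by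
    have : 0 < Y := by omega
    exact_mod_cast this
  have e : (Y:ℝ)^2 = (Y:ℝ)^(2-2*t) * ((Y:ℝ)^2)^t := by
    rw [← Real.rpow_natCast (Y:ℝ) 2, ← Real.rpow_mul hY0.le, ← Real.rpow_add hY0]
    congr 1; push_cast; ring
  rw [Real.mul_rpow (by norm_num) (by positivity)]
  have h36 : (36:ℝ)^t ≤ 36 := by
    calc (36:ℝ)^t ≤ (36:ℝ)^(1:ℝ) := Real.rpow_le_rpow_of_exponent_le (by norm_num) ht.le
      _ = 36 := Real.rpow_one _
  have hp : 0 < ((Y:ℝ)^2)^t := by positivity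
  have : 288 * ((Y:ℝ)^2)^t ≤ (Y:ℝ)^2 := by
    calc 288 * ((Y:ℝ)^2)^t ≤ (Y:ℝ)^(2-2*t) * ((Y:ℝ)^2)^t := by gcongr
      _ = _ := e.symm
  nlinarith

theorem choose_R {t : ℝ} (ht : t < 1) (ht0 : 0 < t) : ∃ R : ℕ, 2 * (R:ℝ)^t + 3 < R := by
  have h1 : Tendsto (fun Y : ℕ => (Y:ℝ)^(1-t)) atTop atTop :=
    (tendsto_rpow_atTop (by linarith)).comp tendsto_natCast_atTop_atTop
  have h2 : Tendsto (fun Y : ℕ => (Y:ℝ)^t) atTop atTop :=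
    (tendsto_rpow_atTop ht0).comp tendsto_natCast_atTop_atTop
  obtain ⟨R, ⟨hR1, hR2⟩, hR3⟩ := (((h1.eventually_ge_atTop 3).and (h2.eventually_gt_atTop 3)).and
    (eventually_ge_atTop 1)).exists
  refine ⟨R, ?_⟩
  have hR0 : (0:ℝ) < R := by exact_mod_cast hR3
  have e : (R:ℝ) = (R:ℝ)^(1-t) * (R:ℝ)^t := by
    rw [← Real.rpow_add hR0]; simp
  have : 3 * (R:ℝ)^t ≤ (R:ℝ)^(1-t) * (R:ℝ)^t := by gcongr
  linarith

def EE (e : ℝ) (α γ : ℕ → ℝ) : Set (ℝ × ℝ) :=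
  {p | p ∈ BSet ∧ ∀ i : ℕ, ∃ᶠ n : ℕ in Filter.atTop,
          (n : ℝ) * dni (n * α i - γ i) * dni (n * p.1 - p.2) <
            (Real.log (Real.log (Real.log n))) ^ e / (Real.log n) ^ ((1:ℝ)/2)}

theorem dim_ge {e : ℝ} (he : 0 < e) {α γ : ℕ → ℝ} (hα : ∀ i, α i ∈ KSet) {t : ℝ} (ht : t < 1) (ht0 : 0 < t) :
    μH[t + t] (EE e α γ) ≠ 0 := by
  obtain ⟨Y, hY1, hY2, hY3⟩ := choose_Y ht ht0
  obtain ⟨R, hR⟩ := choose_R ht ht0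
  obtain ⟨B, hB, hcard⟩ := exists_digits hY1
  have hY0 : (0:ℝ) < Y := by
    have : 0 < Y := by omega
    exact_mod_cast this
  have hBpos : (0:ℝ) < B.card := lt_of_lt_of_le (by positivity) hcard
  have hne : B.card ≠ 0 := by
    intro h; rw [h] at hBpos; simp at hBpos
  obtain ⟨ν, S⟩ := exists_SS hB hne
  have := S.prob
  obtain ⟨D, hD, hdec⟩ := decay S (by nlinarith) hY2
  have hR0 : (0:ℝ) < R := lt_of_le_of_lt (by positivity) hR
  refine slicing (ν := ν) (A := 2 * B.card * 2^t) (κ := (1/(R:ℝ))^t) (by positivity) ht0 ht0 (by positivity) ?_ ?_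
  · intro T hT r hr hd
    exact S.frostman ht0.le (hY3.trans hcard) (by omega) hT hr hd
  · have hh : ∀ᵐ β ∂ν, ∀ i, ∀ δ : ℝ, ∃ᶠ n : ℕ in Filter.atTop,
          (n : ℝ) * dni (n * α i - γ i) * dni (n * β - δ) <
            (Real.log (Real.log (Real.log n))) ^ e / (Real.log n) ^ ((1:ℝ)/2) := by
      rw [ae_all_iff]
      intro i
      exact hits ν hD hdec he (hα i) (γ i)
    filter_upwards [hh, S.ae_words] with b hb hw V d hd hV hWt
    have hbad : ∀ m : ℕ, 1 ≤ m → 1 / (72 * (Y:ℝ)^2) ≤ (m:ℝ) * dni (m * b) := by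
      intro m hm
      have h1 := words_bad hB (by omega) hw hm (round ((m:ℝ) * b))
      have hm0 : (0:ℝ) < m := by exact_mod_cast hm
      have h2 : 1 / (72 * (Y:ℝ)^2 * m) ≤ dni (m * b) := h1
      calc 1 / (72 * (Y:ℝ)^2) = m * (1 / (72 * (Y:ℝ)^2 * m)) := by field_simp
        _ ≤ _ := by gcongr
    have hc : (0:ℝ) < 1 / (72 * (Y:ℝ)^2) := by positivity
    set c := 1 / (72 * (Y:ℝ)^2)
    clear_value c
    obtain ⟨x, hx1, hx2⟩ := fibre hc hbad ht0 hR hd hV hWt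
    refine ⟨x, hx1, ?_, fun i => hb i x⟩
    have hle : c / 4 / (R:ℝ)^2 ≤ c := by
      have hR1 : (1:ℝ) ≤ R := by
        have : (0:ℝ) ≤ 2 * (R:ℝ)^t := by positivity
        linarith
      rw [div_div]
      apply div_le_self hc.le
      nlinarith
    exact mem_BSet (c := c/4/(R:ℝ)^2) (by positivity) (fun n hn => hle.trans (hbad n hn)) hx2

theorem dim_eq {e : ℝ} (he : 0 < e) {α γ : ℕ → ℝ} (hα : ∀ i, α i ∈ KSet) : dimH (EE e α γ) = 2 := by
  apply le_antisymm
  · calc dimH (EE e α γ) ≤ dimH (Set.univ : Set (ℝ × ℝ)) := dimH_mono (Set.subset_univ _)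
      _ = 2 := by
        rw [Real.dimH_univ_eq_finrank]
        simp
  · refine le_of_forall_lt ?_
    intro s hs
    have hs' : s ≠ ⊤ := (hs.trans (by simp)).ne
    lift s to NNReal using hs'
    have hs2 : (s:ℝ) < 2 := by
      have : s < 2 := by exact_mod_cast hs
      exact_mod_cast this
    have hs0 : (0:ℝ) ≤ s := s.2
    set t : ℝ := ((s:ℝ)/2 + 1)/2 with ht
    have h1 := dim_ge he (α := α) (γ := γ) hα (t := t) (by rw [ht]; linarith) (by rw [ht]; linarith)
    set T : NNReal := ⟨t + t, by rw [ht]; linarith⟩ with hT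
    have h2 : ((T:NNReal):ENNReal) ≤ dimH (EE e α γ) := le_dimH_of_hausdorffMeasure_ne_zero (d := T) h1
    refine lt_of_lt_of_le ?_ h2
    have : s < T := by
      rw [← NNReal.coe_lt_coe]
      change (s:ℝ) < t + t
      rw [ht]; linarith
    exact_mod_cast this

end Mob
end

theorem stmt_3 (ε : ℝ) (hε : 0 < ε) (α γ : ℕ → ℝ) (hα : ∀ i, α i ∈ KSet) :
    ∃ E : Set (ℝ × ℝ), E ⊆ BSet ∧ dimH E = 2 ∧
      ∀ i : ℕ, ∀ p ∈ E,
        ∃ᶠ n : ℕ in Filter.atTop,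
          (n : ℝ) * dni (n * α i - γ i) * dni (n * p.1 - p.2) <
            (Real.log (Real.log (Real.log n))) ^ (ε + 1/2) / (Real.log n) ^ ((1:ℝ)/2) := by
  refine ⟨Mob.EE (ε + 1/2) α γ, fun p hp => hp.1, Mob.dim_eq (by linarith) hα, fun i p hp => hp.2 i⟩
end

section
/- Let α ∈ 𝒦, let q₀, q₁, q₂, … be the continued fraction denominators of α, put C = sup{t⁻¹ log q_t : t ∈ ℕ} ∈ (0, ∞), and let γ ∈ ℝ. Then there exists a sequence n₁, n₂, … of positive integers such that for every t ∈ ℕ: 8^t < n_t ≤ 4·e^{6Ct}, ‖n_t α − γ‖ ≤ 8/n_t, and n_{t+1} ≥ 2·n_t (so in particular the sequence is lacunary). -/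
open Filter MeasureTheory Real

open GenContFract in
theorem aux_conts (α : ℝ) (h : ∀ n, ∃ gp, (GenContFract.of α).s.get? n = some gp) (n : ℕ) :
    ∃ A B A' B' : ℤ, (GenContFract.of α).contsAux n = ⟨(A : ℝ), (B : ℝ)⟩ ∧
      (GenContFract.of α).contsAux (n + 1) = ⟨(A' : ℝ), (B' : ℝ)⟩ ∧
      (A * B' - B * A') ^ 2 = 1 := by
  induction n with
  | zero => exact ⟨1, 0, ⌊α⌋, 1, by simp, by simp [GenContFract.of_h_eq_floor], by simp⟩
  | succ n ih =>
    obtain ⟨A, B, A', B', h1, h2, h3⟩ := ih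
    obtain ⟨gp, hgp⟩ := h n
    obtain ⟨ha, z, hz⟩ := of_partNum_eq_one_and_exists_int_partDen_eq hgp
    refine ⟨A', B', z * A' + A, z * B' + B, h2, ?_, ?_⟩
    · rw [contsAux_recurrence hgp h1 h2, ha, hz]
      push_cast
      simp
    · rw [← h3]; ring

theorem aux_find (α γ : ℝ) (p q : ℤ) (hq : 0 < q) (hc : IsCoprime p q)
    (hα : |α - p / q| ≤ 1 / (q * q)) :
    ∃ n : ℕ, (q : ℝ) < n ∧ (n : ℝ) ≤ 2 * q ∧ dni (n * α - γ) ≤ 8 / n := by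
  obtain ⟨u, v, huv⟩ := hc
  set c := round (γ * q) with hcdef
  have e0 := Int.emod_nonneg (c * u - 1) hq.ne'
  have e1 := Int.emod_lt_of_pos (c * u - 1) hq
  have e2 := Int.emod_add_mul_ediv (c * u - 1) q
  set r := (c * u - 1) % q
  set d := (c * u - 1) / q
  obtain ⟨n, hn⟩ : ∃ n : ℕ, (n : ℤ) = q + 1 + r := ⟨(q + 1 + r).toNat, by omega⟩
  have hnR : (n : ℝ) = ((q + 1 + r : ℤ) : ℝ) := by rw [← hn]; simp
  have hq' : (0 : ℝ) < q := by exact_mod_cast hq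
  have hn1 : (q : ℝ) < n := by rw [hnR]; exact_mod_cast (by omega)
  have hn2 : (n : ℝ) ≤ 2 * q := by rw [hnR]; exact_mod_cast (by omega)
  refine ⟨n, hn1, hn2, ?_⟩
  have hn0 : (0 : ℝ) < n := hq'.trans hn1
  have key : (n : ℤ) * p = c + (p - d * p - c * v) * q := by
    rw [hn]
    linear_combination p * e2 + c * huv
  have keyR : (n : ℝ) * p = c + ((p - d * p - c * v : ℤ) : ℝ) * q := by exact_mod_cast key
  generalize (p - d * p - c * v : ℤ) = k at keyR
  have hr : |γ * q - c| ≤ 1 / 2 := abs_sub_round _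
  have eq : (n : ℝ) * α - γ - k = n * (α - p / q) - (γ * q - c) / q := by
    field_simp
    linear_combination keyR
  have b1 : |(n : ℝ) * (α - p / q)| ≤ 2 / q := by
    rw [abs_mul, abs_of_pos hn0]
    calc (n : ℝ) * |α - p / q| ≤ (2 * q) * (1 / (q * q)) := by gcongr
      _ = 2 / q := by field_simp
  have b2 : |(γ * q - c) / q| ≤ (1 / 2) / q := by
    rw [abs_div, abs_of_pos hq']; gcongr
  calc dni (n * α - γ) ≤ |(n : ℝ) * α - γ - k| := round_le _ _
    _ ≤ 2 / q + (1 / 2) / q := by rw [eq]; exact (abs_sub _ _).trans (add_le_add b1 b2)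
    _ ≤ 8 / n := by
      rw [← add_div, div_le_div_iff₀ hq' hn0]; linarith

theorem stmt_4 (α : ℝ) (hα : α ∈ KSet) (C : ℝ)
    (hC : IsLUB {x : ℝ | ∃ t : ℕ, 1 ≤ t ∧ x = Real.log (qden α t) / t} C)
    (hCpos : 0 < C) (γ : ℝ) :
    ∃ n : ℕ → ℕ, ∀ t : ℕ, 1 ≤ t →
      (8 : ℝ) ^ t < n t ∧
      (n t : ℝ) ≤ 4 * Real.exp (6 * C * t) ∧
      dni (n t * α - γ) ≤ 8 / n t ∧
      2 * n t ≤ n (t + 1) := by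
  have hirr := hα.1
  have hnt : ∀ n, ¬ (GenContFract.of α).TerminatedAt n := by
    intro n hn
    obtain ⟨q, hq⟩ := (GenContFract.terminates_iff_rat α).1 ⟨n, hn⟩
    exact hirr ⟨q, hq.symm⟩
  have hs : ∀ n, ∃ gp, (GenContFract.of α).s.get? n = some gp :=
    fun n => Option.ne_none_iff_exists'.1 (hnt n)
  have hmono : ∀ n, qden α n ≤ qden α (n + 1) := fun n => GenContFract.of_den_mono
  have h0 : qden α 0 = 1 := by simp [qden]
  have hge1 : ∀ n, 1 ≤ qden α n := fun n => h0 ▸ monotone_nat_of_le_succ hmono (Nat.zero_le n)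
  have hrec : ∀ n, 2 * qden α n ≤ qden α (n + 2) := by
    intro n
    obtain ⟨gp, hgp⟩ := hs (n + 1)
    have ha := (GenContFract.of_partNum_eq_one_and_exists_int_partDen_eq hgp).1
    have hb : 1 ≤ gp.b :=
      GenContFract.of_one_le_get?_partDen (GenContFract.partDen_eq_s_b hgp)
    have := GenContFract.dens_recurrence hgp rfl rfl
    have h1 := hmono n
    have h2 := hge1 (n + 1)
    unfold qden at *
    rw [this, ha]
    nlinarith
  have h8 : ∀ t : ℕ, 8 * qden α (6 * t) ≤ qden α (6 * (t + 1)) := by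
    intro t
    have a := hrec (6 * t)
    have b := hrec (6 * t + 2)
    have c := hrec (6 * t + 4)
    rw [show 6 * (t + 1) = 6 * t + 4 + 2 by ring]
    norm_num [add_assoc] at *
    linarith
  have hpow : ∀ t : ℕ, (8 : ℝ) ^ t ≤ qden α (6 * t) := by
    intro t
    induction t with
    | zero => simp [h0]
    | succ t ih => rw [pow_succ]; linarith [h8 t]
  have hup : ∀ t : ℕ, 1 ≤ t → qden α t ≤ Real.exp (C * t) := by
    intro t ht
    have := hC.1 ⟨t, ht, rfl⟩
    have ht' : (0 : ℝ) < t := by exact_mod_cast ht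
    rw [div_le_iff₀ ht'] at this
    exact (Real.log_le_iff_le_exp (by linarith [hge1 t])).1 this
  have hex : ∀ m : ℕ, ∃ n : ℕ, qden α m < n ∧ (n : ℝ) ≤ 2 * qden α m ∧
      dni (n * α - γ) ≤ 8 / n := by
    intro m
    obtain ⟨A, B, p, q, -, h2, h3⟩ := aux_conts α hs m
    have hq : qden α m = q := by
      simp [qden, GenContFract.den_eq_conts_b, GenContFract.nth_cont_eq_succ_nth_contAux, h2]
    have hp : (GenContFract.of α).nums m = p := by
      simp [GenContFract.num_eq_conts_a, GenContFract.nth_cont_eq_succ_nth_contAux, h2]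
    have happ := GenContFract.abs_sub_convs_le (hnt m)
    rw [GenContFract.conv_eq_num_div_den, hp] at happ
    change |α - p / qden α m| ≤ 1 / (qden α m * qden α (m + 1)) at happ
    have hpos : 0 < qden α m := by linarith [hge1 m]
    have happ' : |α - p / qden α m| ≤ 1 / (qden α m * qden α m) := by
      refine happ.trans ?_
      gcongr
      exact hmono m
    rw [hq] at happ' hpos ⊢
    refine aux_find α γ p q (by exact_mod_cast hpos) ?_ happ'
    exact ⟨-B * (A * q - B * p), A * (A * q - B * p), by linear_combination h3⟩
  choose f hf using hex
  refine ⟨fun t => f (6 * t), fun t ht => ⟨(hpow t).trans_lt (hf _).1, ?_, (hf _).2.2, ?_⟩⟩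
  · have := hup (6 * t) (by omega)
    push_cast at this
    rw [show 6 * C * t = C * (6 * t) by ring]
    linarith [(hf (6 * t)).2.1, Real.exp_pos (C * (6 * t))]
  · have : (2 * f (6 * t) : ℝ) ≤ f (6 * (t + 1)) := by
      linarith [(hf (6 * t)).2.1, (hf (6 * (t + 1))).1, h8 t, hge1 (6 * t)]
    exact_mod_cast this
end

section
/- Let α be an irrational number with continued fraction denominators q₀, q₁, q₂, …, let γ ∈ ℝ, and let k ∈ ℕ. Then there exists an integer b with 1 ≤ b ≤ 2·q_k + q_{k−1} − 1 such that ‖bα − γ‖ ≤ 1/q_k. -/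
open Filter MeasureTheory Real

theorem aux_contsAux_int (α : ℝ) (hnt : ∀ n, ¬ (GenContFract.of α).TerminatedAt n) (n : ℕ) :
    (∃ p q : ℤ, ((GenContFract.of α).contsAux n) = ⟨(p : ℝ), (q : ℝ)⟩) ∧
    (∃ p q : ℤ, ((GenContFract.of α).contsAux (n + 1)) = ⟨(p : ℝ), (q : ℝ)⟩) := by
  induction n with
  | zero =>
    refine ⟨⟨1, 0, ?_⟩, ⟨⌊α⌋, 1, ?_⟩⟩
    · simp [GenContFract.contsAux]
    · simp [GenContFract.contsAux]
  | succ n ih =>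
    obtain ⟨⟨p, q, h1⟩, ⟨p', q', h2⟩⟩ := ih
    refine ⟨⟨p', q', h2⟩, ?_⟩
    obtain ⟨gp, hgp⟩ : ∃ gp, (GenContFract.of α).s.get? n = some gp :=
      Option.ne_none_iff_exists'.1 (hnt n)
    obtain ⟨ha, z, hz⟩ := GenContFract.of_partNum_eq_one_and_exists_int_partDen_eq hgp
    refine ⟨z * p' + p, z * q' + q, ?_⟩
    rw [GenContFract.contsAux_recurrence hgp h1 h2, ha, hz]
    push_cast
    simp

theorem aux_main (α γ : ℝ) (p q u w : ℤ) (hq : 1 ≤ q) (hu : p * u = 1 + q * w)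
    (h : |α - p / q| ≤ 1 / ((q : ℝ) * q)) :
    ∃ b : ℤ, 1 ≤ b ∧ b ≤ q ∧ dni (b * α - γ) ≤ 1 / q := by
  have hqR : (1 : ℝ) ≤ q := by exact_mod_cast hq
  have hq0 : (0 : ℝ) < q := by linarith
  obtain ⟨δ, hδ⟩ : ∃ δ, δ = α - p / q := ⟨_, rfl⟩
  rw [← hδ] at h
  obtain ⟨m, hm⟩ : ∃ m : ℤ, m = round (q * (γ - q * δ / 2)) := ⟨_, rfl⟩
  have hmr := abs_sub_round (q * (γ - q * δ / 2))
  rw [← hm] at hmr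
  obtain ⟨s, hs⟩ : ∃ s, s = (u * m - 1) / q := ⟨_, rfl⟩
  have h1 := Int.emod_nonneg (u * m - 1) (b := q) (by omega)
  have h2 := Int.emod_lt_of_pos (u * m - 1) (b := q) (by omega)
  have h3 := Int.emod_add_mul_ediv (u * m - 1) q
  rw [← hs] at h3
  obtain ⟨b, hb⟩ : ∃ b, b = (u * m - 1) % q + 1 := ⟨_, rfl⟩
  refine ⟨b, by omega, by omega, ?_⟩
  have hbp : b * p = m + q * (w * m - s * p) := by
    have : b = u * m - q * s := by linarith
    rw [this]
    linear_combination m * hu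
  have hbpR : (b : ℝ) * p = m + q * ((w * m - s * p : ℤ) : ℝ) := by exact_mod_cast hbp
  have hb1 : (1 : ℝ) ≤ b := by exact_mod_cast (by omega : 1 ≤ b)
  have hbq : (b : ℝ) ≤ q := by exact_mod_cast (by omega : b ≤ q)
  refine (round_le _ (w * m - s * p)).trans ?_
  obtain ⟨t, ht⟩ : ∃ t : ℝ, t = ((w * m - s * p : ℤ) : ℝ) := ⟨_, rfl⟩
  rw [← ht] at hbpR ⊢
  have e : (b : ℝ) * α - γ - t = (b - q / 2) * δ - (q * (γ - q * δ / 2) - m) / q := by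
    have : α = δ + p / q := by linarith
    rw [this]
    field_simp
    linear_combination 2 * hbpR
  rw [e]
  have k1 : |((b : ℝ) - q / 2) * δ| ≤ (q / 2) * (1 / (q * q)) := by
    rw [abs_mul]
    apply mul_le_mul _ h (abs_nonneg _) (by positivity)
    rw [abs_le]; constructor <;> linarith
  have k2 : |(q * (γ - q * δ / 2) - m) / q| ≤ (1 / 2) / q := by
    rw [abs_div, abs_of_pos hq0]
    gcongr
  refine (abs_sub _ _).trans ?_
  have : (q / 2 : ℝ) * (1 / (q * q)) + (1 / 2) / q = 1 / q := by
    field_simp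
    norm_num
  linarith

theorem stmt_6 (α : ℝ) (hα : Irrational α) (γ : ℝ) (k : ℕ) (hk : 1 ≤ k) :
    ∃ b : ℕ, 1 ≤ b ∧ (b : ℝ) ≤ 2 * qden α k + qden α (k - 1) - 1 ∧
      dni (b * α - γ) ≤ 1 / qden α k := by
  have hnt : ∀ n, ¬ (GenContFract.of α).TerminatedAt n := by
    intro n hn
    obtain ⟨r, hr⟩ := (GenContFract.terminates_iff_rat α).1 ⟨n, hn⟩
    exact hα ⟨r, hr.symm⟩
  obtain ⟨⟨p, q, h1⟩, ⟨p', q', h2⟩⟩ := aux_contsAux_int α hnt (k + 1)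
  have hp : (GenContFract.of α).nums k = p := by
    rw [GenContFract.num_eq_conts_a, GenContFract.nth_cont_eq_succ_nth_contAux, h1]
  have hq : (GenContFract.of α).dens k = q := by
    rw [GenContFract.den_eq_conts_b, GenContFract.nth_cont_eq_succ_nth_contAux, h1]
  have hp' : (GenContFract.of α).nums (k + 1) = p' := by
    rw [GenContFract.num_eq_conts_a, GenContFract.nth_cont_eq_succ_nth_contAux, h2]
  have hq' : (GenContFract.of α).dens (k + 1) = q' := by
    rw [GenContFract.den_eq_conts_b, GenContFract.nth_cont_eq_succ_nth_contAux, h2]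
  have hdet : (GenContFract.of α).nums k * (GenContFract.of α).dens (k + 1) -
      (GenContFract.of α).dens k * (GenContFract.of α).nums (k + 1) = (-1) ^ (k + 1) :=
    SimpContFract.determinant (s := SimpContFract.of α) (hnt k)
  rw [hp, hq, hp', hq'] at hdet
  have hdetZ : p * q' - q * p' = (-1) ^ (k + 1) := by exact_mod_cast hdet
  have hsq : ((-1 : ℤ) ^ (k + 1)) * (-1) ^ (k + 1) = 1 := by
    rw [← mul_pow]; simp
  have hone : (1 : ℝ) ≤ (GenContFract.of α).dens k := by
    refine le_trans ?_ (GenContFract.succ_nth_fib_le_of_nth_den (Or.inr (hnt (k - 1))))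
    exact_mod_cast Nat.fib_pos.2 (Nat.succ_pos k)
  have hmono : (GenContFract.of α).dens k ≤ (GenContFract.of α).dens (k + 1) :=
    GenContFract.of_den_mono
  have happ := GenContFract.abs_sub_convs_le (hnt k)
  rw [GenContFract.conv_eq_num_div_den, hp, hq, hq'] at happ
  rw [hq] at hone
  rw [hq, hq'] at hmono
  have happ2 : |α - p / q| ≤ 1 / ((q : ℝ) * q) := happ.trans (by gcongr)
  obtain ⟨b, hb1, hbq, hb⟩ := aux_main α γ p q ((-1) ^ (k + 1) * q') ((-1) ^ (k + 1) * p')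
    (by exact_mod_cast hone)
    (by linear_combination ((-1) ^ (k + 1)) * hdetZ + hsq) happ2
  have hprev : 0 ≤ (GenContFract.of α).dens (k - 1) := GenContFract.zero_le_of_den
  lift b to ℕ using (by omega)
  refine ⟨b, by exact_mod_cast hb1, ?_, ?_⟩
  · unfold qden
    rw [hq]
    have : (b : ℝ) ≤ q := by exact_mod_cast hbq
    linarith
  · unfold qden
    rw [hq]
    simpa using hb
end
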